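/- Let q ≥ 3 be an integer and fix 0 ≤ β < β_s(q), and set α₁ = α₁(β,q) = 1/(2(1−2β/q)). Then the Glauber dynamics for the q-state Curie–Weiss Potts model exhibits cutoff at time α₁ n log n with window of order n: for every ε ∈ (0,1/2) there exists γ = γ(ε) > 0 such that for all sufficiently large n, t_mix(ε)(n) ≤ α₁ n log n + γ n and t_mix(1−ε)(n) ≥ α₁ n log n − γ n. -/

import Mathlib

open Finset Filter

/-- The (unnormalized) Curie–Weiss Potts weight of a configuration
`σ : Fin n → Fin q` at inverse temperature `β`:
`exp((β/n) * Σ_{u,v} 1[σ u = σ v])`. -/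
noncomputable def pottsWeight (q n : ℕ) (β : ℝ) (σ : Fin n → Fin q) : ℝ :=
  Real.exp ((β / (n : ℝ)) * ∑ u : Fin n, ∑ v : Fin n, if σ u = σ v then (1 : ℝ) else 0)

/-- The Curie–Weiss Potts probability measure `μ_n` on configurations. -/
noncomputable def pottsMeasure (q n : ℕ) (β : ℝ) (σ : Fin n → Fin q) : ℝ :=
  pottsWeight q n β σ / ∑ τ : Fin n → Fin q, pottsWeight q n β τ

/-- The transition matrix `P_n` of the Glauber dynamics: pick a uniform vertex `u`
and resample its color according to the conditional Potts distribution given the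
colors of all other vertices. -/
noncomputable def glauberKernel (q n : ℕ) (β : ℝ) :
    Matrix (Fin n → Fin q) (Fin n → Fin q) ℝ :=
  fun σ τ =>
    (1 / (n : ℝ)) * ∑ u : Fin n,
      if ∀ v : Fin n, v ≠ u → τ v = σ v then
        pottsMeasure q n β τ / ∑ k : Fin q, pottsMeasure q n β (Function.update σ u k)
      else 0

/-- Total-variation distance between two (probability) functions on a finite set:
`max_{A ⊆ S} |ν(A) − ν'(A)|`. -/
noncomputable def tvDist {S : Type*} [Fintype S] (ν ν' : S → ℝ) : ℝ :=
  ⨆ A : Finset S, |∑ x ∈ A, ν x - ∑ x ∈ A, ν' x|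

/-- Worst-case total-variation distance to stationarity after `t` steps:
`d_t(n) = max_{σ₀} ‖P_n^t(σ₀,·) − μ_n‖_TV`. -/
noncomputable def glauberDist (q n : ℕ) (β : ℝ) (t : ℕ) : ℝ :=
  ⨆ σ₀ : Fin n → Fin q,
    tvDist (fun τ => (glauberKernel q n β ^ t) σ₀ τ) (pottsMeasure q n β)

/-- The `ε`-mixing time `t_mix(ε)(n) = inf {t : d_t(n) ≤ ε}`. -/
noncomputable def mixingTime (q n : ℕ) (β : ℝ) (ε : ℝ) : ℕ :=
  sInf {t : ℕ | glauberDist q n β t ≤ ε}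

/-- The drift function `D_β(x) = −x + (1 + (q−1) e^{2β(1−qx)/(q−1)})⁻¹`. -/
noncomputable def Dfun (q : ℕ) (β x : ℝ) : ℝ :=
  -x + (1 + ((q : ℝ) - 1) * Real.exp (2 * β * (1 - (q : ℝ) * x) / ((q : ℝ) - 1)))⁻¹

/-- The dynamical (spinodal) critical inverse temperature
`β_s(q) = sup {β ≥ 0 : D_β(x) ≠ 0 for all x ∈ (1/q,1)}`. -/
noncomputable def betaS (q : ℕ) : ℝ :=
  sSup {β : ℝ | 0 ≤ β ∧ ∀ x ∈ Set.Ioo (1 / (q : ℝ)) 1, Dfun q β x ≠ 0}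

/-- The constant `α₁(β,q) = 1/(2(1 − 2β/q))`. -/
noncomputable def alpha1 (β : ℝ) (q : ℕ) : ℝ := 1 / (2 * (1 - 2 * β / (q : ℝ)))

/-- The static critical inverse temperature `β_c(q) = (q−1)log(q−1)/(q−2)`
for `q ≥ 3`, with `β_c(2) = 1`. -/
noncomputable def betaC (q : ℕ) : ℝ :=
  if q = 2 then 1 else ((q : ℝ) - 1) * Real.log ((q : ℝ) - 1) / ((q : ℝ) - 2)

namespace PottsAux

/-! ### Abstract expectation functionals and Markov operators -/

def IsExp {A : Type*} (E : (A → ℝ) →ₗ[ℝ] ℝ) : Prop :=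
  (∀ f : A → ℝ, (∀ a, 0 ≤ f a) → 0 ≤ E f) ∧ E (fun _ => 1) = 1

def IsMk {A B : Type*} (L : (A → ℝ) →ₗ[ℝ] (B → ℝ)) : Prop :=
  (∀ f : A → ℝ, (∀ a, 0 ≤ f a) → ∀ b, 0 ≤ L f b) ∧ ∀ b, L (fun _ => 1) b = 1

lemma IsExp.mono {A : Type*} {E : (A → ℝ) →ₗ[ℝ] ℝ} (hE : IsExp E) {f g : A → ℝ}
    (h : ∀ a, f a ≤ g a) : E f ≤ E g := by
  have := hE.1 (g - f) (fun a => by simpa using h a)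
  rw [map_sub] at this
  linarith

lemma IsExp.const {A : Type*} {E : (A → ℝ) →ₗ[ℝ] ℝ} (hE : IsExp E) (c : ℝ) :
    E (fun _ => c) = c := by
  have : (fun _ : A => c) = c • (fun _ : A => (1 : ℝ)) := by ext; simp
  rw [this, map_smul, hE.2]; simp

lemma lin_add {A : Type*} (E : (A → ℝ) →ₗ[ℝ] ℝ) (f g : A → ℝ) :
    E (fun a => f a + g a) = E f + E g := map_add E f g

lemma lin_sub {A : Type*} (E : (A → ℝ) →ₗ[ℝ] ℝ) (f g : A → ℝ) :
    E (fun a => f a - g a) = E f - E g := map_sub E f g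

lemma lin_mul {A : Type*} (E : (A → ℝ) →ₗ[ℝ] ℝ) (c : ℝ) (f : A → ℝ) :
    E (fun a => c * f a) = c * E f := map_smul E c f

lemma lin_sum {A ι : Type*} (E : (A → ℝ) →ₗ[ℝ] ℝ) (s : Finset ι) (f : ι → A → ℝ) :
    E (fun a => ∑ i ∈ s, f i a) = ∑ i ∈ s, E (f i) := by
  rw [← map_sum]; congr 1; ext a; simp

lemma IsExp.affine {A : Type*} {E : (A → ℝ) →ₗ[ℝ] ℝ} (hE : IsExp E) (c d : ℝ) (f : A → ℝ) :
    E (fun a => c * f a + d) = c * E f + d := by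
  rw [lin_add E (fun a => c * f a) (fun _ => d), lin_mul, hE.const]

lemma IsExp.abs_le {A : Type*} {E : (A → ℝ) →ₗ[ℝ] ℝ} (hE : IsExp E) {f g : A → ℝ}
    (h : ∀ a, |f a| ≤ g a) : |E f| ≤ E g := by
  rw [_root_.abs_le]
  refine ⟨?_, hE.mono fun a => (le_abs_self _).trans (h a)⟩
  have := hE.mono (f := fun a => -1 * g a) (g := f) (fun a => by
    have := neg_abs_le (f a); have := h a; linarith)
  rw [lin_mul] at this; linarith

/-- squared Jensen -/
lemma IsExp.sq_le {A : Type*} {E : (A → ℝ) →ₗ[ℝ] ℝ} (hE : IsExp E) (f : A → ℝ) :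
    (E f) ^ 2 ≤ E (fun a => f a ^ 2) := by
  have := hE.1 (fun a => (f a - E f) ^ 2) (fun a => sq_nonneg _)
  have h2 : (fun a => (f a - E f) ^ 2) = fun a => f a ^ 2 + (-(2 * E f) * f a + (E f) ^ 2) := by
    ext a; ring
  rw [h2, lin_add, hE.affine] at this
  nlinarith

def evalAt {A B : Type*} (L : (A → ℝ) →ₗ[ℝ] (B → ℝ)) (b : B) : (A → ℝ) →ₗ[ℝ] ℝ :=
  (LinearMap.proj b).comp L

lemma evalAt_apply {A B : Type*} (L : (A → ℝ) →ₗ[ℝ] (B → ℝ)) (b : B) (f : A → ℝ) :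
    evalAt L b f = L f b := rfl

lemma IsMk.at {A B : Type*} {L : (A → ℝ) →ₗ[ℝ] (B → ℝ)} (hL : IsMk L) (b : B) :
    IsExp (evalAt L b) := ⟨fun f hf => hL.1 f hf b, hL.2 b⟩

lemma isMk_of_at {A B : Type*} {L : (A → ℝ) →ₗ[ℝ] (B → ℝ)} (h : ∀ b, IsExp (evalAt L b)) :
    IsMk L := ⟨fun f hf b => (h b).1 f hf, fun b => (h b).2⟩

lemma IsMk.mono {A B : Type*} {L : (A → ℝ) →ₗ[ℝ] (B → ℝ)} (hL : IsMk L) {f g : A → ℝ}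
    (h : ∀ a, f a ≤ g a) (b : B) : L f b ≤ L g b := (hL.at b).mono h

lemma IsMk.pow {A : Type*} {L : (A → ℝ) →ₗ[ℝ] (A → ℝ)} (hL : IsMk L) (t : ℕ) : IsMk (L ^ t) := by
  have h1 : L (fun _ => 1) = fun _ => 1 := funext hL.2
  induction t with
  | zero => exact ⟨fun f hf b => by simpa using hf b, fun b => by simp⟩
  | succ t ih =>
    refine ⟨fun f hf b => ?_, fun b => ?_⟩
    · rw [pow_succ]; exact ih.1 _ (hL.1 f hf) b
    · rw [pow_succ, Module.End.mul_apply, h1]; exact ih.2 b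

lemma IsExp.comp {A B : Type*} {E : (B → ℝ) →ₗ[ℝ] ℝ} (hE : IsExp E)
    {L : (A → ℝ) →ₗ[ℝ] (B → ℝ)} (hL : IsMk L) : IsExp (E.comp L) :=
  ⟨fun f hf => hE.1 _ (hL.1 f hf), by
    have h1 : L (fun _ => 1) = fun _ => 1 := funext hL.2
    rw [LinearMap.comp_apply, h1, hE.2]⟩

/-- iterated drift inequality -/
lemma drift_iter {A : Type*} {L : (A → ℝ) →ₗ[ℝ] (A → ℝ)} (hL : IsMk L) (F : A → ℝ) (r d : ℝ)
    (hr0 : 0 ≤ r) (hr1 : r < 1) (h : ∀ a, L F a ≤ r * F a + d) (hd : 0 ≤ d) (t : ℕ) (a : A) :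
    (L ^ t) F a ≤ r ^ t * F a + d / (1 - r) := by
  have h1r : 0 < 1 - r := by linarith
  induction t with
  | zero => simp; positivity
  | succ t ih =>
    have e := (hL.pow t).mono h a
    have e2 := ((hL.pow t).at a).affine r d F
    rw [evalAt_apply, evalAt_apply] at e2
    rw [pow_succ, Module.End.mul_apply]
    have h3 := mul_le_mul_of_nonneg_left ih hr0
    have h4 : r * (d / (1 - r)) + d = d / (1 - r) := by field_simp; ring
    calc _ ≤ _ := e
      _ = _ := e2
      _ ≤ r * (r ^ t * F a + d / (1 - r)) + d := by linarith
      _ = _ := by rw [mul_add, add_assoc, h4]; ring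

/-! ### The Glauber operator -/

variable {q n : ℕ}

noncomputable def cntx (σ : Fin n → Fin q) (u : Fin n) (k : Fin q) : ℝ :=
  ∑ v : Fin n, if v ≠ u ∧ σ v = k then (1 : ℝ) else 0

noncomputable def wt (β : ℝ) (σ : Fin n → Fin q) (u : Fin n) (k : Fin q) : ℝ :=
  Real.exp (2 * β / n * cntx σ u k)

noncomputable def rp (β : ℝ) (σ : Fin n → Fin q) (u : Fin n) (k : Fin q) : ℝ :=
  wt β σ u k / ∑ j, wt β σ u j

/-- average over the choice of vertex and color at configuration `σ`. -/
noncomputable def Av (β : ℝ) (σ : Fin n → Fin q) : (Fin n × Fin q → ℝ) →ₗ[ℝ] ℝ where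
  toFun g := (1 / (n : ℝ)) * ∑ u, ∑ k, rp β σ u k * g (u, k)
  map_add' f g := by simp only [Pi.add_apply, mul_add, sum_add_distrib]
  map_smul' c f := by
    simp only [Pi.smul_apply, smul_eq_mul, RingHom.id_apply, mul_sum]
    exact sum_congr rfl fun u _ => sum_congr rfl fun k _ => by ring

lemma Av_apply (β : ℝ) (σ : Fin n → Fin q) (g : Fin n × Fin q → ℝ) :
    Av β σ g = (1 / (n : ℝ)) * ∑ u, ∑ k, rp β σ u k * g (u, k) := rfl

noncomputable def Pop (β : ℝ) : ((Fin n → Fin q) → ℝ) →ₗ[ℝ] ((Fin n → Fin q) → ℝ) where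
  toFun f σ := Av β σ (fun p => f (Function.update σ p.1 p.2))
  map_add' f g := by ext σ; exact map_add (Av β σ) _ _
  map_smul' c f := by ext σ; exact map_smul (Av β σ) c _

lemma Pop_apply (β : ℝ) (f : (Fin n → Fin q) → ℝ) (σ : Fin n → Fin q) :
    Pop β f σ = Av β σ (fun p => f (Function.update σ p.1 p.2)) := rfl

lemma wt_pos (β : ℝ) (σ : Fin n → Fin q) (u : Fin n) (k : Fin q) : 0 < wt β σ u k :=
  Real.exp_pos _

lemma wtsum_pos (hq : 0 < q) (β : ℝ) (σ : Fin n → Fin q) (u : Fin n) :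
    0 < ∑ j, wt β σ u j := by
  have : Nonempty (Fin q) := ⟨⟨0, hq⟩⟩
  exact sum_pos (fun j _ => wt_pos _ _ _ _) univ_nonempty

lemma rp_nonneg (β : ℝ) (σ : Fin n → Fin q) (u : Fin n) (k : Fin q) : 0 ≤ rp β σ u k :=
  div_nonneg (wt_pos _ _ _ _).le (sum_nonneg fun j _ => (wt_pos _ _ _ _).le)

lemma rp_sum (hq : 0 < q) (β : ℝ) (σ : Fin n → Fin q) (u : Fin n) :
    ∑ k, rp β σ u k = 1 := by
  unfold rp
  rw [← sum_div, div_self (wtsum_pos hq β σ u).ne']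

lemma rp_le_one (hq : 0 < q) (β : ℝ) (σ : Fin n → Fin q) (u : Fin n) (k : Fin q) :
    rp β σ u k ≤ 1 := by
  rw [← rp_sum hq β σ u]
  exact single_le_sum (f := fun k => rp β σ u k) (fun j _ => rp_nonneg β σ u j) (mem_univ k)

lemma cntx_nonneg (σ : Fin n → Fin q) (u : Fin n) (k : Fin q) : 0 ≤ cntx σ u k :=
  sum_nonneg fun v _ => by split_ifs <;> norm_num

lemma cntx_le (σ : Fin n → Fin q) (u : Fin n) (k : Fin q) : cntx σ u k ≤ n := by
  calc cntx σ u k ≤ ∑ v : Fin n, (1 : ℝ) := sum_le_sum fun v _ => by split_ifs <;> norm_num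
    _ = n := by simp

/-- lower bound constant for update probabilities -/
noncomputable def c0 (q : ℕ) (β : ℝ) : ℝ := Real.exp (-(2 * β)) / q

lemma c0_pos (hq : 0 < q) (β : ℝ) : 0 < c0 q β := by
  have : (0 : ℝ) < q := by exact_mod_cast hq
  unfold c0; positivity

lemma wt_ge (β : ℝ) (hβ : 0 ≤ β) (σ : Fin n → Fin q) (u : Fin n) (k : Fin q) :
    1 ≤ wt β σ u k := by
  unfold wt
  have := cntx_nonneg σ u k
  rw [Real.one_le_exp_iff]; positivity

lemma wt_le (hn : 0 < n) (β : ℝ) (hβ : 0 ≤ β) (σ : Fin n → Fin q) (u : Fin n) (k : Fin q) :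
    wt β σ u k ≤ Real.exp (2 * β) := by
  unfold wt
  have h1 : (0 : ℝ) < n := by exact_mod_cast hn
  have := cntx_le σ u k
  rw [Real.exp_le_exp, div_mul_eq_mul_div, div_le_iff₀ h1]
  exact mul_le_mul_of_nonneg_left this (by positivity)

lemma rp_ge (hq : 0 < q) (hn : 0 < n) (β : ℝ) (hβ : 0 ≤ β) (σ : Fin n → Fin q) (u : Fin n)
    (k : Fin q) : c0 q β ≤ rp β σ u k := by
  have hq' : (0 : ℝ) < q := by exact_mod_cast hq
  have h1 : ∑ j, wt β σ u j ≤ q * Real.exp (2 * β) := by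
    calc ∑ j, wt β σ u j ≤ ∑ j : Fin q, Real.exp (2 * β) :=
          sum_le_sum fun j _ => wt_le hn β hβ σ u j
      _ = _ := by simp
  unfold rp c0
  rw [le_div_iff₀ (wtsum_pos hq β σ u)]
  calc Real.exp (-(2 * β)) / q * ∑ j, wt β σ u j
      ≤ Real.exp (-(2 * β)) / q * (q * Real.exp (2 * β)) :=
        mul_le_mul_of_nonneg_left h1 (by positivity)
    _ = Real.exp (-(2 * β)) * Real.exp (2 * β) := by field_simp
    _ = 1 := by rw [← Real.exp_add]; simp
    _ ≤ _ := wt_ge β hβ σ u k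

lemma isExp_Av (hq : 0 < q) (hn : 0 < n) (β : ℝ) (σ : Fin n → Fin q) : IsExp (Av β σ) := by
  have h1 : (n : ℝ) ≠ 0 := by exact_mod_cast hn.ne'
  refine ⟨fun f hf => ?_, ?_⟩
  · rw [Av_apply]
    exact mul_nonneg (by positivity) (sum_nonneg fun u _ => sum_nonneg fun k _ =>
      mul_nonneg (rp_nonneg _ _ _ _) (hf _))
  · rw [Av_apply]; simp [rp_sum hq, h1]

lemma isMk_Pop (hq : 0 < q) (hn : 0 < n) (β : ℝ) :
    IsMk (Pop β : ((Fin n → Fin q) → ℝ) →ₗ[ℝ] _) :=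
  ⟨fun f hf σ => (isExp_Av hq hn β σ).1 (fun p => f (Function.update σ p.1 p.2)) (fun _ => hf _),
    fun σ => (isExp_Av hq hn β σ).2⟩

/-- the pair-count of an updated configuration -/
lemma pair_update (σ : Fin n → Fin q) (u : Fin n) (k : Fin q) :
    (∑ a : Fin n, ∑ b : Fin n,
      if Function.update σ u k a = Function.update σ u k b then (1 : ℝ) else 0) =
    (∑ a ∈ univ.erase u, ∑ b ∈ univ.erase u, if σ a = σ b then (1 : ℝ) else 0) + 1
      + 2 * cntx σ u k := by
  have hc : cntx σ u k = ∑ b ∈ univ.erase u, if σ b = k then (1 : ℝ) else 0 := by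
    unfold cntx
    rw [← add_sum_erase univ _ (mem_univ u)]
    simp only [ne_eq, not_true_eq_false, false_and, if_false, zero_add]
    exact sum_congr rfl fun b hb => by simp [(mem_erase.1 hb).1]
  rw [← add_sum_erase univ _ (mem_univ u), ← add_sum_erase univ _ (mem_univ u)]
  have h1 : (∑ b ∈ univ.erase u, if Function.update σ u k u = Function.update σ u k b
      then (1 : ℝ) else 0) = cntx σ u k := by
    rw [hc]; exact sum_congr rfl fun b hb => by
      rw [Function.update_self, Function.update_of_ne (mem_erase.1 hb).1]; simp [eq_comm]
  have h2 : (∑ a ∈ univ.erase u, ∑ b : Fin n, if Function.update σ u k a = Function.update σ u k b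
      then (1 : ℝ) else 0) = cntx σ u k +
      ∑ a ∈ univ.erase u, ∑ b ∈ univ.erase u, if σ a = σ b then (1 : ℝ) else 0 := by
    rw [hc, ← sum_add_distrib]
    refine sum_congr rfl fun a ha => ?_
    rw [← add_sum_erase univ _ (mem_univ u), Function.update_self,
      Function.update_of_ne (mem_erase.1 ha).1]
    congr 1
    exact sum_congr rfl fun b hb => by rw [Function.update_of_ne (mem_erase.1 hb).1]
  rw [h1, h2]; simp; ring

lemma pottsWeight_update (β : ℝ) (σ : Fin n → Fin q) (u : Fin n) : ∃ c : ℝ, 0 < c ∧ ∀ k,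
    pottsWeight q n β (Function.update σ u k) = c * wt β σ u k := by
  refine ⟨Real.exp ((β / n) * ((∑ a ∈ univ.erase u, ∑ b ∈ univ.erase u,
    if σ a = σ b then (1 : ℝ) else 0) + 1)), Real.exp_pos _, fun k => ?_⟩
  unfold pottsWeight wt
  rw [pair_update, ← Real.exp_add]; congr 1; ring

lemma Z_pos (hq : 0 < q) (β : ℝ) : 0 < ∑ τ : Fin n → Fin q, pottsWeight q n β τ := by
  have : Nonempty (Fin q) := ⟨⟨0, hq⟩⟩
  exact sum_pos (fun j _ => Real.exp_pos _) univ_nonempty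

lemma pottsMeasure_pos (hq : 0 < q) (β : ℝ) (σ : Fin n → Fin q) : 0 < pottsMeasure q n β σ :=
  div_pos (Real.exp_pos _) (Z_pos hq β)

lemma pottsMeasure_sum (hq : 0 < q) (β : ℝ) : ∑ σ : Fin n → Fin q, pottsMeasure q n β σ = 1 := by
  unfold pottsMeasure; rw [← sum_div, div_self (Z_pos hq β).ne']

lemma cond_eq_rp (hq : 0 < q) (β : ℝ) (σ : Fin n → Fin q) (u : Fin n) (k : Fin q) :
    pottsMeasure q n β (Function.update σ u k) /
      ∑ j, pottsMeasure q n β (Function.update σ u j) = rp β σ u k := by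
  obtain ⟨c, hc, h⟩ := pottsWeight_update β σ u
  have hZ := Z_pos (n := n) hq β
  have := wtsum_pos hq β σ u
  unfold pottsMeasure rp
  simp only [h]
  rw [← sum_div, ← mul_sum]
  field_simp

lemma mulVec_kernel (hq : 0 < q) (β : ℝ) (f : (Fin n → Fin q) → ℝ) :
    (glauberKernel q n β).mulVec f = Pop β f := by
  ext σ
  rw [Pop_apply, Av_apply]
  simp only [Matrix.mulVec, dotProduct, glauberKernel, mul_assoc]
  rw [← mul_sum]
  congr 1
  simp only [sum_mul]
  rw [sum_comm]
  refine sum_congr rfl fun u _ => ?_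
  simp only [ite_mul, zero_mul]
  rw [← sum_filter]
  symm
  refine sum_bij (fun k _ => Function.update σ u k) ?_ ?_ ?_ ?_
  · intro k _
    simp only [mem_filter, mem_univ, true_and]
    intro v hv; rw [Function.update_of_ne hv]
  · intro a _ b _ h
    have := congrFun h u; simpa using this
  · intro τ hτ
    simp only [mem_filter, mem_univ, true_and] at hτ
    refine ⟨τ u, mem_univ _, ?_⟩
    ext v
    by_cases hv : v = u
    · subst hv; simp
    · rw [Function.update_of_ne hv, hτ v hv]
  · intro k _
    rw [cond_eq_rp hq]

lemma mulVec_kernel_pow (hq : 0 < q) (β : ℝ) (t : ℕ) (f : (Fin n → Fin q) → ℝ) :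
    (glauberKernel q n β ^ t).mulVec f = (Pop β ^ t) f := by
  induction t generalizing f with
  | zero => simp
  | succ t ih =>
    rw [pow_succ, ← Matrix.mulVec_mulVec, mulVec_kernel hq, ih, pow_succ, Module.End.mul_apply]

/-- expectation under the Potts measure -/
noncomputable def Emu (q n : ℕ) (β : ℝ) : ((Fin n → Fin q) → ℝ) →ₗ[ℝ] ℝ where
  toFun f := ∑ σ, pottsMeasure q n β σ * f σ
  map_add' f g := by simp only [Pi.add_apply, mul_add, sum_add_distrib]
  map_smul' c f := by
    simp only [Pi.smul_apply, smul_eq_mul, RingHom.id_apply, mul_sum]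
    exact sum_congr rfl fun u _ => by ring

lemma Emu_apply (β : ℝ) (f : (Fin n → Fin q) → ℝ) :
    Emu q n β f = ∑ σ, pottsMeasure q n β σ * f σ := rfl

lemma isExp_Emu (hq : 0 < q) (β : ℝ) : IsExp (Emu q n β) :=
  ⟨fun f hf => sum_nonneg fun σ _ => mul_nonneg (pottsMeasure_pos hq β σ).le (hf σ), by
    simp [Emu_apply, pottsMeasure_sum hq]⟩

lemma kernel_rev (β : ℝ) (σ τ : Fin n → Fin q) :
    pottsMeasure q n β σ * glauberKernel q n β σ τ =
      pottsMeasure q n β τ * glauberKernel q n β τ σ := by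
  unfold glauberKernel
  rw [mul_left_comm, mul_left_comm (pottsMeasure q n β τ)]
  congr 1
  rw [mul_sum, mul_sum]
  refine sum_congr rfl fun u _ => ?_
  by_cases h : ∀ v : Fin n, v ≠ u → τ v = σ v
  · have h2 : ∀ v : Fin n, v ≠ u → σ v = τ v := fun v hv => (h v hv).symm
    rw [if_pos h, if_pos h2]
    have : ∀ k, Function.update σ u k = Function.update τ u k := by
      intro k; ext v
      by_cases hv : v = u
      · subst hv; simp
      · rw [Function.update_of_ne hv, Function.update_of_ne hv, h v hv]
    simp only [this]; ring
  · have h2 : ¬ ∀ v : Fin n, v ≠ u → σ v = τ v := fun h' => h fun v hv => (h' v hv).symm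
    rw [if_neg h, if_neg h2]; simp

lemma Emu_Pop (hq : 0 < q) (hn : 0 < n) (β : ℝ) (f : (Fin n → Fin q) → ℝ) :
    Emu q n β (Pop β f) = Emu q n β f := by
  have h1 : ∀ τ, ∑ σ, glauberKernel q n β τ σ = 1 := by
    intro τ
    have := congrFun (mulVec_kernel hq β (fun _ : Fin n → Fin q => (1 : ℝ))) τ
    rw [(isMk_Pop hq hn β).2] at this
    simpa [Matrix.mulVec, dotProduct] using this
  rw [← mulVec_kernel hq, Emu_apply, Emu_apply]
  simp only [Matrix.mulVec, dotProduct, mul_sum]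
  rw [sum_comm]
  refine sum_congr rfl fun τ _ => ?_
  have : ∀ σ, pottsMeasure q n β σ * (glauberKernel q n β σ τ * f τ) =
      (pottsMeasure q n β τ * f τ) * glauberKernel q n β τ σ := by
    intro σ; rw [← mul_assoc, kernel_rev]; ring
  simp only [this]
  rw [← mul_sum, h1, mul_one]

end PottsAux

namespace PottsAux

/-! ### Softmax and Lipschitz bounds -/

noncomputable def sm {q : ℕ} (x : Fin q → ℝ) (k : Fin q) : ℝ :=
  Real.exp (x k) / ∑ j, Real.exp (x j)

lemma sm_sum_pos {q : ℕ} (x : Fin q → ℝ) (k : Fin q) : 0 < ∑ j, Real.exp (x j) :=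
  sum_pos (fun _ _ => Real.exp_pos _) ⟨k, mem_univ k⟩

lemma sm_nonneg {q : ℕ} (x : Fin q → ℝ) (k : Fin q) : 0 ≤ sm x k :=
  div_nonneg (Real.exp_pos _).le (sm_sum_pos x k).le

lemma sm_le_one {q : ℕ} (x : Fin q → ℝ) (k : Fin q) : sm x k ≤ 1 := by
  unfold sm
  rw [div_le_one (sm_sum_pos x k)]
  exact single_le_sum (f := fun j => Real.exp (x j)) (fun _ _ => (Real.exp_pos _).le) (mem_univ k)

lemma sm_diff {q : ℕ} (x y : Fin q → ℝ) (d : ℝ) (h : ∀ j, |x j - y j| ≤ d) (k : Fin q) :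
    sm x k - sm y k ≤ Real.exp (2 * d) - 1 := by
  have hd : 0 ≤ d := (abs_nonneg _).trans (h k)
  have h1 : sm x k ≤ Real.exp (2 * d) * sm y k := by
    unfold sm
    rw [mul_div_assoc', div_le_div_iff₀ (sm_sum_pos x k) (sm_sum_pos y k)]
    have e1 : Real.exp (x k) ≤ Real.exp d * Real.exp (y k) := by
      rw [← Real.exp_add, Real.exp_le_exp]; have := (abs_le.1 (h k)).2; linarith
    have e2 : ∑ j, Real.exp (y j) ≤ Real.exp d * ∑ j, Real.exp (x j) := by
      rw [mul_sum]
      refine sum_le_sum fun j _ => ?_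
      rw [← Real.exp_add, Real.exp_le_exp]; have := (abs_le.1 (h j)).1; linarith
    calc _ ≤ (Real.exp d * Real.exp (y k)) * (Real.exp d * ∑ j, Real.exp (x j)) :=
          mul_le_mul e1 e2 (sm_sum_pos y k).le (by positivity)
      _ = _ := by rw [two_mul, Real.exp_add]; ring
  have h2 : 1 ≤ Real.exp (2 * d) := by rw [Real.one_le_exp_iff]; positivity
  nlinarith [sm_le_one y k]

lemma exp_sub_one_le (x : ℝ) : Real.exp x - 1 ≤ x * Real.exp x := by
  have := Real.add_one_le_exp (-x)
  have h2 : Real.exp (-x) * Real.exp x = 1 := by rw [← Real.exp_add]; simp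
  nlinarith [Real.exp_pos x]

lemma sm_abs_diff {q : ℕ} (x y : Fin q → ℝ) (d D : ℝ) (h : ∀ j, |x j - y j| ≤ d) (hD : d ≤ D)
    (k : Fin q) : |sm x k - sm y k| ≤ 2 * d * Real.exp (2 * D) := by
  have hd : 0 ≤ d := (abs_nonneg _).trans (h k)
  have h1 := sm_diff x y d h k
  have h2 := sm_diff y x d (fun j => by rw [abs_sub_comm]; exact h j) k
  have h3 : Real.exp (2 * d) - 1 ≤ 2 * d * Real.exp (2 * D) :=
    (exp_sub_one_le _).trans (mul_le_mul_of_nonneg_left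
      (Real.exp_le_exp.2 (by linarith)) (by positivity))
  rw [abs_le]; constructor <;> linarith

variable {q n : ℕ}

lemma rp_eq_sm (β : ℝ) (σ : Fin n → Fin q) (u : Fin n) (k : Fin q) :
    rp β σ u k = sm (fun j => 2 * β / n * cntx σ u j) k := rfl

/-- Lipschitz constant for update probabilities. -/
noncomputable def C1 (β : ℝ) : ℝ := 4 * β * Real.exp (4 * β)

lemma C1_nonneg {β : ℝ} (hβ : 0 ≤ β) : 0 ≤ C1 β := by unfold C1; positivity

lemma rp_near (hn : 0 < n) {β : ℝ} (hβ : 0 ≤ β) (σ : Fin n → Fin q) (u : Fin n) (y : Fin q → ℝ)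
    (h : ∀ j, |cntx σ u j - y j| ≤ 1) (k : Fin q) :
    |rp β σ u k - sm (fun j => 2 * β / n * y j) k| ≤ C1 β / n := by
  have hn' : (1 : ℝ) ≤ n := by exact_mod_cast hn
  rw [rp_eq_sm]
  refine (sm_abs_diff _ _ (2 * β / n) (2 * β) (fun j => ?_) ?_ k).trans ?_
  · rw [← mul_sub, abs_mul, abs_of_nonneg (by positivity : 0 ≤ 2 * β / (n : ℝ))]
    exact mul_le_of_le_one_right (by positivity) (h j)
  · exact div_le_self (by positivity) hn'
  · unfold C1; apply le_of_eq; ring_nf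

lemma cntx_update_self (σ : Fin n → Fin q) (u : Fin n) (b k : Fin q) :
    cntx (Function.update σ u b) u k = cntx σ u k := by
  unfold cntx
  refine sum_congr rfl fun v _ => ?_
  by_cases hv : v = u
  · simp [hv]
  · rw [Function.update_of_ne hv]

lemma rp_update_self (β : ℝ) (σ : Fin n → Fin q) (u : Fin n) (b k : Fin q) :
    rp β (Function.update σ u b) u k = rp β σ u k := by
  unfold rp wt; simp only [cntx_update_self]

lemma cntx_update_near (σ : Fin n → Fin q) (u w : Fin n) (b k : Fin q) :
    |cntx (Function.update σ w b) u k - cntx σ u k| ≤ 1 := by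
  unfold cntx
  rw [← sum_sub_distrib, ← add_sum_erase univ _ (mem_univ w), sum_eq_zero, add_zero]
  · split_ifs <;> norm_num
  · intro v hv
    rw [Function.update_of_ne (mem_erase.1 hv).1]; simp

lemma rp_update_near (hn : 0 < n) {β : ℝ} (hβ : 0 ≤ β) (σ : Fin n → Fin q) (u w : Fin n)
    (b k : Fin q) : |rp β (Function.update σ w b) u k - rp β σ u k| ≤ C1 β / n :=
  rp_near hn hβ _ u _ (fun j => cntx_update_near σ u w b j) k

/-! ### Gradient estimate -/

noncomputable def Gam (g : (Fin n → Fin q) → ℝ) (z : Fin n → Fin q) : ℝ :=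
  ∑ w, ∑ b, (g (Function.update z w b) - g z) ^ 2

lemma Gam_nonneg (g : (Fin n → Fin q) → ℝ) (z : Fin n → Fin q) : 0 ≤ Gam g z :=
  sum_nonneg fun _ _ => sum_nonneg fun _ _ => sq_nonneg _

lemma Av_ge (hq : 0 < q) (hn : 0 < n) {β : ℝ} (hβ : 0 ≤ β) (z : Fin n → Fin q)
    (g : Fin n × Fin q → ℝ) (hg : ∀ p, 0 ≤ g p) :
    c0 q β / n * ∑ u, ∑ k, g (u, k) ≤ Av β z g := by
  rw [Av_apply, div_mul_eq_mul_div, mul_comm (c0 q β), mul_div_assoc, one_div_mul_eq_div,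
    ← mul_div_assoc]
  refine div_le_div_of_nonneg_right ?_ (by positivity)
  rw [mul_comm, mul_sum]
  refine sum_le_sum fun u _ => ?_
  rw [mul_sum]
  exact sum_le_sum fun k _ => mul_le_mul_of_nonneg_right (rp_ge hq hn β hβ z u k) (hg _)

lemma grad_decomp (β : ℝ) (hq : 0 < q) (g : (Fin n → Fin q) → ℝ) (z : Fin n → Fin q)
    (w : Fin n) (b : Fin q) :
    Pop β g (Function.update z w b) - Pop β g z =
      Av β z (fun p => if p.1 = w then 0 else
        g (Function.update (Function.update z p.1 p.2) w b) - g (Function.update z p.1 p.2)) +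
      (1 / (n : ℝ)) * ∑ u, ∑ k, (rp β (Function.update z w b) u k - rp β z u k) *
        (g (Function.update (Function.update z w b) u k) - g (Function.update z w b)) := by
  rw [Pop_apply, Pop_apply, Av_apply, Av_apply, Av_apply, ← mul_sub, ← mul_add, ← sum_sub_distrib,
    ← sum_add_distrib]
  congr 1
  refine sum_congr rfl fun u _ => ?_
  by_cases hu : u = w
  · subst hu
    simp [rp_update_self]
  · have h1 : ∑ k, (rp β (Function.update z w b) u k - rp β z u k) * g (Function.update z w b) = 0 := by
      rw [← sum_mul, sum_sub_distrib, rp_sum hq, rp_sum hq]; simp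
    simp only [mul_sub (_ - _) _ _, sum_sub_distrib]
    rw [h1, sub_zero, ← sum_sub_distrib, ← sum_add_distrib]
    refine sum_congr rfl fun k _ => ?_
    simp only [hu, if_false]
    rw [Function.update_comm hu]
    ring

noncomputable def C2 (q : ℕ) (β : ℝ) : ℝ := C1 β ^ 2 * q / c0 q β

noncomputable def C3 (q : ℕ) (β : ℝ) : ℝ := 1 + 2 * C2 q β

lemma C3_pos (hq : 0 < q) {β : ℝ} : 0 < C3 q β := by
  have := c0_pos hq β
  unfold C3 C2; positivity

lemma sum_sq_le_card (f : Fin n → Fin q → ℝ) :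
    (∑ u, ∑ k, f u k) ^ 2 ≤ (n * q : ℝ) * ∑ u, ∑ k, f u k ^ 2 := by
  have h := sq_sum_le_card_mul_sum_sq (s := (univ : Finset (Fin n × Fin q))) (f := fun p => f p.1 p.2)
  rw [Fintype.sum_prod_type, Fintype.sum_prod_type] at h
  simpa using h

lemma Gam_Pop (hq : 0 < q) (hn : 0 < n) {β : ℝ} (hβ : 0 ≤ β) (g : (Fin n → Fin q) → ℝ)
    (z : Fin n → Fin q) : Gam (Pop β g) z ≤ (1 + C3 q β / n) * Pop β (Gam g) z := by
  have hn' : (1 : ℝ) ≤ n := by exact_mod_cast hn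
  have hn0 : (0 : ℝ) < n := by linarith
  have hc := c0_pos hq β
  have hq' : (0 : ℝ) < q := by exact_mod_cast hq
  set A : Fin n → Fin q → ℝ := fun w b => Av β z (fun p => if p.1 = w then 0 else
        g (Function.update (Function.update z p.1 p.2) w b) - g (Function.update z p.1 p.2))
    with hA
  set B : Fin n → Fin q → ℝ := fun w b => (1 / (n : ℝ)) * ∑ u, ∑ k,
    (rp β (Function.update z w b) u k - rp β z u k) *
        (g (Function.update (Function.update z w b) u k) - g (Function.update z w b)) with hB
  have hAs : ∑ w, ∑ b, A w b ^ 2 ≤ Pop β (Gam g) z := by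
    have : ∀ w b, A w b ^ 2 ≤ Av β z (fun p =>
        (g (Function.update (Function.update z p.1 p.2) w b) - g (Function.update z p.1 p.2)) ^ 2) := by
      intro w b
      refine ((isExp_Av hq hn β z).sq_le _).trans ((isExp_Av hq hn β z).mono fun p => ?_)
      split_ifs
      · simp only [ne_eq, OfNat.ofNat_ne_zero, not_false_eq_true, zero_pow]; positivity
      · exact le_rfl
    refine (sum_le_sum fun w _ => sum_le_sum fun b _ => this w b).trans (le_of_eq ?_)
    rw [Pop_apply]
    unfold Gam
    rw [lin_sum]
    refine sum_congr rfl fun w _ => ?_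
    rw [lin_sum]
  have hBs : ∑ w, ∑ b, B w b ^ 2 ≤ C2 q β / n ^ 2 * Pop β (Gam g) z := by
    have h1 : ∀ w b, B w b ^ 2 ≤ C1 β ^ 2 * q / n ^ 3 * Gam g (Function.update z w b) := by
      intro w b
      simp only [hB]
      rw [mul_pow]
      have h2 := sum_sq_le_card (fun u k => (rp β (Function.update z w b) u k - rp β z u k) *
        (g (Function.update (Function.update z w b) u k) - g (Function.update z w b)))
      have h3 : ∑ u, ∑ k, ((rp β (Function.update z w b) u k - rp β z u k) *
        (g (Function.update (Function.update z w b) u k) - g (Function.update z w b))) ^ 2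
        ≤ (C1 β / n) ^ 2 * Gam g (Function.update z w b) := by
        unfold Gam
        rw [mul_sum]
        refine sum_le_sum fun u _ => ?_
        rw [mul_sum]
        refine sum_le_sum fun k _ => ?_
        rw [mul_pow]
        refine mul_le_mul_of_nonneg_right ?_ (sq_nonneg _)
        rw [← sq_abs]
        exact pow_le_pow_left₀ (abs_nonneg _) (rp_update_near hn hβ z u w b k) 2
      calc _ ≤ (1 / (n : ℝ)) ^ 2 * ((n * q : ℝ) * ((C1 β / n) ^ 2 * Gam g (Function.update z w b))) :=
            mul_le_mul_of_nonneg_left (h2.trans (mul_le_mul_of_nonneg_left h3 (by positivity)))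
              (by positivity)
        _ = _ := by field_simp
    have h4 := Av_ge hq hn hβ z (fun p => Gam g (Function.update z p.1 p.2)) (fun p => Gam_nonneg _ _)
    rw [← Pop_apply] at h4
    calc _ ≤ ∑ w, ∑ b, C1 β ^ 2 * q / n ^ 3 * Gam g (Function.update z w b) :=
          sum_le_sum fun w _ => sum_le_sum fun b _ => h1 w b
      _ = C1 β ^ 2 * q / n ^ 3 * ∑ w, ∑ b, Gam g (Function.update z w b) := by
          simp only [mul_sum]
      _ = C2 q β / n ^ 2 * (c0 q β / n * ∑ w, ∑ b, Gam g (Function.update z w b)) := by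
          unfold C2; field_simp
      _ ≤ _ := mul_le_mul_of_nonneg_left h4 (by unfold C2; positivity)
  have hP : 0 ≤ Pop β (Gam g) z := (isMk_Pop hq hn β).1 _ (Gam_nonneg g) z
  have hC2 : 0 ≤ C2 q β := by unfold C2; positivity
  calc Gam (Pop β g) z = ∑ w, ∑ b, (A w b + B w b) ^ 2 := by
        unfold Gam; exact sum_congr rfl fun w _ => sum_congr rfl fun b _ => by
          rw [grad_decomp β hq]
    _ ≤ ∑ w, ∑ b, ((1 + 1 / (n : ℝ)) * A w b ^ 2 + (1 + n) * B w b ^ 2) := by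
        refine sum_le_sum fun w _ => sum_le_sum fun b _ => ?_
        have : 0 ≤ (1 / (n : ℝ)) * (A w b - n * B w b) ^ 2 := by positivity
        have e : (1 / (n : ℝ)) * (A w b - n * B w b) ^ 2 =
          1 / n * A w b ^ 2 - 2 * A w b * B w b + n * B w b ^ 2 := by field_simp; ring
        rw [e] at this
        nlinarith
    _ = (1 + 1 / (n : ℝ)) * ∑ w, ∑ b, A w b ^ 2 + (1 + n) * ∑ w, ∑ b, B w b ^ 2 := by
        simp only [sum_add_distrib, mul_sum]
    _ ≤ (1 + 1 / (n : ℝ)) * Pop β (Gam g) z + (1 + n) * (C2 q β / n ^ 2 * Pop β (Gam g) z) := by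
        gcongr
    _ = (1 + (1 + C2 q β / n + C2 q β) / n) * Pop β (Gam g) z := by field_simp; ring
    _ ≤ _ := by
        refine mul_le_mul_of_nonneg_right ?_ hP
        unfold C3
        have : C2 q β / n ≤ C2 q β := div_le_self hC2 hn'
        have h5 : (1 + C2 q β / n + C2 q β) / n ≤ (1 + 2 * C2 q β) / n :=
          div_le_div_of_nonneg_right (by linarith) hn0.le
        linarith

lemma var_ge (hq : 0 < q) (hn : 0 < n) {β : ℝ} (hβ : 0 ≤ β) (g : (Fin n → Fin q) → ℝ)
    (z : Fin n → Fin q) :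
    c0 q β / (2 + 2 * q) / n * Gam g z ≤ Pop β (fun x => g x ^ 2) z - (Pop β g z) ^ 2 := by
  have hn' : (1 : ℝ) ≤ n := by exact_mod_cast hn
  have hc := c0_pos hq β
  have hq' : (0 : ℝ) < q := by exact_mod_cast hq
  set m := Pop β g z with hm
  have hE := isExp_Av hq hn β z
  have h1 : Pop β (fun x => g x ^ 2) z - m ^ 2 =
      Av β z (fun p => (g (Function.update z p.1 p.2) - m) ^ 2) := by
    have : (fun p : Fin n × Fin q => (g (Function.update z p.1 p.2) - m) ^ 2) =
      fun p => g (Function.update z p.1 p.2) ^ 2 + (-(2 * m) * g (Function.update z p.1 p.2) + m ^ 2) := by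
      ext p; ring
    rw [this, lin_add, hE.affine, ← Pop_apply, ← hm, Pop_apply]; ring
  have h2 := Av_ge hq hn hβ z (fun p => (g (Function.update z p.1 p.2) - m) ^ 2) (fun p => sq_nonneg _)
  rw [h1]
  refine le_trans ?_ h2
  set T := ∑ u, ∑ k, (g (Function.update z u k) - m) ^ 2 with hT
  have h3 : ∑ u : Fin n, (g z - m) ^ 2 ≤ T := by
    refine sum_le_sum fun u _ => ?_
    have := single_le_sum (f := fun k => (g (Function.update z u k) - m) ^ 2)
      (fun k _ => sq_nonneg _) (mem_univ (z u))
    simpa using this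
  have h4 : Gam g z ≤ (2 + 2 * q) * T := by
    calc Gam g z ≤ ∑ w : Fin n, ∑ b : Fin q, (2 * (g (Function.update z w b) - m) ^ 2
          + 2 * (g z - m) ^ 2) := by
          unfold Gam
          refine sum_le_sum fun w _ => sum_le_sum fun b _ => ?_
          nlinarith [sq_nonneg (g (Function.update z w b) - m + (g z - m))]
      _ = 2 * T + 2 * q * ∑ u : Fin n, (g z - m) ^ 2 := by
          simp only [sum_add_distrib, ← mul_sum, hT]; simp; ring
      _ ≤ _ := by nlinarith
  calc c0 q β / (2 + 2 * q) / n * Gam g z ≤ c0 q β / (2 + 2 * q) / n * ((2 + 2 * q) * T) := by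
        gcongr
    _ = _ := by field_simp

lemma Gam_pow (hq : 0 < q) (hn : 0 < n) {β : ℝ} (hβ : 0 ≤ β) (g : (Fin n → Fin q) → ℝ) (t : ℕ)
    (z : Fin n → Fin q) :
    Gam ((Pop β ^ t) g) z ≤ (1 + C3 q β / n) ^ t * (Pop β ^ t) (Gam g) z := by
  have := C3_pos (β := β) hq
  induction t generalizing g with
  | zero => simp
  | succ t ih =>
    rw [pow_succ (Pop β), Module.End.mul_apply, Module.End.mul_apply, pow_succ, mul_assoc]
    refine (ih _).trans (mul_le_mul_of_nonneg_left ?_ (by positivity))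
    have h1 := ((isMk_Pop hq hn β).pow t).mono (Gam_Pop hq hn hβ g) z
    refine h1.trans (le_of_eq ?_)
    have := lin_mul (evalAt (Pop β ^ t) z) (1 + C3 q β / n) (Pop β (Gam g))
    simpa only [evalAt_apply] using this

lemma var_iter (hq : 0 < q) (hn : 0 < n) {β : ℝ} (hβ : 0 ≤ β) (t : ℕ) (f : (Fin n → Fin q) → ℝ)
    (z : Fin n → Fin q) :
    (t + 1) * (c0 q β / (2 + 2 * q) / n) * Gam ((Pop β ^ t) f) z ≤
      (1 + C3 q β / n) ^ t *
        ((Pop β ^ (t + 1)) (fun x => f x ^ 2) z - ((Pop β ^ (t + 1)) f z) ^ 2) := by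
  have h3 := C3_pos (β := β) hq
  have hc := c0_pos hq β
  induction t generalizing f with
  | zero => simpa using var_ge hq hn hβ f z
  | succ t ih =>
    have h1 := ih (Pop β f)
    set r := 1 + C3 q β / n with hr
    have hr1 : 1 ≤ r := by rw [hr]; have : 0 ≤ C3 q β / n := by positivity
                           linarith
    set cc := c0 q β / (2 + 2 * q) / n with hcc
    have hcc0 : 0 ≤ cc := by positivity
    have e1 : (Pop β ^ t) (Pop β f) = (Pop β ^ (t + 1)) f := by rw [pow_succ]; rfl
    have e2 : (Pop β ^ (t + 1)) (Pop β f) = (Pop β ^ (t + 1 + 1)) f := by rw [pow_succ _ (t + 1)]; rfl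
    rw [e1, e2] at h1
    have h2 := ((isMk_Pop hq hn β).pow (t + 1)).mono (var_ge hq hn hβ f) z
    have h4 := lin_mul (evalAt (Pop β ^ (t + 1)) z) cc (Gam f)
    have h5 := lin_sub (evalAt (Pop β ^ (t + 1)) z) (Pop β (fun x => f x ^ 2)) (fun x => (Pop β f x) ^ 2)
    simp only [evalAt_apply] at h4 h5
    rw [← hcc, h4, h5] at h2
    have e3 : (Pop β ^ (t + 1)) (Pop β (fun x => f x ^ 2)) = (Pop β ^ (t + 1 + 1)) (fun x => f x ^ 2) := by
      rw [pow_succ _ (t + 1)]; rfl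
    rw [e3] at h2
    have h6 := Gam_pow hq hn hβ f (t + 1) z
    rw [← hr] at h6
    set G := Gam ((Pop β ^ (t + 1)) f) z with hG
    have hG0 : 0 ≤ G := Gam_nonneg _ _
    set X := (Pop β ^ (t + 1 + 1)) (fun x => f x ^ 2) z with hX
    set Y := (Pop β ^ (t + 1)) (fun x => (Pop β f x) ^ 2) z with hY
    set W := ((Pop β ^ (t + 1 + 1)) f z) ^ 2 with hW
    have hrt : 0 ≤ r ^ t := by positivity
    have h7 : (t + 1) * cc * G ≤ r ^ (t + 1) * (Y - W) := by
      have h0 : 0 ≤ (t + 1) * cc * G := by positivity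
      rw [pow_succ]
      nlinarith [mul_le_mul_of_nonneg_left hr1 (h0.trans h1)]
    have h8 : cc * G ≤ r ^ (t + 1) * (X - Y) := by
      calc cc * G ≤ cc * (r ^ (t + 1) * (Pop β ^ (t + 1)) (Gam f) z) := by gcongr
        _ = r ^ (t + 1) * (cc * (Pop β ^ (t + 1)) (Gam f) z) := by ring
        _ ≤ _ := by gcongr
    push_cast
    linarith

noncomputable def C4 (q : ℕ) (β : ℝ) : ℝ := Real.exp (C3 q β) / (c0 q β / (2 + 2 * q))

lemma C4_pos (hq : 0 < q) {β : ℝ} : 0 < C4 q β := by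
  have := c0_pos hq β
  unfold C4; positivity

theorem grad_bound (hq : 0 < q) (hn : 0 < n) {β : ℝ} (hβ : 0 ≤ β) (f : (Fin n → Fin q) → ℝ)
    (hf0 : ∀ x, 0 ≤ f x) (hf1 : ∀ x, f x ≤ 1) (z : Fin n → Fin q) :
    Gam ((Pop β ^ n) f) z ≤ C4 q β := by
  have hn' : (0 : ℝ) < n := by exact_mod_cast hn
  have h3 := C3_pos (β := β) hq
  have hc := c0_pos hq β
  have h := var_iter hq hn hβ n f z
  have h1 : (Pop β ^ (n + 1)) (fun x => f x ^ 2) z ≤ 1 := by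
    have hM := ((isMk_Pop hq hn β).pow (n + 1)).at z
    have := hM.mono (f := fun x => f x ^ 2) (g := fun _ => 1) (fun x => by
      nlinarith [hf0 x, hf1 x])
    rwa [hM.const, evalAt_apply] at this
  have h2 : (1 + C3 q β / n) ^ n ≤ Real.exp (C3 q β) := by
    calc (1 + C3 q β / n) ^ n ≤ (Real.exp (C3 q β / n)) ^ n := by
          gcongr; rw [add_comm]; exact Real.add_one_le_exp _
      _ = _ := by rw [← Real.exp_nat_mul]; congr 1; field_simp
  unfold C4
  rw [le_div_iff₀ (by positivity)]
  have hG := Gam_nonneg ((Pop β ^ n) f) z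
  calc Gam ((Pop β ^ n) f) z * (c0 q β / (2 + 2 * q))
      ≤ (n + 1) * (c0 q β / (2 + 2 * q) / n) * Gam ((Pop β ^ n) f) z := by
        have : (n + 1) * (c0 q β / (2 + 2 * q) / n) = c0 q β / (2 + 2 * q) +
          c0 q β / (2 + 2 * q) / n := by field_simp
        rw [this]
        have : 0 ≤ c0 q β / (2 + 2 * q) / n := by positivity
        nlinarith
    _ ≤ _ := h
    _ ≤ (1 + C3 q β / n) ^ n * 1 := by
        gcongr
        nlinarith [sq_nonneg ((Pop β ^ (n + 1)) f z)]
    _ ≤ _ := by linarith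

end PottsAux

namespace PottsAux

/-! ### The drift function -/

noncomputable def kap (q : ℕ) (β : ℝ) : ℝ := 1 - 2 * β / q

lemma Dfun_deriv (q : ℕ) (hq : 3 ≤ q) (β : ℝ) :
    HasDerivAt (Dfun q β) (-(kap q β)) (1 / q) := by
  have hq' : (3 : ℝ) ≤ q := by exact_mod_cast hq
  have hq0 : (q : ℝ) ≠ 0 := by linarith
  have hq1 : (q : ℝ) - 1 ≠ 0 := by intro h; linarith
  have h1 : HasDerivAt (fun x : ℝ => 2 * β * (1 - (q : ℝ) * x) / ((q : ℝ) - 1))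
      (2 * β * (-(q : ℝ)) / (q - 1)) (1 / q) := by
    have := (((((hasDerivAt_id (1 / (q : ℝ))).const_mul (q : ℝ)).const_sub 1).const_mul (2 * β)).div_const
      ((q : ℝ) - 1))
    simpa using this
  have e0 : 2 * β * (1 - (q : ℝ) * (1 / q)) / ((q : ℝ) - 1) = 0 := by
    rw [mul_one_div_cancel hq0]; simp
  have h2 := (h1.exp.const_mul ((q : ℝ) - 1)).const_add 1
  have h3 := h2.inv (by rw [e0]; simp [hq0])
  have h4 := (hasDerivAt_id (1 / (q : ℝ))).neg.add h3
  have : HasDerivAt (Dfun q β) _ (1 / q) := h4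
  convert this using 1
  rw [e0]; unfold kap
  simp only [Real.exp_zero, mul_one, add_sub_cancel, one_mul]
  field_simp
  ring

lemma Dfun_base (q : ℕ) (hq : 3 ≤ q) (β : ℝ) : Dfun q β (1 / q) = 0 := by
  have hq' : (3 : ℝ) ≤ q := by exact_mod_cast hq
  have hq0 : (q : ℝ) ≠ 0 := by linarith
  unfold Dfun
  rw [mul_one_div_cancel hq0]; simp

lemma Dfun_den_pos (q : ℕ) (hq : 3 ≤ q) (x : ℝ) : 0 < 1 + ((q : ℝ) - 1) * Real.exp x := by
  have hq' : (3 : ℝ) ≤ q := by exact_mod_cast hq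
  have : 0 < (q : ℝ) - 1 := by linarith
  positivity

lemma Dfun_cont (q : ℕ) (hq : 3 ≤ q) (β : ℝ) : Continuous (Dfun q β) := by
  unfold Dfun
  refine continuous_neg.add (Continuous.inv₀ (by fun_prop) fun x => (Dfun_den_pos q hq _).ne')

lemma Dfun_one (q : ℕ) (hq : 3 ≤ q) (β : ℝ) : Dfun q β 1 < 0 := by
  have hq' : (3 : ℝ) ≤ q := by exact_mod_cast hq
  unfold Dfun
  have h : 0 < ((q : ℝ) - 1) * Real.exp (2 * β * (1 - (q : ℝ) * 1) / ((q : ℝ) - 1)) :=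
    mul_pos (by linarith) (Real.exp_pos _)
  have := inv_lt_one_of_one_lt₀ (by linarith : 1 < 1 + ((q : ℝ) - 1) *
    Real.exp (2 * β * (1 - (q : ℝ) * 1) / ((q : ℝ) - 1)))
  linarith

lemma Dfun_mono (q : ℕ) (hq : 3 ≤ q) {β b : ℝ} (h : β ≤ b) {x : ℝ} (hx : 1 / (q : ℝ) < x) :
    Dfun q β x ≤ Dfun q b x := by
  have hq' : (3 : ℝ) ≤ q := by exact_mod_cast hq
  have hqx : 1 < q * x := by rwa [div_lt_iff₀ (by linarith), mul_comm] at hx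
  unfold Dfun
  have h1 : 0 < (q : ℝ) - 1 := by linarith
  have h2 : 2 * b * (1 - (q : ℝ) * x) / ((q : ℝ) - 1) ≤ 2 * β * (1 - (q : ℝ) * x) / ((q : ℝ) - 1) := by
    apply div_le_div_of_nonneg_right _ h1.le
    nlinarith
  have h3 : 1 + ((q : ℝ) - 1) * Real.exp (2 * b * (1 - (q : ℝ) * x) / ((q : ℝ) - 1)) ≤
      1 + ((q : ℝ) - 1) * Real.exp (2 * β * (1 - (q : ℝ) * x) / ((q : ℝ) - 1)) := by
    have := mul_le_mul_of_nonneg_left (Real.exp_le_exp.2 h2) h1.le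
    linarith
  have := inv_anti₀ (Dfun_den_pos q hq _) h3
  linarith

lemma subcrit (q : ℕ) (hq : 3 ≤ q) (β : ℝ) (hβ0 : 0 ≤ β) (hβ : β < betaS q) :
    0 < kap q β ∧ ∀ x : ℝ, 1 / (q : ℝ) < x → x ≤ 1 → Dfun q β x < 0 := by
  have hq' : (3 : ℝ) ≤ q := by exact_mod_cast hq
  have hq0 : (0 : ℝ) < q := by linarith
  have hne : {β : ℝ | 0 ≤ β ∧ ∀ x ∈ Set.Ioo (1 / (q : ℝ)) 1, Dfun q β x ≠ 0}.Nonempty := by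
    by_contra hem
    rw [Set.not_nonempty_iff_eq_empty] at hem
    unfold betaS at hβ
    rw [hem, Real.sSup_empty] at hβ
    linarith
  obtain ⟨b, ⟨hb0, hb⟩, hβb⟩ := exists_lt_of_lt_csSup hne hβ
  have hneg : ∀ x ∈ Set.Ioo (1 / (q : ℝ)) 1, Dfun q b x < 0 := by
    intro x hx
    by_contra hpos
    have hpos : 0 < Dfun q b x := lt_of_le_of_ne (not_lt.1 hpos) (hb x hx).symm
    have := intermediate_value_Icc' hx.2.le (Dfun_cont q hq b).continuousOn
    obtain ⟨y, hy, hy0⟩ := this ⟨(Dfun_one q hq b).le, hpos.le⟩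
    rcases eq_or_lt_of_le hy.2 with h | h
    · rw [h] at hy0; have := Dfun_one q hq b; linarith
    · exact hb y ⟨hx.1.trans_le hy.1, h⟩ hy0
  refine ⟨?_, fun x hx hx1 => ?_⟩
  · -- derivative of D at 1/q for b is nonpositive
    have hk : 0 ≤ kap q b := by
      by_contra hk
      push Not at hk
      have hd := Dfun_deriv q hq b
      have h1 : ∀ᶠ x in nhdsWithin (1 / (q : ℝ)) (Set.Ioi (1 / (q : ℝ))), 0 < slope (Dfun q b) (1 / q) x := by
        have := (hasDerivAt_iff_tendsto_slope.1 hd).eventually (lt_mem_nhds (by linarith : (0 : ℝ) < -(kap q b)))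
        exact this.filter_mono (nhdsWithin_mono _ (fun x hx => ne_of_gt hx))
      have h2 : ∀ᶠ x in nhdsWithin (1 / (q : ℝ)) (Set.Ioi (1 / (q : ℝ))), x ∈ Set.Ioo (1 / (q : ℝ)) 1 :=
        Ioo_mem_nhdsGT (by rw [div_lt_one hq0]; linarith)
      obtain ⟨x, hx1, hx2⟩ := (h1.and h2).exists
      rw [slope_def_field, Dfun_base q hq, sub_zero] at hx1
      have := hneg x hx2
      have h3 : 0 < x - 1 / (q : ℝ) := sub_pos.2 hx2.1
      have := div_neg_of_neg_of_pos this h3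
      linarith
    unfold kap at *
    have : 2 * β / q < 2 * b / q := by
      apply div_lt_div_of_pos_right _ hq0; linarith
    linarith
  · rcases eq_or_lt_of_le hx1 with h | h
    · rw [h]; exact Dfun_one q hq β
    · exact (Dfun_mono q hq hβb.le hx).trans_lt (hneg x ⟨hx, h⟩)

/-- The Lyapunov exponent `K`. -/
lemma exists_K (q : ℕ) (hq : 3 ≤ q) (β : ℝ) (hβ0 : 0 ≤ β) (hβ : β < betaS q) :
    ∃ K : ℝ, 0 < K ∧ ∀ y : ℝ, 0 ≤ y → 1 / (q : ℝ) + y ≤ 1 →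
      (2 * y + K * y ^ 2) * Dfun q β (1 / q + y) ≤ -(3 / 2 * kap q β) * y ^ 2 := by
  have hq' : (3 : ℝ) ≤ q := by exact_mod_cast hq
  have hq0 : (0 : ℝ) < q := by linarith
  obtain ⟨hk, hneg⟩ := subcrit q hq β hβ0 hβ
  have hd := Dfun_deriv q hq β
  have h1 : ∀ᶠ x in nhdsWithin (1 / (q : ℝ)) (Set.Ioi (1 / (q : ℝ))),
      slope (Dfun q β) (1 / q) x < -(3 / 4 * kap q β) := by
    have := (hasDerivAt_iff_tendsto_slope.1 hd).eventually
      (gt_mem_nhds (by linarith : -(kap q β) < -(3 / 4 * kap q β)))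
    exact this.filter_mono (nhdsWithin_mono _ (fun x hx => ne_of_gt hx))
  obtain ⟨r, hr, hr1⟩ := (mem_nhdsGT_iff_exists_Ioo_subset).1 h1
  have hr : 1 / (q : ℝ) < r := hr
  obtain ⟨c, hc, hc1⟩ : ∃ c : ℝ, 0 < c ∧ ∀ x : ℝ, r ≤ x → x ≤ 1 → Dfun q β x ≤ -c := by
    by_cases hr2 : r ≤ 1
    · obtain ⟨x0, hx0, hm⟩ := isCompact_Icc.exists_isMaxOn (Set.nonempty_Icc.2 hr2)
        (Dfun_cont q hq β).continuousOn
      refine ⟨-Dfun q β x0, ?_, fun x h1 h2 => ?_⟩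
      · have := hneg x0 (hr.trans_le hx0.1) hx0.2; linarith
      · have := hm ⟨h1, h2⟩
        simp only [Set.mem_setOf_eq] at this
        linarith
    · exact ⟨1, one_pos, fun x h1 h2 => absurd (h1.trans h2) hr2⟩
  refine ⟨3 / 2 * kap q β / c, by positivity, fun y hy hy1 => ?_⟩
  rcases eq_or_lt_of_le hy with h0 | h0
  · rw [← h0]; simp
  have hD := hneg (1 / q + y) (by linarith) hy1
  by_cases hyr : 1 / (q : ℝ) + y < r
  · have := hr1 ⟨by linarith, hyr⟩
    simp only [Set.mem_setOf_eq] at this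
    rw [slope_def_field, Dfun_base q hq, sub_zero, add_sub_cancel_left, div_lt_iff₀ h0] at this
    have h3 : 3 / 2 * kap q β / c * y ^ 2 * Dfun q β (1 / q + y) ≤ 0 :=
      mul_nonpos_of_nonneg_of_nonpos (by positivity) hD.le
    nlinarith
  · have := hc1 (1 / q + y) (not_lt.1 hyr) hy1
    have h3 : 2 * y * Dfun q β (1 / q + y) ≤ 0 :=
      mul_nonpos_of_nonneg_of_nonpos (by positivity) hD.le
    have h4 : 3 / 2 * kap q β / c * y ^ 2 * Dfun q β (1 / q + y) ≤
        3 / 2 * kap q β / c * y ^ 2 * (-c) := mul_le_mul_of_nonneg_left this (by positivity)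
    have h5 : 3 / 2 * kap q β / c * y ^ 2 * (-c) = -(3 / 2 * kap q β) * y ^ 2 := by field_simp
    nlinarith

/-! ### Scalar Lyapunov function -/

noncomputable def phi (K y : ℝ) : ℝ := max y 0 ^ 2 * Real.exp (K * max y 0)

noncomputable def dphi (K y : ℝ) : ℝ := (2 * max y 0 + K * max y 0 ^ 2) * Real.exp (K * max y 0)

lemma phi_nonneg (K y : ℝ) : 0 ≤ phi K y := by unfold phi; positivity

lemma dphi_nonneg {K : ℝ} (hK : 0 ≤ K) (y : ℝ) : 0 ≤ dphi K y := by unfold dphi; positivity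

lemma sq_le_phi {K : ℝ} (hK : 0 ≤ K) (y : ℝ) : max y 0 ^ 2 ≤ phi K y := by
  unfold phi
  refine le_mul_of_one_le_right (sq_nonneg _) ?_
  rw [Real.one_le_exp_iff]; positivity

lemma phi_le {K : ℝ} (hK : 0 ≤ K) {y : ℝ} (hy : y ≤ 1) : phi K y ≤ Real.exp K * max y 0 ^ 2 := by
  unfold phi
  rw [mul_comm]
  refine mul_le_mul_of_nonneg_right (Real.exp_le_exp.2 ?_) (sq_nonneg _)
  exact mul_le_of_le_one_right hK (max_le hy zero_le_one)

lemma dphi_le {K : ℝ} (hK : 0 ≤ K) {y : ℝ} (hy : y ≤ 1) : dphi K y ≤ (2 + K) * Real.exp K := by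
  unfold dphi
  have h0 : 0 ≤ max y 0 := le_max_right _ _
  have h1 : max y 0 ≤ 1 := max_le hy zero_le_one
  refine mul_le_mul ?_ (Real.exp_le_exp.2 (mul_le_of_le_one_right hK h1)) (Real.exp_pos _).le
    (by positivity)
  have h2 : K * max y 0 ^ 2 ≤ K := mul_le_of_le_one_right hK (pow_le_one₀ h0 h1)
  linarith

lemma exp_taylor (x R : ℝ) (hx : |x| ≤ R) : |Real.exp x - 1 - x| ≤ x ^ 2 * Real.exp R := by
  have h0 := Real.add_one_le_exp x
  have h1 : Real.exp x * (1 - x) ≤ 1 := by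
    have := Real.add_one_le_exp (-x)
    have h2 := mul_le_mul_of_nonneg_left this (Real.exp_pos x).le
    rw [← Real.exp_add, add_neg_cancel, Real.exp_zero] at h2
    linarith
  rw [abs_of_nonneg (by linarith)]
  have hxR := (le_abs_self x).trans hx
  have hR : 0 ≤ R := (abs_nonneg x).trans hx
  have hR1 : 1 ≤ Real.exp R := Real.one_le_exp hR
  have h5 : Real.exp x ≤ Real.exp R := Real.exp_le_exp.2 hxR
  rcases le_total 0 x with hx0 | hx0
  · have h3 : Real.exp x - 1 ≤ x * Real.exp x := by linarith
    have h4 : x * (x * Real.exp x) ≤ x * (x * Real.exp R) := by gcongr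
    nlinarith
  · have h3 : x * Real.exp x - x ≤ x * x := by nlinarith
    nlinarith [mul_self_nonneg x]

/-- second order upper bound for `phi` -/
lemma phi_taylor {K : ℝ} (hK : 0 ≤ K) : ∃ C : ℝ, 0 < C ∧ ∀ y h : ℝ, |y| ≤ 1 → |h| ≤ 1 → y + h ≤ 1 →
    phi K (y + h) ≤ phi K y + dphi K y * h + C * h ^ 2 := by
  set T := K ^ 2 * Real.exp K with hT
  have hT0 : 0 ≤ T := by positivity
  refine ⟨Real.exp K * (1 + 3 * K + 4 * T) + 1, by positivity, fun y h hy hh hyh => ?_⟩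
  have hy1 := abs_le.1 hy
  have hh1 := abs_le.1 hh
  by_cases h0 : 0 ≤ y
  · have hm : max y 0 = y := max_eq_left h0
    have hle : phi K (y + h) ≤ (y + h) ^ 2 * Real.exp (K * (y + h)) := by
      unfold phi
      by_cases h1 : 0 ≤ y + h
      · rw [max_eq_left h1]
      · rw [max_eq_right (not_le.1 h1).le]; simp; positivity
    have hexp : Real.exp (K * h) ≤ 1 + K * h + T * h ^ 2 := by
      have := exp_taylor (K * h) K (by rw [abs_mul, abs_of_nonneg hK]; exact mul_le_of_le_one_right hK hh)
      have := (abs_le.1 this).2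
      rw [hT]; linarith
    have e1 : Real.exp (K * (y + h)) = Real.exp (K * y) * Real.exp (K * h) := by
      rw [← Real.exp_add]; congr 1; ring
    have hb : Real.exp (K * y) ≤ Real.exp K := Real.exp_le_exp.2 (mul_le_of_le_one_right hK hy1.2)
    have hpoly : (y + h) ^ 2 * (1 + K * h + T * h ^ 2) ≤
        y ^ 2 + (2 * y + K * y ^ 2) * h + (1 + 3 * K + 4 * T) * h ^ 2 := by
      have i1 : (y + h) ^ 2 ≤ 4 := by nlinarith
      have i2 : (y + h) ^ 2 * (T * h ^ 2) ≤ 4 * (T * h ^ 2) :=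
        mul_le_mul_of_nonneg_right i1 (by positivity)
      have i3 : K * h ^ 2 * (2 * y + h) ≤ K * h ^ 2 * 3 :=
        mul_le_mul_of_nonneg_left (by linarith) (by positivity)
      have e : (y + h) ^ 2 * (1 + K * h + T * h ^ 2) = y ^ 2 + (2 * y + K * y ^ 2) * h + h ^ 2
        + K * h ^ 2 * (2 * y + h) + (y + h) ^ 2 * (T * h ^ 2) := by ring
      rw [e]; linarith
    have hfin : (y + h) ^ 2 * Real.exp (K * (y + h)) ≤
        Real.exp (K * y) * (y ^ 2 + (2 * y + K * y ^ 2) * h + (1 + 3 * K + 4 * T) * h ^ 2) := by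
      rw [e1, mul_left_comm]
      refine mul_le_mul_of_nonneg_left ?_ (Real.exp_pos _).le
      exact (mul_le_mul_of_nonneg_left hexp (sq_nonneg _)).trans hpoly
    refine hle.trans (hfin.trans ?_)
    unfold phi dphi
    rw [hm]
    have := mul_le_mul_of_nonneg_right hb (by positivity : 0 ≤ (1 + 3 * K + 4 * T) * h ^ 2)
    nlinarith [sq_nonneg h]
  · have hm : max y 0 = 0 := max_eq_right (not_le.1 h0).le
    have h2 := phi_le hK hyh
    have h3 : max (y + h) 0 ^ 2 ≤ h ^ 2 := by
      rcases le_total 0 (y + h) with h1 | h1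
      · rw [max_eq_left h1]; nlinarith
      · rw [max_eq_right h1]; nlinarith [sq_nonneg h]
    have h4 : phi K y = 0 := by unfold phi; rw [hm]; simp
    have h5 : dphi K y = 0 := by unfold dphi; rw [hm]; simp
    rw [h4, h5]
    have h6 := mul_le_mul_of_nonneg_left h3 (Real.exp_pos K).le
    have h7 : 0 ≤ Real.exp K * (3 * K + 4 * T) * h ^ 2 := by positivity
    nlinarith [sq_nonneg h]

end PottsAux

namespace PottsAux

variable {q n : ℕ}

/-! ### Proportions -/

noncomputable def pr (σ : Fin n → Fin q) (k : Fin q) : ℝ :=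
  1 / (n : ℝ) * ∑ v : Fin n, if σ v = k then (1 : ℝ) else 0

/-- increment of the count of color `k` when the vertex `p.1` gets color `p.2`. -/
noncomputable def hh (σ : Fin n → Fin q) (k : Fin q) (p : Fin n × Fin q) : ℝ :=
  (if p.2 = k then 1 else 0) - (if σ p.1 = k then 1 else 0)

lemma hh_abs (σ : Fin n → Fin q) (k : Fin q) (p : Fin n × Fin q) : |hh σ k p| ≤ 1 := by
  unfold hh; split_ifs <;> norm_num

lemma pr_nonneg (σ : Fin n → Fin q) (k : Fin q) : 0 ≤ pr σ k :=
  mul_nonneg (by positivity) (sum_nonneg fun v _ => by split_ifs <;> norm_num)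

lemma pr_sum (hn : 0 < n) (σ : Fin n → Fin q) : ∑ k, pr σ k = 1 := by
  have h1 : (n : ℝ) ≠ 0 := by exact_mod_cast hn.ne'
  unfold pr
  rw [← mul_sum, sum_comm]
  simp [h1]

lemma pr_le_one (hn : 0 < n) (σ : Fin n → Fin q) (k : Fin q) : pr σ k ≤ 1 := by
  rw [← pr_sum hn σ]
  exact single_le_sum (f := fun k => pr σ k) (fun j _ => pr_nonneg σ j) (mem_univ k)

lemma cntx_near (hn : 0 < n) (σ : Fin n → Fin q) (u : Fin n) (k : Fin q) :
    |cntx σ u k - n * pr σ k| ≤ 1 := by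
  have h1 : (n : ℝ) ≠ 0 := by exact_mod_cast hn.ne'
  have : n * pr σ k = cntx σ u k + if σ u = k then 1 else 0 := by
    unfold pr cntx
    rw [← mul_assoc, mul_one_div_cancel h1, one_mul, ← add_sum_erase _ _ (mem_univ u),
      ← add_sum_erase univ (fun v => if v ≠ u ∧ σ v = k then (1 : ℝ) else 0) (mem_univ u)]
    simp only [ne_eq, not_true_eq_false, false_and, if_false, zero_add]
    rw [add_comm]
    congr 1
    refine sum_congr rfl fun v hv => ?_
    simp [ne_of_mem_erase hv]
  rw [this]
  split_ifs <;> norm_num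

lemma pr_update (σ : Fin n → Fin q) (p : Fin n × Fin q) (k : Fin q) :
    pr (Function.update σ p.1 p.2) k = pr σ k + hh σ k p / n := by
  obtain ⟨u, j⟩ := p
  unfold pr hh
  rw [← add_sum_erase _ _ (mem_univ u),
      ← add_sum_erase univ (fun v => if σ v = k then (1 : ℝ) else 0) (mem_univ u)]
  have : ∑ v ∈ univ.erase u, (if Function.update σ u j v = k then (1 : ℝ) else 0) =
      ∑ v ∈ univ.erase u, (if σ v = k then (1 : ℝ) else 0) :=
    sum_congr rfl fun v hv => by rw [Function.update_of_ne (ne_of_mem_erase hv)]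
  simp only [this, Function.update_self]
  ring

lemma Av_hh (hq : 0 < q) (hn : 0 < n) (β : ℝ) (σ : Fin n → Fin q) (k : Fin q) :
    Av β σ (hh σ k) = (1 / (n : ℝ)) * ∑ u, rp β σ u k - pr σ k := by
  rw [Av_apply]; unfold pr hh
  rw [← mul_sub, ← sum_sub_distrib]
  congr 1
  refine sum_congr rfl fun u _ => ?_
  simp only [mul_sub, sum_sub_distrib]
  have e := sum_mul univ (fun x => rp β σ u x) (if σ u = k then (1 : ℝ) else 0)
  rw [rp_sum hq, one_mul] at e
  rw [← e]
  simp

/-- centered proportions -/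
noncomputable def yy (σ : Fin n → Fin q) (k : Fin q) : ℝ := pr σ k - 1 / q

noncomputable def VV (σ : Fin n → Fin q) : ℝ := ∑ k, yy σ k ^ 2

lemma VV_nonneg (σ : Fin n → Fin q) : 0 ≤ VV σ := sum_nonneg fun _ _ => sq_nonneg _

lemma yy_sum (hq : 0 < q) (hn : 0 < n) (σ : Fin n → Fin q) : ∑ k, yy σ k = 0 := by
  have h1 : (q : ℝ) ≠ 0 := by exact_mod_cast hq.ne'
  unfold yy
  rw [sum_sub_distrib, pr_sum hn]; simp [h1]

lemma yy_abs (hq : 0 < q) (hn : 0 < n) (σ : Fin n → Fin q) (k : Fin q) : |yy σ k| ≤ 1 := by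
  have h1 : (1 : ℝ) ≤ q := by exact_mod_cast hq
  have := pr_nonneg σ k
  have := pr_le_one hn σ k
  have h2 : 1 / (q : ℝ) ≤ 1 := by rw [div_le_one (by linarith)]; exact h1
  have h3 : 0 ≤ 1 / (q : ℝ) := by positivity
  unfold yy
  rw [abs_le]; constructor <;> linarith

lemma yy_update (σ : Fin n → Fin q) (p : Fin n × Fin q) (k : Fin q) :
    yy (Function.update σ p.1 p.2) k = yy σ k + hh σ k p / n := by
  unfold yy; rw [pr_update]; ring

/-! ### Softmax estimates -/

lemma sm_shift (x : Fin q → ℝ) (c : ℝ) (k : Fin q) : sm (fun j => x j + c) k = sm x k := by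
  unfold sm
  simp only [Real.exp_add]
  rw [← sum_mul, mul_div_mul_right _ _ (Real.exp_pos c).ne']

lemma sm_taylor (hq : 0 < q) (y : Fin q → ℝ) (R : ℝ) (hy : ∀ j, |y j| ≤ R) (hs : ∑ j, y j = 0)
    (k : Fin q) : |sm y k - 1 / q - y k / q| ≤ (2 + R) * Real.exp R * ∑ j, y j ^ 2 := by
  have h1 : (1 : ℝ) ≤ q := by exact_mod_cast hq
  have h0 : (0 : ℝ) < q := by linarith
  set N := ∑ j, Real.exp (y j) with hN
  set r : Fin q → ℝ := fun j => Real.exp (y j) - 1 - y j with hr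
  have hr0 : ∀ j, 0 ≤ r j := fun j => by
    have := Real.add_one_le_exp (y j)
    change 0 ≤ Real.exp (y j) - 1 - y j
    linarith
  have hr1 : ∀ j, r j ≤ y j ^ 2 * Real.exp R := fun j =>
    (le_abs_self _).trans (exp_taylor (y j) R (hy j))
  have hNr : N = q + ∑ j, r j := by
    change ∑ j, Real.exp (y j) = q + ∑ j, (Real.exp (y j) - 1 - y j)
    rw [sum_sub_distrib, sum_sub_distrib, hs]; simp
  set s := ∑ j, r j with hs'
  have hs0 : 0 ≤ s := sum_nonneg fun j _ => hr0 j
  have hs1 : s ≤ Real.exp R * ∑ j, y j ^ 2 := by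
    rw [mul_comm, sum_mul]; exact sum_le_sum fun j _ => hr1 j
  have hrk : r k ≤ s := single_le_sum (f := r) (fun j _ => hr0 j) (mem_univ k)
  have hN0 : (q : ℝ) ≤ N := by linarith
  have hNpos : 0 < N := by linarith
  have hk := abs_le.1 (hy k)
  have e : sm y k - 1 / q - y k / q = (q * r k - s * (1 + y k)) / (q * N) := by
    have : Real.exp (y k) = 1 + y k + r k := by change _ = 1 + y k + (Real.exp (y k) - 1 - y k); ring
    unfold sm
    rw [← hN, this]
    have hNq : N * (1 + y k) = q * (1 + y k) + s * (1 + y k) := by rw [hNr]; ring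
    clear_value N s r
    have hqN : q * N ≠ 0 := (mul_pos h0 hNpos).ne'
    rw [eq_div_iff hqN]
    have e1 : ((1 + y k + r k) / N - 1 / q - y k / q) * (q * N) =
        q * (1 + y k + r k) - N * (1 + y k) := by
      field_simp [hNpos.ne', h0.ne']
      ring
    rw [e1, hNq]; ring
  clear_value N s r
  rw [e, abs_div, abs_of_pos (mul_pos h0 hNpos), div_le_iff₀ (mul_pos h0 hNpos)]
  have hR : 0 ≤ R := (abs_nonneg _).trans (hy k)
  have i1 : |q * r k - s * (1 + y k)| ≤ q * (s * (2 + R)) := by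
    have a1 : s * (1 + y k) ≤ q * (s * (1 + R)) := by
      calc s * (1 + y k) ≤ s * (1 + R) := by gcongr; linarith
        _ ≤ q * (s * (1 + R)) := le_mul_of_one_le_left (by positivity) h1
    have a2 : -(q * (s * (1 + R))) ≤ s * (1 + y k) := by
      have : -(s * (1 + R)) ≤ s * (1 + y k) := by nlinarith
      have : s * (1 + R) ≤ q * (s * (1 + R)) := le_mul_of_one_le_left (by positivity) h1
      linarith
    have a3 : q * r k ≤ q * s := by gcongr
    have a4 : 0 ≤ q * r k := mul_nonneg h0.le (hr0 k)
    have a5 : 0 ≤ q * s := by positivity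
    rw [abs_le]; constructor <;> nlinarith
  refine i1.trans ?_
  have i2 : s * (2 + R) ≤ (2 + R) * Real.exp R * ∑ j, y j ^ 2 := by
    rw [mul_comm s, mul_assoc]; gcongr
  have i3 : 0 ≤ (2 + R) * Real.exp R * ∑ j, y j ^ 2 := by positivity
  calc q * (s * (2 + R)) ≤ q * ((2 + R) * Real.exp R * ∑ j, y j ^ 2) := by gcongr
    _ ≤ _ := by
      rw [mul_comm]
      refine mul_le_mul_of_nonneg_left ?_ i3
      nlinarith

lemma sm_jensen (hq : 3 ≤ q) (β : ℝ) (x : Fin q → ℝ) (hx : ∑ j, x j = 1) (k : Fin q) :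
    sm (fun j => 2 * β * x j) k ≤ x k + Dfun q β (x k) := by
  have hq' : (3 : ℝ) ≤ q := by exact_mod_cast hq
  unfold Dfun
  set m := 2 * β * (1 - (q : ℝ) * x k) / ((q : ℝ) - 1) with hm
  have h1 : 0 < (q : ℝ) - 1 := by linarith
  rw [← add_assoc, add_neg_cancel, zero_add]
  have e : sm (fun j => 2 * β * x j) k = (1 + ∑ j ∈ univ.erase k, Real.exp (2 * β * (x j - x k)))⁻¹ := by
    unfold sm
    rw [← add_sum_erase _ _ (mem_univ k), ← one_div, div_eq_div_iff]
    · rw [mul_add, mul_one, one_mul, mul_sum]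
      congr 1
      refine sum_congr rfl fun j _ => ?_
      rw [← Real.exp_add]; congr 1; ring
    · exact (add_pos_of_pos_of_nonneg (Real.exp_pos _) (sum_nonneg fun _ _ => (Real.exp_pos _).le)).ne'
    · exact (add_pos_of_pos_of_nonneg one_pos (sum_nonneg fun _ _ => (Real.exp_pos _).le)).ne'
  rw [e]
  refine inv_anti₀ (Dfun_den_pos q hq _) ?_
  have hc : ((univ.erase k).card : ℝ) = q - 1 := by
    rw [card_erase_of_mem (mem_univ k), card_univ, Fintype.card_fin, Nat.cast_sub (by omega)]; simp
  have hsx : ∑ j ∈ univ.erase k, x j = 1 - x k := by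
    rw [← add_sum_erase _ _ (mem_univ k)] at hx; linarith
  have : ∑ j ∈ univ.erase k, Real.exp m * (1 + (2 * β * (x j - x k) - m)) ≤
      ∑ j ∈ univ.erase k, Real.exp (2 * β * (x j - x k)) := by
    refine sum_le_sum fun j _ => ?_
    have h2 := Real.add_one_le_exp (2 * β * (x j - x k) - m)
    have h3 := mul_le_mul_of_nonneg_left h2 (Real.exp_pos m).le
    rw [← Real.exp_add, add_sub_cancel] at h3
    linarith
  rw [← mul_sum, sum_add_distrib, sum_sub_distrib, sum_const, sum_const, nsmul_eq_mul, nsmul_eq_mul,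
    ← mul_sum, sum_sub_distrib, sum_const, nsmul_eq_mul, hc, hsx] at this
  have e2 : (q - 1) * 1 + (2 * β * (1 - x k - (q - 1) * x k) - ((q : ℝ) - 1) * m) = q - 1 := by
    rw [hm, mul_div_cancel₀ _ h1.ne']; ring
  rw [e2] at this
  linarith

lemma rp_near' (hn : 0 < n) {β : ℝ} (hβ : 0 ≤ β) (σ : Fin n → Fin q) (u : Fin n) (k : Fin q) :
    |rp β σ u k - sm (fun j => 2 * β * pr σ j) k| ≤ C1 β / n := by
  have h1 : (n : ℝ) ≠ 0 := by exact_mod_cast hn.ne'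
  have := rp_near hn hβ σ u (fun j => n * pr σ j) (fun j => cntx_near hn σ u j) k
  have e : (fun j => 2 * β / n * (n * pr σ j)) = (fun j => 2 * β * pr σ j) := by
    ext j; field_simp
  rwa [e] at this

noncomputable def C5 (β : ℝ) : ℝ := (2 + 2 * β) * Real.exp (2 * β) * (4 * β ^ 2) + C1 β

lemma C5_nonneg {β : ℝ} (hβ : 0 ≤ β) : 0 ≤ C5 β := by
  have := C1_nonneg hβ
  unfold C5; positivity

lemma rp_lin (hq : 0 < q) (hn : 0 < n) {β : ℝ} (hβ : 0 ≤ β) (σ : Fin n → Fin q) (u : Fin n)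
    (k : Fin q) : |rp β σ u k - 1 / q - 2 * β / q * yy σ k| ≤ C5 β * (VV σ + 1 / n) := by
  have h0 : (0 : ℝ) < n := by exact_mod_cast hn
  have h1 := rp_near' hn hβ σ u k
  have e1 : sm (fun j => 2 * β * pr σ j) k = sm (fun j => 2 * β * yy σ j) k := by
    rw [← sm_shift (fun j => 2 * β * yy σ j) (2 * β * (1 / q))]
    congr 1; ext j; unfold yy; ring
  have h2 := sm_taylor hq (fun j => 2 * β * yy σ j) (2 * β) (fun j => by
    rw [abs_mul, abs_of_nonneg (by positivity : 0 ≤ 2 * β)]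
    exact mul_le_of_le_one_right (by positivity) (yy_abs hq hn σ j)) (by
    rw [← mul_sum, yy_sum hq hn, mul_zero]) k
  have e2 : ∑ j, (2 * β * yy σ j) ^ 2 = 4 * β ^ 2 * VV σ := by
    unfold VV; rw [mul_sum]; exact sum_congr rfl fun j _ => by ring
  simp only [e2] at h2
  rw [e1] at h1
  have h3 := C1_nonneg hβ
  have h4 := VV_nonneg σ
  have e3 : rp β σ u k - 1 / q - 2 * β / q * yy σ k = (rp β σ u k - sm (fun j => 2 * β * yy σ j) k)
     + (sm (fun j => 2 * β * yy σ j) k - 1 / q - 2 * β * yy σ k / q) := by ring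
  rw [e3]
  refine (abs_add_le _ _).trans ((add_le_add h1 h2).trans ?_)
  unfold C5
  have h5 : 0 ≤ C1 β * VV σ := by positivity
  have h6 : 0 ≤ (2 + 2 * β) * Real.exp (2 * β) * (4 * β ^ 2) * (1 / n) := by positivity
  have e4 : C1 β / n = C1 β * (1 / n) := by ring
  rw [e4]
  nlinarith

lemma rp_upper (hq : 3 ≤ q) (hn : 0 < n) {β : ℝ} (hβ : 0 ≤ β) (σ : Fin n → Fin q) (u : Fin n)
    (k : Fin q) : rp β σ u k ≤ pr σ k + Dfun q β (pr σ k) + C1 β / n := by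
  have h1 := (abs_le.1 (rp_near' hn hβ σ u k)).2
  have h2 := sm_jensen hq β (pr σ) (pr_sum hn σ) k
  linarith

/-! ### The Lyapunov function -/

noncomputable def Phi (K : ℝ) (σ : Fin n → Fin q) : ℝ := ∑ k, phi K (yy σ k)

lemma Phi_nonneg (K : ℝ) (σ : Fin n → Fin q) : 0 ≤ Phi K σ := sum_nonneg fun _ _ => phi_nonneg _ _

lemma Phi_le_V (hq : 0 < q) (hn : 0 < n) {K : ℝ} (hK : 0 ≤ K) (σ : Fin n → Fin q) :
    Phi K σ ≤ Real.exp K * VV σ := by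
  unfold Phi VV
  rw [mul_sum]
  refine sum_le_sum fun k _ => (phi_le hK (abs_le.1 (yy_abs hq hn σ k)).2).trans ?_
  refine mul_le_mul_of_nonneg_left ?_ (Real.exp_pos _).le
  rcases le_total 0 (yy σ k) with h | h
  · rw [max_eq_left h]
  · rw [max_eq_right h]; simp; positivity

lemma Phi_le (hq : 0 < q) (hn : 0 < n) {K : ℝ} (hK : 0 ≤ K) (σ : Fin n → Fin q) :
    Phi K σ ≤ q * Real.exp K := by
  unfold Phi
  calc ∑ k, phi K (yy σ k) ≤ ∑ k : Fin q, Real.exp K := by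
        refine sum_le_sum fun k _ => (phi_le hK (abs_le.1 (yy_abs hq hn σ k)).2).trans ?_
        refine mul_le_of_le_one_right (Real.exp_pos _).le (pow_le_one₀ (le_max_right _ _) ?_)
        exact max_le (abs_le.1 (yy_abs hq hn σ k)).2 zero_le_one
    _ = _ := by simp

lemma V_le_Phi (hq : 0 < q) (hn : 0 < n) {K : ℝ} (hK : 0 ≤ K) (σ : Fin n → Fin q) :
    VV σ ≤ (q : ℝ) ^ 2 * Phi K σ := by
  have hs := yy_sum hq hn σ
  set a : ℝ := ∑ k, max (yy σ k) 0 with ha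
  have ha0 : 0 ≤ a := sum_nonneg fun _ _ => le_max_right _ _
  have h1 : ∀ k, |yy σ k| ≤ a := by
    intro k
    have i1 : max (yy σ k) 0 ≤ a :=
      single_le_sum (f := fun k => max (yy σ k) 0) (fun _ _ => le_max_right _ _) (mem_univ k)
    have i2 : -yy σ k ≤ a := by
      have : 0 = yy σ k + ∑ j ∈ univ.erase k, yy σ j := by
        rw [add_sum_erase _ _ (mem_univ k), hs]
      have i3 : ∑ j ∈ univ.erase k, yy σ j ≤ ∑ j ∈ univ.erase k, max (yy σ j) 0 :=
        sum_le_sum fun j _ => le_max_left _ _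
      have i4 : ∑ j ∈ univ.erase k, max (yy σ j) 0 ≤ a :=
        sum_le_sum_of_subset_of_nonneg (erase_subset _ _) (fun _ _ _ => le_max_right _ _)
      linarith
    exact abs_le.2 ⟨by linarith, (le_max_left _ _).trans i1⟩
  have h2 : a ^ 2 ≤ q * ∑ k, max (yy σ k) 0 ^ 2 := by
    have := sq_sum_le_card_mul_sum_sq (s := univ) (f := fun k => max (yy σ k) 0)
    simpa using this
  have h3 : VV σ ≤ q * a ^ 2 := by
    unfold VV
    calc ∑ k, yy σ k ^ 2 ≤ ∑ k : Fin q, a ^ 2 := sum_le_sum fun k _ => sq_le_sq' (by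
          linarith [(abs_le.1 (h1 k)).1]) (abs_le.1 (h1 k)).2
      _ = _ := by simp
  have h4 : ∑ k, max (yy σ k) 0 ^ 2 ≤ Phi K σ := sum_le_sum fun k _ => sq_le_phi hK _
  have hq0 : (0 : ℝ) ≤ q := by positivity
  calc VV σ ≤ q * a ^ 2 := h3
    _ ≤ q * (q * Phi K σ) := by
        refine mul_le_mul_of_nonneg_left (h2.trans ?_) hq0
        exact mul_le_mul_of_nonneg_left h4 hq0
    _ = _ := by ring

/-- The good Lyapunov parameter. -/
def GoodK (q : ℕ) (β K : ℝ) : Prop := 0 < K ∧ ∀ y : ℝ, 0 ≤ y → 1 / (q : ℝ) + y ≤ 1 →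
      (2 * y + K * y ^ 2) * Dfun q β (1 / q + y) ≤ -(3 / 2 * kap q β) * y ^ 2

lemma dphi_D {β K : ℝ} (hK : GoodK q β K) (hn : 0 < n) (σ : Fin n → Fin q)
    (k : Fin q) : dphi K (yy σ k) * Dfun q β (pr σ k) ≤ -(3 / 2 * kap q β) * phi K (yy σ k) := by
  have e : pr σ k = 1 / q + yy σ k := by unfold yy; ring
  unfold dphi phi
  rcases le_total 0 (yy σ k) with h | h
  · rw [max_eq_left h, e]
    have := hK.2 (yy σ k) h (by rw [← e]; exact pr_le_one hn σ k)
    have := mul_le_mul_of_nonneg_right this (Real.exp_pos (K * yy σ k)).le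
    nlinarith
  · rw [max_eq_right h]; simp

lemma drift_Phi (hq : 3 ≤ q) {β K : ℝ} (hβ : 0 ≤ β) (hK : GoodK q β K) : ∃ C : ℝ, 0 < C ∧
    ∀ n : ℕ, 0 < n → ∀ σ : Fin n → Fin q,
      Pop β (Phi K) σ ≤ (1 - 3 / 2 * kap q β / n) * Phi K σ + C / n ^ 2 := by
  have hq0 : 0 < q := by omega
  have hqr : (0 : ℝ) < q := by exact_mod_cast hq0
  obtain ⟨C, hC, hT⟩ := phi_taylor hK.1.le
  have hc1 := C1_nonneg hβ
  have hK0 := hK.1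
  refine ⟨q * (C + (2 + K) * Real.exp K * C1 β), by positivity, fun n hn σ => ?_⟩
  have hE := isExp_Av hq0 hn β σ
  have hnr : (0 : ℝ) < n := by exact_mod_cast hn
  have hn1 : (1 : ℝ) ≤ n := by exact_mod_cast hn
  have step : ∀ k, Av β σ (fun p => phi K (yy (Function.update σ p.1 p.2) k)) ≤
      (1 - 3 / 2 * kap q β / n) * phi K (yy σ k) + (C + (2 + K) * Real.exp K * C1 β) / n ^ 2 := by
    intro k
    have h1 : Av β σ (fun p => phi K (yy (Function.update σ p.1 p.2) k)) ≤
        Av β σ (fun p => dphi K (yy σ k) / n * hh σ k p + (phi K (yy σ k) + C / n ^ 2)) := by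
      refine hE.mono fun p => ?_
      have e1 := yy_update σ p k
      have i1 := yy_abs hq0 hn (Function.update σ p.1 p.2) k
      rw [e1] at i1 ⊢
      have i3 := hh_abs σ k p
      have i2 : |hh σ k p / n| ≤ 1 := by
        rw [abs_div, abs_of_pos hnr, div_le_one hnr]; exact i3.trans hn1
      have := hT (yy σ k) (hh σ k p / n) (yy_abs hq0 hn σ k) i2 (abs_le.1 i1).2
      have i4 : C * (hh σ k p / n) ^ 2 ≤ C / n ^ 2 := by
        rw [div_pow, ← mul_div_assoc]
        gcongr
        refine mul_le_of_le_one_right hC.le ?_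
        rw [← sq_abs]; exact pow_le_one₀ (abs_nonneg _) i3
      have e2 : dphi K (yy σ k) * (hh σ k p / n) = dphi K (yy σ k) / n * hh σ k p := by ring
      linarith
    rw [hE.affine, Av_hh hq0 hn] at h1
    have h2 : (1 / (n : ℝ)) * ∑ u, rp β σ u k - pr σ k ≤ Dfun q β (pr σ k) + C1 β / n := by
      have : ∑ u, rp β σ u k ≤ ∑ u : Fin n, (pr σ k + Dfun q β (pr σ k) + C1 β / n) :=
        sum_le_sum fun u _ => rp_upper hq hn hβ σ u k
      rw [sum_const, card_univ, Fintype.card_fin, nsmul_eq_mul] at this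
      have := mul_le_mul_of_nonneg_left this (by positivity : 0 ≤ 1 / (n : ℝ))
      rw [← mul_assoc, one_div_mul_cancel hnr.ne', one_mul] at this
      linarith
    have hd0 := dphi_nonneg hK0.le (yy σ k)
    have hd1 := dphi_le hK0.le (abs_le.1 (yy_abs hq0 hn σ k)).2
    have h3 := mul_le_mul_of_nonneg_left h2 (div_nonneg hd0 hnr.le)
    have h4 := dphi_D hK hn σ k
    have h5 : dphi K (yy σ k) / n * (Dfun q β (pr σ k) + C1 β / n) ≤
        (-(3 / 2 * kap q β) * phi K (yy σ k)) / n + (2 + K) * Real.exp K * C1 β / n ^ 2 := by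
      have e : dphi K (yy σ k) / n * (Dfun q β (pr σ k) + C1 β / n) =
         dphi K (yy σ k) * Dfun q β (pr σ k) / n + dphi K (yy σ k) * C1 β / n ^ 2 := by
        field_simp
      rw [e]
      gcongr
    have e6 : (1 - 3 / 2 * kap q β / n) * phi K (yy σ k) +
      (C + (2 + K) * Real.exp K * C1 β) / n ^ 2 = (-(3 / 2 * kap q β) * phi K (yy σ k)) / n +
      (2 + K) * Real.exp K * C1 β / n ^ 2 + (phi K (yy σ k) + C / n ^ 2) := by ring
    rw [e6]
    linarith
  have e0 : Pop β (Phi K) σ = ∑ k, Av β σ (fun p => phi K (yy (Function.update σ p.1 p.2) k)) := by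
    rw [Pop_apply, ← lin_sum]; rfl
  rw [e0]
  refine (sum_le_sum fun k _ => step k).trans (le_of_eq ?_)
  rw [sum_add_distrib, ← mul_sum]
  unfold Phi
  simp
  ring

end PottsAux

namespace PottsAux

variable {q n : ℕ}

/-! ### Moment bounds -/

lemma kap_le_one (hq : 0 < q) {β : ℝ} (hβ : 0 ≤ β) : kap q β ≤ 1 := by
  unfold kap
  have : 0 ≤ 2 * β / q := by positivity
  linarith

lemma Emu_pow (hq : 0 < q) (hn : 0 < n) (β : ℝ) (f : (Fin n → Fin q) → ℝ) (t : ℕ) :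
    Emu q n β ((Pop β ^ t) f) = Emu q n β f := by
  induction t with
  | zero => simp
  | succ t ih => rw [pow_succ', Module.End.mul_apply, Emu_Pop hq hn, ih]

lemma rate_bounds {κ : ℝ} (hk : 0 < κ) (hk1 : κ ≤ 1) (hn : 2 ≤ n) :
    0 ≤ 1 - 3 / 2 * κ / n ∧ 1 - 3 / 2 * κ / n < 1 ∧ 0 ≤ 1 - κ / n ∧ 1 - κ / n < 1 := by
  have hn' : (2 : ℝ) ≤ n := by exact_mod_cast hn
  have h1 : 3 / 2 * κ / n ≤ 1 := by rw [div_le_one (by linarith)]; linarith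
  have h2 : κ / n ≤ 1 := by rw [div_le_one (by linarith)]; linarith
  have h3 : 0 < κ / n := by positivity
  have h4 : 0 < 3 / 2 * κ / n := by positivity
  exact ⟨by linarith, by linarith, by linarith, by linarith⟩

lemma Phi_moments (hq : 3 ≤ q) {β K : ℝ} (hβ : 0 ≤ β) (hk : 0 < kap q β) (hK : GoodK q β K) :
    ∃ C : ℝ, 0 < C ∧ ∀ n : ℕ, 2 ≤ n →
      (∀ (σ : Fin n → Fin q) t, (Pop β ^ t) (Phi K) σ ≤
        C * ((1 - 3 / 2 * kap q β / n) ^ t + 1 / n)) ∧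
      Emu q n β (Phi K) ≤ C / n := by
  have hq0 : 0 < q := by omega
  have hqr : (0 : ℝ) < q := by exact_mod_cast hq0
  obtain ⟨C, hC, hd⟩ := drift_Phi hq hβ hK
  refine ⟨q * Real.exp K + C / (3 / 2 * kap q β), by positivity, fun n hn => ?_⟩
  have hn0 : 0 < n := by omega
  have hnr : (0 : ℝ) < n := by exact_mod_cast hn0
  obtain ⟨r0, r1, -, -⟩ := rate_bounds (n := n) hk (kap_le_one hq0 hβ) hn
  have e1 : C / n ^ 2 / (1 - (1 - 3 / 2 * kap q β / n)) = C / (3 / 2 * kap q β) * (1 / n) := by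
    field_simp; ring
  have h0 : 0 ≤ C / (3 / 2 * kap q β) := by positivity
  have hp0 : 0 ≤ q * Real.exp K := by positivity
  constructor
  · intro σ t
    have := drift_iter (isMk_Pop hq0 hn0 β) (Phi K) _ _ r0 r1 (hd n hn0) (by positivity) t σ
    rw [e1] at this
    have h1 := Phi_le hq0 hn0 hK.1.le σ
    have h2 : 0 ≤ (1 - 3 / 2 * kap q β / n) ^ t := pow_nonneg r0 t
    have h3 := mul_le_mul_of_nonneg_left h1 h2
    have h4 : 0 ≤ C / (3 / 2 * kap q β) * (1 - 3 / 2 * kap q β / n) ^ t := by positivity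
    have h5 : 0 ≤ q * Real.exp K * (1 / n) := by positivity
    nlinarith
  · have h1 := (isExp_Emu (n := n) hq0 β).mono (hd n hn0)
    rw [(isExp_Emu (n := n) hq0 β).affine] at h1
    have h1' : Emu q n β (Pop β (Phi K)) ≤
      (1 - 3 / 2 * kap q β / n) * Emu q n β (Phi K) + C / n ^ 2 := h1
    rw [Emu_Pop hq0 hn0] at h1'
    have h2 : 3 / 2 * kap q β / n * Emu q n β (Phi K) ≤ C / n ^ 2 := by linarith
    have h3 : Emu q n β (Phi K) ≤ C / (3 / 2 * kap q β) / n := by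
      have e : 3 / 2 * kap q β / n * Emu q n β (Phi K) = Emu q n β (Phi K) * (3 / 2 * kap q β / n) := by ring
      rw [e, ← le_div_iff₀ (by positivity)] at h2
      refine h2.trans (le_of_eq ?_)
      field_simp
    rw [add_div]
    have : 0 ≤ q * Real.exp K / n := by positivity
    linarith

/-! ### Maximal coupling -/

noncomputable def ov (p r : Fin q → ℝ) : ℝ := ∑ k, max (p k - r k) 0

noncomputable def cpl (p r : Fin q → ℝ) (k l : Fin q) : ℝ :=
  (if k = l then min (p k) (r k) else 0) + max (p k - r k) 0 * max (r l - p l) 0 / ov p r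

lemma ov_nonneg (p r : Fin q → ℝ) : 0 ≤ ov p r := sum_nonneg fun _ _ => le_max_right _ _

lemma max_min_add (a b : ℝ) : min a b + max (a - b) 0 = a := by
  rcases le_total a b with h | h
  · rw [min_eq_left h, max_eq_right (by linarith)]; ring
  · rw [min_eq_right h, max_eq_left (by linarith)]; ring

lemma ov_symm (p r : Fin q → ℝ) (h : ∑ k, p k = ∑ k, r k) : ov r p = ov p r := by
  unfold ov
  have : ∀ k, max (p k - r k) 0 - max (r k - p k) 0 = p k - r k := by
    intro k
    have h1 := max_min_add (p k) (r k)
    have h2 := max_min_add (r k) (p k)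
    rw [min_comm] at h2
    linarith
  have h3 := sum_congr rfl (fun k (_ : k ∈ (univ : Finset (Fin q))) => this k)
  rw [sum_sub_distrib, sum_sub_distrib] at h3
  linarith

lemma ov_abs (p r : Fin q → ℝ) (h : ∑ k, p k = ∑ k, r k) : ov p r = 1 / 2 * ∑ k, |p k - r k| := by
  have h1 := ov_symm p r h
  have : ∀ k, |p k - r k| = max (p k - r k) 0 + max (r k - p k) 0 := by
    intro k
    rcases le_total (p k) (r k) with h | h
    · rw [max_eq_right (by linarith), max_eq_left (by linarith), abs_of_nonpos (by linarith)]; ring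
    · rw [max_eq_left (by linarith), max_eq_right (by linarith), abs_of_nonneg (by linarith)]; ring
  have h3 := sum_congr rfl (fun k (_ : k ∈ (univ : Finset (Fin q))) => this k)
  rw [sum_add_distrib] at h3
  change _ = ov p r + ov r p at h3
  linarith

lemma ov_zero (p r : Fin q → ℝ) (h : ov p r = 0) (k : Fin q) : max (p k - r k) 0 = 0 :=
  (sum_eq_zero_iff_of_nonneg (fun _ _ => le_max_right _ _)).1 h k (mem_univ k)

lemma cpl_fst (p r : Fin q → ℝ) (h : ∑ k, p k = ∑ k, r k) (k : Fin q) : ∑ l, cpl p r k l = p k := by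
  unfold cpl
  rw [sum_add_distrib, ← sum_div, ← mul_sum]
  change _ + max (p k - r k) 0 * ov r p / ov p r = _
  rw [ov_symm p r h]
  simp only [sum_ite_eq, mem_univ, if_true]
  by_cases h0 : ov p r = 0
  · rw [h0, div_zero, add_zero]
    have h1 := max_min_add (p k) (r k)
    rw [ov_zero p r h0 k] at h1
    linarith
  · rw [mul_div_cancel_right₀ _ h0, max_min_add]

lemma cpl_snd (p r : Fin q → ℝ) (h : ∑ k, p k = ∑ k, r k) (l : Fin q) : ∑ k, cpl p r k l = r l := by
  unfold cpl
  rw [sum_add_distrib, ← sum_div, ← sum_mul]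
  change _ + ov p r * max (r l - p l) 0 / ov p r = _
  simp only [sum_ite_eq', mem_univ, if_true]
  have h1 := max_min_add (r l) (p l)
  rw [min_comm] at h1
  by_cases h0 : ov p r = 0
  · rw [h0, div_zero, add_zero]
    rw [ov_zero r p (by rw [ov_symm p r h, h0]) l] at h1
    linarith
  · rw [mul_div_cancel_left₀ _ h0, h1]

lemma cpl_nonneg (p r : Fin q → ℝ) (hp : ∀ k, 0 ≤ p k) (hr : ∀ k, 0 ≤ r k) (k l : Fin q) :
    0 ≤ cpl p r k l := by
  unfold cpl
  refine add_nonneg ?_ (div_nonneg (mul_nonneg (le_max_right _ _) (le_max_right _ _)) (ov_nonneg p r))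
  split_ifs
  · exact le_min (hp k) (hr k)
  · exact le_rfl

lemma cpl_off (p r : Fin q → ℝ) (h : ∑ k, p k = ∑ k, r k) :
    ∑ k, ∑ l, cpl p r k l * (if k ≠ l then 1 else 0) ≤ ov p r := by
  have h1 : ∀ k l, cpl p r k l * (if k ≠ l then 1 else 0) ≤
      max (p k - r k) 0 * max (r l - p l) 0 / ov p r := by
    intro k l
    unfold cpl
    have := div_nonneg (mul_nonneg (le_max_right (p k - r k) 0) (le_max_right (r l - p l) 0)) (ov_nonneg p r)
    by_cases hkl : k = l
    · simpa [hkl] using this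
    · simp [hkl]
  calc _ ≤ ∑ k, ∑ l, max (p k - r k) 0 * max (r l - p l) 0 / ov p r :=
        sum_le_sum fun k _ => sum_le_sum fun l _ => h1 k l
    _ = ov p r * ov r p / ov p r := by
        unfold ov
        rw [sum_mul_sum]
        simp only [← sum_div]
    _ ≤ ov p r := by
        rw [ov_symm p r h]
        by_cases h0 : ov p r = 0
        · rw [h0]; simp
        · rw [mul_div_cancel_right₀ _ h0]

/-! ### The coupled chain -/

noncomputable def cw (β : ℝ) (x y : Fin n → Fin q) (u : Fin n) : Fin q → Fin q → ℝ :=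
  cpl (rp β x u) (rp β y u)

noncomputable def Qop (q n : ℕ) (β : ℝ) : ((Fin n → Fin q) × (Fin n → Fin q) → ℝ) →ₗ[ℝ]
    ((Fin n → Fin q) × (Fin n → Fin q) → ℝ) where
  toFun F z := (1 / (n : ℝ)) * ∑ u, ∑ k, ∑ l, cw β z.1 z.2 u k l *
    F (Function.update z.1 u k, Function.update z.2 u l)
  map_add' f g := by
    ext z
    simp only [Pi.add_apply, mul_add, sum_add_distrib]
  map_smul' c f := by
    ext z
    simp only [Pi.smul_apply, smul_eq_mul, RingHom.id_apply, mul_sum]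
    exact sum_congr rfl fun u _ => sum_congr rfl fun k _ => sum_congr rfl fun l _ => by ring

lemma Qop_apply (β : ℝ) (F : (Fin n → Fin q) × (Fin n → Fin q) → ℝ)
    (z : (Fin n → Fin q) × (Fin n → Fin q)) : Qop q n β F z =
    (1 / (n : ℝ)) * ∑ u, ∑ k, ∑ l, cw β z.1 z.2 u k l *
      F (Function.update z.1 u k, Function.update z.2 u l) := rfl

lemma rp_sum_eq (hq : 0 < q) (β : ℝ) (x y : Fin n → Fin q) (u : Fin n) :
    ∑ k, rp β x u k = ∑ k, rp β y u k := by rw [rp_sum hq, rp_sum hq]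

lemma Qop_fst (hq : 0 < q) (β : ℝ) (f : (Fin n → Fin q) → ℝ) :
    Qop q n β (fun z => f z.1) = fun z => Pop β f z.1 := by
  ext z
  rw [Qop_apply, Pop_apply, Av_apply]
  congr 1
  refine sum_congr rfl fun u _ => sum_congr rfl fun k _ => ?_
  dsimp only
  rw [← sum_mul]; unfold cw
  rw [cpl_fst _ _ (rp_sum_eq hq β _ _ u)]

lemma Qop_snd (hq : 0 < q) (β : ℝ) (f : (Fin n → Fin q) → ℝ) :
    Qop q n β (fun z => f z.2) = fun z => Pop β f z.2 := by
  ext z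
  rw [Qop_apply, Pop_apply, Av_apply]
  congr 1
  refine sum_congr rfl fun u _ => ?_
  rw [sum_comm]
  refine sum_congr rfl fun k _ => ?_
  dsimp only
  rw [← sum_mul]; unfold cw
  rw [cpl_snd _ _ (rp_sum_eq hq β _ _ u)]

lemma Qop_pow_fst (hq : 0 < q) (β : ℝ) (f : (Fin n → Fin q) → ℝ) (t : ℕ) :
    (Qop q n β ^ t) (fun z => f z.1) = fun z => (Pop β ^ t) f z.1 := by
  induction t generalizing f with
  | zero => simp
  | succ t ih => rw [pow_succ, Module.End.mul_apply, Qop_fst hq, ih, pow_succ, Module.End.mul_apply]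

lemma Qop_pow_snd (hq : 0 < q) (β : ℝ) (f : (Fin n → Fin q) → ℝ) (t : ℕ) :
    (Qop q n β ^ t) (fun z => f z.2) = fun z => (Pop β ^ t) f z.2 := by
  induction t generalizing f with
  | zero => simp
  | succ t ih => rw [pow_succ, Module.End.mul_apply, Qop_snd hq, ih, pow_succ, Module.End.mul_apply]

lemma isMk_Qop (hq : 0 < q) (hn : 0 < n) (β : ℝ) : IsMk (Qop q n β) := by
  refine ⟨fun f hf z => ?_, fun z => ?_⟩
  · rw [Qop_apply]
    refine mul_nonneg (by positivity) (sum_nonneg fun u _ => sum_nonneg fun k _ => sum_nonneg fun l _ =>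
      mul_nonneg (cpl_nonneg _ _ (rp_nonneg _ _ _) (rp_nonneg _ _ _) _ _) (hf _))
  · have := congrFun (Qop_fst (n := n) hq β (fun _ => 1)) z
    rw [this]; exact (isMk_Pop hq hn β).2 _

/-- disagreement indicator -/
noncomputable def dis (v : Fin n) (z : (Fin n → Fin q) × (Fin n → Fin q)) : ℝ :=
  if z.1 v ≠ z.2 v then 1 else 0

lemma dis_nonneg (v : Fin n) (z : (Fin n → Fin q) × (Fin n → Fin q)) : 0 ≤ dis v z := by
  unfold dis; split_ifs <;> norm_num

lemma dis_le_one (v : Fin n) (z : (Fin n → Fin q) × (Fin n → Fin q)) : dis v z ≤ 1 := by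
  unfold dis; split_ifs <;> norm_num

lemma pr_diff (x y : Fin n → Fin q) :
    ∑ k, |pr x k - pr y k| ≤ 2 * (1 / n * ∑ w, dis w (x, y)) := by
  have h1 : ∀ k, |pr x k - pr y k| ≤ 1 / n * ∑ w, |(if x w = k then (1 : ℝ) else 0) - if y w = k then 1 else 0| := by
    intro k
    unfold pr
    rw [← mul_sub, ← sum_sub_distrib, abs_mul, abs_of_nonneg (by positivity : 0 ≤ 1 / (n : ℝ))]
    exact mul_le_mul_of_nonneg_left (abs_sum_le_sum_abs _ _) (by positivity)
  refine (sum_le_sum fun k _ => h1 k).trans ?_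
  rw [← mul_sum, sum_comm, mul_left_comm]
  refine mul_le_mul_of_nonneg_left ?_ (by positivity)
  rw [mul_sum]
  refine sum_le_sum fun w _ => ?_
  unfold dis
  by_cases h : x w = y w
  · simp [h]
  · simp only [ne_eq, h, not_false_eq_true, if_true, mul_one]
    calc _ ≤ ∑ k, ((if x w = k then (1 : ℝ) else 0) + if y w = k then 1 else 0) := by
          refine sum_le_sum fun k _ => ?_
          split_ifs <;> norm_num
      _ = 2 := by rw [sum_add_distrib]; simp; norm_num

lemma ov_rp (hq : 0 < q) (hn : 0 < n) {β : ℝ} (hβ : 0 ≤ β) (x y : Fin n → Fin q) (u : Fin n) :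
    ov (rp β x u) (rp β y u) ≤ 2 * β / q * (1 / n * ∑ w, dis w (x, y)) +
      q * C5 β * (VV x + VV y + 1 / n) := by
  have hqr : (0 : ℝ) < q := by exact_mod_cast hq
  have hnr : (0 : ℝ) < n := by exact_mod_cast hn
  rw [ov_abs _ _ (rp_sum_eq hq β _ _ u)]
  have h1 : ∀ k, |rp β x u k - rp β y u k| ≤ 2 * β / q * |pr x k - pr y k| +
      2 * C5 β * (VV x + VV y + 1 / n) := by
    intro k
    have a := rp_lin hq hn hβ x u k
    have b := rp_lin hq hn hβ y u k
    have e : rp β x u k - rp β y u k = 2 * β / q * (pr x k - pr y k) +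
      ((rp β x u k - 1 / q - 2 * β / q * yy x k) - (rp β y u k - 1 / q - 2 * β / q * yy y k)) := by
      unfold yy; ring
    rw [e]
    refine (abs_add_le _ _).trans (add_le_add ?_ ?_)
    · rw [abs_mul, abs_of_nonneg (by positivity)]
    · refine (abs_sub _ _).trans ((add_le_add a b).trans ?_)
      have := mul_nonneg (C5_nonneg hβ) (VV_nonneg x)
      have := mul_nonneg (C5_nonneg hβ) (VV_nonneg y)
      linarith
  have h2 := sum_le_sum fun k (_ : k ∈ (univ : Finset (Fin q))) => h1 k
  rw [sum_add_distrib, ← mul_sum, sum_const, card_univ, Fintype.card_fin, nsmul_eq_mul] at h2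
  have h3 := mul_le_mul_of_nonneg_left (pr_diff x y) (by positivity : 0 ≤ 2 * β / q)
  linarith

lemma Qop_dis (hq : 0 < q) (hn : 0 < n) {β : ℝ} (v : Fin n)
    (z : (Fin n → Fin q) × (Fin n → Fin q)) :
    Qop q n β (dis v) z ≤ (1 - 1 / n) * dis v z + 1 / n * ov (rp β z.1 v) (rp β z.2 v) := by
  have hnr : (0 : ℝ) < n := by exact_mod_cast hn
  rw [Qop_apply, ← add_sum_erase _ _ (mem_univ v)]
  have h1 : ∀ u ∈ univ.erase v, ∑ k, ∑ l, cw β z.1 z.2 u k l *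
      dis v (Function.update z.1 u k, Function.update z.2 u l) = dis v z := by
    intro u hu
    have hvu : v ≠ u := (ne_of_mem_erase hu).symm
    have : ∀ k l, dis v (Function.update z.1 u k, Function.update z.2 u l) = dis v z := by
      intro k l; unfold dis; simp [Function.update_of_ne hvu]
    simp only [this]
    simp only [← sum_mul]
    unfold cw
    simp only [cpl_fst _ _ (rp_sum_eq hq β z.1 z.2 u), rp_sum hq, one_mul]
  rw [sum_congr rfl h1, sum_const, card_erase_of_mem (mem_univ v), card_univ, Fintype.card_fin,
    nsmul_eq_mul, Nat.cast_sub (by omega), Nat.cast_one]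
  have h2 := cpl_off (rp β z.1 v) (rp β z.2 v) (rp_sum_eq hq β z.1 z.2 v)
  have h3 : ∑ k, ∑ l, cw β z.1 z.2 v k l *
      dis v (Function.update z.1 v k, Function.update z.2 v l) ≤ ov (rp β z.1 v) (rp β z.2 v) := by
    refine le_trans (le_of_eq ?_) h2
    refine sum_congr rfl fun k _ => sum_congr rfl fun l _ => ?_
    unfold dis cw; simp
  have h4 := mul_le_mul_of_nonneg_left h3 (by positivity : 0 ≤ 1 / (n : ℝ))
  have e : 1 / (n : ℝ) * ((n - 1) * dis v z) = (1 - 1 / n) * dis v z := by field_simp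
  rw [mul_add, e]
  linarith

/-- Expectation under the coupling started from `(σ₀, μ)` after `t` steps. -/
noncomputable def Ec (q n : ℕ) (β : ℝ) (σ₀ : Fin n → Fin q) (t : ℕ) :
    ((Fin n → Fin q) × (Fin n → Fin q) → ℝ) →ₗ[ℝ] ℝ where
  toFun F := Emu q n β (fun y => (Qop q n β ^ t) F (σ₀, y))
  map_add' f g := by
    rw [← map_add]; congr 1; ext y; simp
  map_smul' c f := by
    rw [RingHom.id_apply, ← map_smul]; congr 1; ext y; simp

lemma Ec_apply (β : ℝ) (σ₀ : Fin n → Fin q) (t : ℕ) (F) :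
    Ec q n β σ₀ t F = Emu q n β (fun y => (Qop q n β ^ t) F (σ₀, y)) := rfl

lemma isExp_Ec (hq : 0 < q) (hn : 0 < n) (β : ℝ) (σ₀ : Fin n → Fin q) (t : ℕ) :
    IsExp (Ec q n β σ₀ t) := by
  have h := (isMk_Qop hq hn β).pow t
  refine ⟨fun f hf => (isExp_Emu hq β).1 _ fun y => h.1 f hf _, ?_⟩
  rw [Ec_apply]
  simp only [h.2]
  exact (isExp_Emu hq β).2

lemma Ec_fst (hq : 0 < q) (β : ℝ) (σ₀ : Fin n → Fin q) (t : ℕ) (f : (Fin n → Fin q) → ℝ) :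
    Ec q n β σ₀ t (fun z => f z.1) = (Pop β ^ t) f σ₀ := by
  rw [Ec_apply, Qop_pow_fst hq]
  exact (isExp_Emu (n := n) hq β).const ((Pop β ^ t) f σ₀)

lemma Ec_snd (hq : 0 < q) (hn : 0 < n) (β : ℝ) (σ₀ : Fin n → Fin q) (t : ℕ) (f : (Fin n → Fin q) → ℝ) :
    Ec q n β σ₀ t (fun z => f z.2) = Emu q n β f := by
  rw [Ec_apply, Qop_pow_snd hq]
  exact Emu_pow hq hn β f t

lemma Ec_succ (β : ℝ) (σ₀ : Fin n → Fin q) (t : ℕ) (F) :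
    Ec q n β σ₀ (t + 1) F = Ec q n β σ₀ t (Qop q n β F) := by
  rw [Ec_apply, Ec_apply, pow_succ, Module.End.mul_apply]

lemma coupling_bound (hq : 3 ≤ q) {β K : ℝ} (hβ : 0 ≤ β) (hk : 0 < kap q β) (hK : GoodK q β K) :
    ∃ C : ℝ, 0 < C ∧ ∀ n : ℕ, 2 ≤ n → ∀ (σ₀ : Fin n → Fin q) (t : ℕ) (v : Fin n),
      Ec q n β σ₀ t (dis v) ≤ C * ((1 - kap q β / n) ^ t + 1 / n) := by
  have hq0 : 0 < q := by omega
  have hqr : (0 : ℝ) < q := by exact_mod_cast hq0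
  obtain ⟨C, hC, hm⟩ := Phi_moments hq hβ hk hK
  have hC5 := C5_nonneg hβ
  set G := q * C5 β * (q ^ 2 * C + q ^ 2 * C + 1 + q ^ 2 * C) with hG
  have hG0 : 0 ≤ G := by positivity
  set κ := kap q β with hκ
  refine ⟨1 + G / (κ / 2) + G / κ, by positivity, fun n hn σ₀ => ?_⟩
  have hn0 : 0 < n := by omega
  have hnr : (0 : ℝ) < n := by exact_mod_cast hn0
  obtain ⟨s0, s1, r0, r1⟩ := rate_bounds (n := n) hk (kap_le_one hq0 hβ) hn
  obtain ⟨hm1, hm2⟩ := hm n hn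
  set r := 1 - κ / n with hr
  set s := 1 - 3 / 2 * κ / n with hs
  have key : ∀ (t : ℕ) (v : Fin n), Ec q n β σ₀ t (dis v) ≤
      (1 + G / (κ / 2)) * r ^ t - G / (κ / 2) * s ^ t + G / κ / n := by
    intro t
    induction t with
    | zero =>
      intro v
      have h1 : Ec q n β σ₀ 0 (dis v) ≤ 1 := by
        have := (isExp_Ec hq0 hn0 β σ₀ 0).mono (f := dis v) (g := fun _ => 1) (dis_le_one v)
        rwa [(isExp_Ec hq0 hn0 β σ₀ 0).const] at this
      have : 0 ≤ G / κ / n := by positivity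
      simp only [pow_zero, mul_one]
      linarith
    | succ t ih =>
      intro v
      have hE := isExp_Ec hq0 hn0 β σ₀ t
      set m := (1 + G / (κ / 2)) * r ^ t - G / (κ / 2) * s ^ t + G / κ / n with hmdef
      rw [Ec_succ]
      set c1 : ℝ := 1 / n * (2 * β / q * (1 / n)) with hc1
      set c2 : ℝ := 1 / n * (q * C5 β) with hc2
      have c10 : 0 ≤ c1 := by positivity
      have c20 : 0 ≤ c2 := by positivity
      have h1 : Ec q n β σ₀ t (Qop q n β (dis v)) ≤ Ec q n β σ₀ t
          (fun z => ((1 - 1 / n) * dis v z + c1 * ∑ w, dis w z) +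
            (c2 * (VV z.1 + VV z.2) + c2 * (1 / n))) := by
        refine hE.mono fun z => (Qop_dis hq0 hn0 v z).trans ?_
        have := mul_le_mul_of_nonneg_left (ov_rp hq0 hn0 hβ z.1 z.2 v) (by positivity : 0 ≤ 1 / (n : ℝ))
        refine (add_le_add_right this _).trans (le_of_eq ?_)
        rw [hc1, hc2]; ring
      rw [lin_add, hE.affine, lin_add, lin_add, lin_mul, lin_mul, lin_sum] at h1
      have e1 := Ec_fst hq0 β σ₀ t VV
      have e2 := Ec_snd hq0 hn0 β σ₀ t VV
      rw [e1, e2] at h1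
      have v1 : (Pop β ^ t) VV σ₀ ≤ q ^ 2 * (C * (s ^ t + 1 / n)) := by
        have := ((isMk_Pop hq0 hn0 β).pow t).mono (f := VV) (g := fun σ => (q : ℝ) ^ 2 * Phi K σ)
          (V_le_Phi hq0 hn0 hK.1.le) σ₀
        have e : (Pop β ^ t) (fun σ => (q : ℝ) ^ 2 * Phi K σ) σ₀ = q ^ 2 * (Pop β ^ t) (Phi K) σ₀ :=
          lin_mul (evalAt (Pop β ^ t) σ₀) _ _
        rw [e] at this
        refine this.trans (mul_le_mul_of_nonneg_left (hm1 σ₀ t) (by positivity))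
      have v2 : Emu q n β VV ≤ q ^ 2 * (C / n) := by
        have := (isExp_Emu (n := n) hq0 β).mono (V_le_Phi hq0 hn0 hK.1.le)
        have e : Emu q n β (fun σ => (q : ℝ) ^ 2 * Phi K σ) = q ^ 2 * Emu q n β (Phi K) := lin_mul _ _ _
        change _ ≤ Emu q n β (fun σ => (q : ℝ) ^ 2 * Phi K σ) at this
        rw [e] at this
        exact this.trans (mul_le_mul_of_nonneg_left hm2 (by positivity))
      have d1 : ∑ w, Ec q n β σ₀ t (dis w) ≤ n * m := by
        refine (sum_le_sum fun w _ => ih w).trans (le_of_eq ?_)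
        simp
      have hn1 : (0 : ℝ) ≤ 1 - 1 / n := by
        have : 1 / (n : ℝ) ≤ 1 := by rw [div_le_one hnr]; exact_mod_cast hn0
        linarith
      have b1 := mul_le_mul_of_nonneg_left (ih v) hn1
      have b2 := mul_le_mul_of_nonneg_left d1 c10
      have b3 := mul_le_mul_of_nonneg_left (add_le_add v1 v2) c20
      have e3 : (1 - 1 / n) * m + c1 * (n * m) = r * m := by
        rw [hc1, hr, hκ]; unfold kap; field_simp; ring
      have e4 : c2 * (q ^ 2 * (C * (s ^ t + 1 / n)) + q ^ 2 * (C / n)) + c2 * (1 / n) ≤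
          G / n * (s ^ t + 1 / n) := by
        have hst : 0 ≤ s ^ t := pow_nonneg s0 t
        have hqc : 0 ≤ q * C5 β := by positivity
        have : q ^ 2 * (C * (s ^ t + 1 / n)) + q ^ 2 * (C / n) + 1 / n ≤
            (q ^ 2 * C + q ^ 2 * C + 1 + q ^ 2 * C) * (s ^ t + 1 / n) := by
          have a1 : 0 ≤ q ^ 2 * C * s ^ t := by positivity
          have a2 : 0 ≤ q ^ 2 * C * (1 / n) := by positivity
          have : q ^ 2 * (C / n) = q ^ 2 * C * (1 / n) := by ring
          rw [this]
          nlinarith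
        have := mul_le_mul_of_nonneg_left this c20
        refine le_trans (le_of_eq ?_) (this.trans (le_of_eq ?_))
        · ring
        · rw [hc2, hG]; ring
      have e5 : (1 + G / (κ / 2)) * r ^ (t + 1) - G / (κ / 2) * s ^ (t + 1) + G / κ / n =
          r * m + G / n * (s ^ t + 1 / n) := by
        rw [hmdef, pow_succ, pow_succ]
        have g1 : G / (κ / 2) * (r - s) = G / n := by
          rw [hr, hs]; field_simp; ring
        have g2 : G / κ / n * (1 - r) = G / n * (1 / n) := by
          rw [hr]; field_simp; ring
        have : G / n * (s ^ t + 1 / n) = G / (κ / 2) * (r - s) * s ^ t + G / κ / n * (1 - r) := by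
          rw [g1, g2]; ring
        rw [this]; ring
      rw [e5, ← e3]
      linarith
  intro t v
  refine (key t v).trans ?_
  have hrt : 0 ≤ r ^ t := pow_nonneg r0 t
  have hst : 0 ≤ s ^ t := pow_nonneg s0 t
  have a1 : 0 ≤ G / (κ / 2) * s ^ t := by positivity
  have a2 : 0 ≤ G / κ * r ^ t := by positivity
  have a3 : 0 ≤ (1 + G / (κ / 2)) * (1 / n) := by positivity
  have a4 : G / κ / n = G / κ * (1 / n) := by ring
  rw [a4]
  nlinarith

end PottsAux

namespace PottsAux

variable {q n : ℕ}

/-! ### Symmetries -/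

lemma cntx_perm (π : Equiv.Perm (Fin n)) (σ : Fin n → Fin q) (w : Fin n) (k : Fin q) :
    cntx (σ ∘ π) w k = cntx σ (π w) k := by
  unfold cntx
  rw [← Equiv.sum_comp π (fun v => if v ≠ π w ∧ σ v = k then (1 : ℝ) else 0)]
  refine sum_congr rfl fun v _ => ?_
  simp

lemma rp_perm (β : ℝ) (π : Equiv.Perm (Fin n)) (σ : Fin n → Fin q) (w : Fin n) (k : Fin q) :
    rp β (σ ∘ π) w k = rp β σ (π w) k := by
  unfold rp wt
  simp only [cntx_perm]

lemma update_perm (π : Equiv.Perm (Fin n)) (σ : Fin n → Fin q) (w : Fin n) (k : Fin q) :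
    Function.update (σ ∘ π) w k = Function.update σ (π w) k ∘ π := by
  ext v
  by_cases h : v = w
  · subst h; simp
  · simp [Function.update_of_ne h, h]

lemma Pop_perm (β : ℝ) (π : Equiv.Perm (Fin n)) (f : (Fin n → Fin q) → ℝ) (σ : Fin n → Fin q) :
    Pop β f (σ ∘ π) = Pop β (fun z => f (z ∘ π)) σ := by
  rw [Pop_apply, Pop_apply, Av_apply, Av_apply]
  congr 1
  rw [← Equiv.sum_comp π (fun u => ∑ k, rp β σ u k * f (Function.update σ u k ∘ π))]
  refine sum_congr rfl fun v _ => sum_congr rfl fun k _ => ?_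
  rw [rp_perm, update_perm]

lemma Pop_pow_perm (β : ℝ) (π : Equiv.Perm (Fin n)) (t : ℕ) (f : (Fin n → Fin q) → ℝ)
    (σ : Fin n → Fin q) : (Pop β ^ t) f (σ ∘ π) = (Pop β ^ t) (fun z => f (z ∘ π)) σ := by
  induction t generalizing f with
  | zero => simp
  | succ t ih =>
    rw [pow_succ, Module.End.mul_apply, ih, Module.End.mul_apply]
    have e : (fun z => Pop β f (z ∘ π)) = Pop β (fun z => f (z ∘ π)) :=
      funext fun z => Pop_perm β π f z
    rw [e]

def SymF (σ₀ : Fin n → Fin q) (f : (Fin n → Fin q) → ℝ) : Prop :=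
  ∀ π : Equiv.Perm (Fin n), σ₀ ∘ π = σ₀ → ∀ z, f (z ∘ π) = f z

lemma SymF.pow {σ₀ : Fin n → Fin q} {f : (Fin n → Fin q) → ℝ} (h : SymF σ₀ f) (β : ℝ) (t : ℕ) :
    SymF σ₀ ((Pop β ^ t) f) := by
  intro π hπ z
  rw [Pop_pow_perm]
  have e : (fun z => f (z ∘ π)) = f := funext fun w => h π hπ w
  rw [e]

lemma pottsWeight_perm (β : ℝ) (π : Equiv.Perm (Fin n)) (z : Fin n → Fin q) :
    pottsWeight q n β (z ∘ π) = pottsWeight q n β z := by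
  unfold pottsWeight
  congr 2
  rw [← Equiv.sum_comp π (fun u => ∑ v, if z u = z v then (1 : ℝ) else 0)]
  refine sum_congr rfl fun u _ => ?_
  rw [← Equiv.sum_comp π (fun v => if z (π u) = z v then (1 : ℝ) else 0)]
  rfl

lemma kernel_pow_eq (hq : 0 < q) (β : ℝ) (t : ℕ) (σ τ : Fin n → Fin q) :
    (glauberKernel q n β ^ t) σ τ = (Pop β ^ t) (fun z => if z = τ then 1 else 0) σ := by
  rw [← mulVec_kernel_pow hq]
  simp [Matrix.mulVec, dotProduct]

lemma kernel_pow_perm (hq : 0 < q) (β : ℝ) (t : ℕ) (σ₀ : Fin n → Fin q) (π : Equiv.Perm (Fin n))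
    (hπ : σ₀ ∘ π = σ₀) (z : Fin n → Fin q) :
    (glauberKernel q n β ^ t) σ₀ (z ∘ π) = (glauberKernel q n β ^ t) σ₀ z := by
  rw [kernel_pow_eq hq, kernel_pow_eq hq]
  conv_lhs => rw [← hπ]
  rw [Pop_pow_perm]
  have h1 : ∀ w : Fin n → Fin q, w ∘ π = z ∘ π ↔ w = z :=
    fun w => π.surjective.injective_comp_right.eq_iff
  have e : (fun w : Fin n → Fin q => if w ∘ π = z ∘ π then (1 : ℝ) else 0) =
    fun w => if w = z then 1 else 0 := funext fun w => by simp only [h1]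
  rw [e]

/-- the optimal test set -/
noncomputable def opt (q n : ℕ) (β : ℝ) (t : ℕ) (σ₀ : Fin n → Fin q) (z : Fin n → Fin q) : ℝ :=
  if pottsMeasure q n β z < (glauberKernel q n β ^ t) σ₀ z then 1 else 0

lemma opt_sym (hq : 0 < q) (β : ℝ) (t : ℕ) (σ₀ : Fin n → Fin q) : SymF σ₀ (opt q n β t σ₀) := by
  intro π hπ z
  unfold opt
  rw [kernel_pow_perm hq β t σ₀ π hπ]
  unfold pottsMeasure
  rw [pottsWeight_perm]

lemma opt_tv (hq : 0 < q) (hn : 0 < n) (β : ℝ) (t : ℕ) (σ₀ : Fin n → Fin q)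
    (A : Finset (Fin n → Fin q)) :
    |∑ x ∈ A, (glauberKernel q n β ^ t) σ₀ x - ∑ x ∈ A, pottsMeasure q n β x| ≤
      (Pop β ^ t) (opt q n β t σ₀) σ₀ - Emu q n β (opt q n β t σ₀) := by
  set P := fun x => (glauberKernel q n β ^ t) σ₀ x with hP
  set g := opt q n β t σ₀ with hg
  have e1 : (Pop β ^ t) g σ₀ = ∑ x, P x * g x := by
    rw [← mulVec_kernel_pow hq]; rfl
  have e2 : (Pop β ^ t) g σ₀ - Emu q n β g = ∑ x, (P x - pottsMeasure q n β x) * g x := by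
    rw [e1, Emu_apply, ← sum_sub_distrib]; exact sum_congr rfl fun x _ => by ring
  have h1 : ∀ x, 0 ≤ (P x - pottsMeasure q n β x) * g x ∧
      P x - pottsMeasure q n β x ≤ (P x - pottsMeasure q n β x) * g x := by
    intro x
    rw [hg]; unfold opt
    split_ifs with h
    · exact ⟨by simp only [mul_one, sub_nonneg, hP]; exact h.le, by simp⟩
    · exact ⟨by simp, by simpa [hP] using h⟩
  have h2 : ∀ B : Finset (Fin n → Fin q), ∑ x ∈ B, P x - ∑ x ∈ B, pottsMeasure q n β x ≤
      ∑ x, (P x - pottsMeasure q n β x) * g x := by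
    intro B
    rw [← sum_sub_distrib]
    exact (sum_le_sum fun x _ => (h1 x).2).trans
      (sum_le_sum_of_subset_of_nonneg (subset_univ _) fun x _ _ => (h1 x).1)
  have h3 : ∑ x, P x = 1 := by
    have := mulVec_kernel_pow (n := n) hq β t (fun _ => 1)
    have := congrFun this σ₀
    rw [((isMk_Pop hq hn β).pow t).2] at this
    simpa [Matrix.mulVec, dotProduct] using this
  have h4 := sum_add_sum_compl A P
  have h5 := sum_add_sum_compl A (pottsMeasure q n β)
  rw [h3] at h4
  rw [pottsMeasure_sum hq] at h5
  rw [e2, abs_le]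
  have h6 := h2 A
  have h7 := h2 Aᶜ
  exact ⟨by linarith, h6⟩

/-! ### Baskets -/

noncomputable def bn (σ₀ : Fin n → Fin q) (i : Fin q) : ℝ := ∑ v, if σ₀ v = i then (1 : ℝ) else 0

noncomputable def bN (σ₀ : Fin n → Fin q) (i a : Fin q) (z : Fin n → Fin q) : ℝ :=
  ∑ v, if σ₀ v = i ∧ z v = a then (1 : ℝ) else 0

noncomputable def bD (σ₀ : Fin n → Fin q) (i : Fin q) (z : (Fin n → Fin q) × (Fin n → Fin q)) : ℝ :=
  ∑ v, if σ₀ v = i then dis v z else 0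

lemma bn_nonneg (σ₀ : Fin n → Fin q) (i : Fin q) : 0 ≤ bn σ₀ i :=
  sum_nonneg fun v _ => by split_ifs <;> norm_num

lemma bn_le (σ₀ : Fin n → Fin q) (i : Fin q) : bn σ₀ i ≤ n := by
  calc bn σ₀ i ≤ ∑ v : Fin n, (1 : ℝ) := sum_le_sum fun v _ => by split_ifs <;> norm_num
    _ = n := by simp

lemma bn_pos (σ₀ : Fin n → Fin q) (v : Fin n) : 1 ≤ bn σ₀ (σ₀ v) := by
  have := single_le_sum (f := fun w => if σ₀ w = σ₀ v then (1 : ℝ) else 0)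
    (fun w _ => by split_ifs <;> norm_num) (mem_univ v)
  rw [if_pos rfl] at this
  exact this

lemma sum_basket (σ₀ : Fin n → Fin q) (g : Fin q → ℝ) : ∑ v, g (σ₀ v) = ∑ i, bn σ₀ i * g i := by
  unfold bn
  simp only [sum_mul]
  rw [sum_comm]
  refine sum_congr rfl fun v _ => ?_
  simp

lemma swap_update (z : Fin n → Fin q) (v w : Fin n) (h : z v = z w) (b : Fin q) :
    Function.update z w b = Function.update z v b ∘ Equiv.swap v w := by
  ext u
  by_cases h1 : u = w
  · subst h1; simp
  · by_cases h2 : u = v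
    · subst h2
      by_cases h3 : w = u
      · subst h3; simp
      · simp [Function.update_of_ne h1, Function.update_of_ne h3, h]
    · simp [Function.update_of_ne h1, Equiv.swap_apply_of_ne_of_ne h2 h1, Function.update_of_ne h2]

lemma swap_base (σ₀ : Fin n → Fin q) (v w : Fin n) (h : σ₀ v = σ₀ w) :
    σ₀ ∘ Equiv.swap v w = σ₀ := by
  ext u
  by_cases h1 : u = w
  · subst h1; simp [h]
  · by_cases h2 : u = v
    · subst h2; simp [h]
    · simp [Equiv.swap_apply_of_ne_of_ne h2 h1]

lemma basket_grad {σ₀ : Fin n → Fin q} {h : (Fin n → Fin q) → ℝ} (hs : SymF σ₀ h)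
    (z : Fin n → Fin q) (v : Fin n) (b : Fin q) :
    bN σ₀ (σ₀ v) (z v) z * (h (Function.update z v b) - h z) ^ 2 ≤ Gam h z := by
  unfold Gam bN
  rw [sum_mul]
  refine sum_le_sum fun w _ => ?_
  have h1 : (h (Function.update z w b) - h z) ^ 2 ≤
      ∑ b, (h (Function.update z w b) - h z) ^ 2 :=
    single_le_sum (f := fun b => (h (Function.update z w b) - h z) ^ 2)
      (fun _ _ => sq_nonneg _) (mem_univ b)
  split_ifs with hw
  · rw [swap_update z v w hw.2.symm b, hs _ (swap_base σ₀ v w hw.1.symm)] at h1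
    linarith
  · rw [zero_mul]; exact sum_nonneg fun _ _ => sq_nonneg _

/-- interpolation between two configurations -/
lemma interp (h : (Fin n → Fin q) → ℝ) (x y : Fin n → Fin q) (c : Fin n → ℝ)
    (H : ∀ v, x v ≠ y v → ∀ z, (∀ w, z w = x w ∨ z w = y w) →
      |h (Function.update z v (x v)) - h z| ≤ c v) :
    |h x - h y| ≤ ∑ v, c v * dis v (x, y) := by
  have key : ∀ s : Finset (Fin n), |h (s.piecewise x y) - h y| ≤ ∑ v ∈ s, c v * dis v (x, y) := by
    intro s
    induction s using Finset.induction_on with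
    | empty => simp
    | insert v s hv ih =>
      rw [sum_insert hv, piecewise_insert]
      set z := s.piecewise x y with hz
      have h1 : |h (Function.update z v (x v)) - h z| ≤ c v * dis v (x, y) := by
        by_cases hxy : x v = y v
        · have : Function.update z v (x v) = z := by
            rw [Function.update_eq_self_iff, hz, piecewise_eq_of_notMem _ _ _ hv, hxy]
          rw [this]; unfold dis; simp [hxy]
        · have : dis v (x, y) = 1 := by unfold dis; simp [hxy]
          rw [this, mul_one]
          refine H v hxy z fun w => ?_
          by_cases hw : w ∈ s
          · left; rw [hz, piecewise_eq_of_mem _ _ _ hw]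
          · right; rw [hz, piecewise_eq_of_notMem _ _ _ hw]
      have e : h (Function.update z v (x v)) - h y =
        (h (Function.update z v (x v)) - h z) + (h z - h y) := by ring
      rw [e]
      exact (abs_add_le _ _).trans (add_le_add h1 ih)
  have := key univ
  rwa [piecewise_univ] at this

lemma bN_between (σ₀ : Fin n → Fin q) (i a : Fin q) (x y z : Fin n → Fin q)
    (hz : ∀ w, z w = x w ∨ z w = y w) : bN σ₀ i a y ≤ bN σ₀ i a z + bD σ₀ i (x, y) := by
  unfold bN bD
  rw [← sum_add_distrib]
  refine sum_le_sum fun w _ => ?_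
  by_cases hi : σ₀ w = i
  · simp only [hi, true_and, if_true]
    unfold dis
    by_cases hxy : x w = y w
    · have : z w = y w := by rcases hz w with h | h <;> simp [h, hxy]
      rw [this]; simp [hxy]
    · simp only [ne_eq, hxy, not_false_eq_true, if_true]
      split_ifs <;> norm_num
  · simp [hi]

/-- lower tail functional -/
noncomputable def bU (β : ℝ) (σ₀ : Fin n → Fin q) (i a : Fin q) (z : Fin n → Fin q) : ℝ :=
  max (c0 q β * bn σ₀ i - bN σ₀ i a z) 0 ^ 2

lemma max_sq_le (x h : ℝ) : max (x + h) 0 ^ 2 ≤ max x 0 ^ 2 + 2 * max x 0 * h + h ^ 2 := by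
  rcases le_total 0 (x + h) with h1 | h1
  · rw [max_eq_left h1]
    rcases le_total 0 x with h2 | h2
    · rw [max_eq_left h2]; nlinarith
    · rw [max_eq_right h2]; nlinarith
  · rw [max_eq_right h1]
    nlinarith [sq_nonneg (max x 0 + h)]

lemma bN_update (σ₀ : Fin n → Fin q) (i a : Fin q) (z : Fin n → Fin q) (p : Fin n × Fin q) :
    bN σ₀ i a (Function.update z p.1 p.2) = bN σ₀ i a z +
      (if σ₀ p.1 = i then 1 else 0) * hh z a p := by
  obtain ⟨u, j⟩ := p
  unfold bN hh
  rw [← add_sum_erase _ _ (mem_univ u),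
      ← add_sum_erase univ (fun v => if σ₀ v = i ∧ z v = a then (1 : ℝ) else 0) (mem_univ u)]
  have : ∑ v ∈ univ.erase u, (if σ₀ v = i ∧ Function.update z u j v = a then (1 : ℝ) else 0) =
      ∑ v ∈ univ.erase u, (if σ₀ v = i ∧ z v = a then (1 : ℝ) else 0) :=
    sum_congr rfl fun v hv => by rw [Function.update_of_ne (ne_of_mem_erase hv)]
  simp only [this, Function.update_self]
  by_cases hi : σ₀ u = i <;> simp [hi]
  ring

lemma Emu_bU (hq : 0 < q) (hn : 0 < n) {β : ℝ} (hβ : 0 ≤ β) (σ₀ : Fin n → Fin q) (i a : Fin q) :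
    Emu q n β (bU β σ₀ i a) ≤ bn σ₀ i := by
  have hnr : (0 : ℝ) < n := by exact_mod_cast hn
  have hd : ∀ z, Pop β (bU β σ₀ i a) z ≤ (1 - 2 / n) * bU β σ₀ i a z + bn σ₀ i / n := by
    intro z
    set L := c0 q β * bn σ₀ i - bN σ₀ i a z with hL
    set g : Fin n × Fin q → ℝ := fun p => (if σ₀ p.1 = i then 1 else 0) * hh z a p with hg
    have hE := isExp_Av hq hn β z
    have h1 : Pop β (bU β σ₀ i a) z ≤ Av β z (fun p => -(2 * max L 0) * g p +
        (max L 0 ^ 2) + (if σ₀ p.1 = i then 1 else 0)) := by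
      rw [Pop_apply]
      refine hE.mono fun p => ?_
      unfold bU
      rw [bN_update]
      have e : c0 q β * bn σ₀ i - (bN σ₀ i a z + g p) = L + (-g p) := by rw [hL]; ring
      change max (c0 q β * bn σ₀ i - (bN σ₀ i a z + g p)) 0 ^ 2 ≤ _
      rw [e]
      have h2 := max_sq_le L (-g p)
      have h3 : (-g p) ^ 2 ≤ if σ₀ p.1 = i then 1 else 0 := by
        have := hh_abs z a p
        rw [neg_sq]
        simp only [hg]
        split_ifs
        · rw [one_mul, ← sq_abs]; exact pow_le_one₀ (abs_nonneg _) this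
        · simp
      linarith
    rw [lin_add, hE.affine] at h1
    have h4 : Av β z (fun p => if σ₀ p.1 = i then 1 else 0) = bn σ₀ i / n := by
      rw [Av_apply]; unfold bn
      have e0 : (∑ v, if σ₀ v = i then (1:ℝ) else 0) / n
          = 1 / (n:ℝ) * ∑ v, if σ₀ v = i then (1:ℝ) else 0 := by ring
      rw [e0]
      congr 1
      refine sum_congr rfl fun u _ => ?_
      have e2 := sum_mul univ (fun x => rp β z u x) (if σ₀ u = i then (1 : ℝ) else 0)
      rw [rp_sum hq, one_mul] at e2
      exact e2.symm
    have h5 : 1 / n * L ≤ Av β z g := by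
      rw [Av_apply, hL]
      refine mul_le_mul_of_nonneg_left ?_ (by positivity)
      unfold bn bN
      rw [mul_sum, ← sum_sub_distrib]
      refine sum_le_sum fun u _ => ?_
      have e1 : ∑ k, rp β z u k * g (u, k) = (if σ₀ u = i then 1 else 0) *
          (rp β z u a - if z u = a then 1 else 0) := by
        have e2 := sum_mul univ (fun x => rp β z u x) (if z u = a then (1 : ℝ) else 0)
        rw [rp_sum hq, one_mul] at e2
        rw [e2]
        have e3 : rp β z u a = ∑ k, rp β z u k * (if k = a then 1 else 0) := by simp
        rw [e3, ← sum_sub_distrib, mul_sum]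
        refine sum_congr rfl fun k _ => ?_
        simp only [hg, hh]; ring
      rw [e1]
      have := rp_ge hq hn β hβ z u a
      by_cases hi : σ₀ u = i
      · simp only [hi, true_and, if_true, one_mul, mul_one]; linarith
      · simp [hi]
    rw [h4] at h1
    have h6 : max L 0 * L = max L 0 ^ 2 := by
      rcases le_total 0 L with h | h
      · rw [max_eq_left h]; ring
      · rw [max_eq_right h]; simp
    have h7 := mul_le_mul_of_nonneg_left h5 (by positivity : 0 ≤ 2 * max L 0)
    have e8 : 2 * max L 0 * (1 / n * L) = 2 / n * max L 0 ^ 2 := by rw [← h6]; ring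
    rw [e8] at h7
    have e9 : bU β σ₀ i a z = max L 0 ^ 2 := rfl
    rw [e9]
    linarith
  have hM := isExp_Emu (n := n) hq β
  have h1 := hM.mono hd
  rw [hM.affine] at h1
  change Emu q n β (Pop β (bU β σ₀ i a)) ≤ (1 - 2 / n) * Emu q n β (bU β σ₀ i a) + bn σ₀ i / n at h1
  rw [Emu_Pop hq hn] at h1
  have h2 : (2 * Emu q n β (bU β σ₀ i a)) / n ≤ bn σ₀ i / n := by
    have : (2 * Emu q n β (bU β σ₀ i a)) / n = 2 / n * Emu q n β (bU β σ₀ i a) := by ring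
    rw [this]; linarith
  rw [div_le_div_iff_of_pos_right hnr] at h2
  have h3 : 0 ≤ Emu q n β (bU β σ₀ i a) := hM.1 _ fun z => sq_nonneg _
  linarith

end PottsAux

namespace PottsAux

variable {q n : ℕ}

noncomputable def bB (β K0 : ℝ) (σ₀ : Fin n → Fin q) (i : Fin q)
    (z : (Fin n → Fin q) × (Fin n → Fin q)) : ℝ :=
  if K0 ≤ bn σ₀ i then ∑ a, 4 / (c0 q β * bn σ₀ i) ^ 2 * bU β σ₀ i a z.2 else bD σ₀ i z

lemma bD_nonneg (σ₀ : Fin n → Fin q) (i : Fin q) (z : (Fin n → Fin q) × (Fin n → Fin q)) :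
    0 ≤ bD σ₀ i z := sum_nonneg fun v _ => by
  split_ifs
  · exact dis_nonneg v z
  · exact le_rfl

lemma bB_nonneg (β K0 : ℝ) (σ₀ : Fin n → Fin q) (i : Fin q)
    (z : (Fin n → Fin q) × (Fin n → Fin q)) : 0 ≤ bB β K0 σ₀ i z := by
  unfold bB
  split_ifs
  · exact sum_nonneg fun a _ => mul_nonneg (by positivity) (sq_nonneg _)
  · exact bD_nonneg _ _ _

lemma pointwise (hq : 0 < q) {β : ℝ} (K0 C : ℝ) (hC : 0 ≤ C)
    (σ₀ : Fin n → Fin q) (h : (Fin n → Fin q) → ℝ) (h0 : ∀ z, 0 ≤ h z) (h1 : ∀ z, h z ≤ 1)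
    (hs : SymF σ₀ h) (hG : ∀ z, Gam h z ≤ C) (x y : Fin n → Fin q) :
    |h x - h y| ≤ ∑ v, Real.sqrt (4 * C / c0 q β / bn σ₀ (σ₀ v)) * dis v (x, y) +
      ∑ i, (4 / (c0 q β * bn σ₀ i) * bD σ₀ i (x, y) + bB β K0 σ₀ i (x, y)) := by
  have hc := c0_pos hq β
  have hterm : ∀ i, 0 ≤ 4 / (c0 q β * bn σ₀ i) * bD σ₀ i (x, y) + bB β K0 σ₀ i (x, y) := by
    intro i
    have a1 := bn_nonneg σ₀ i
    have a2 := bD_nonneg σ₀ i (x, y)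
    have a3 := bB_nonneg β K0 σ₀ i (x, y)
    positivity
  by_cases hgood : ∀ v, x v ≠ y v → bD σ₀ (σ₀ v) (x, y) ≤ c0 q β * bn σ₀ (σ₀ v) / 4 ∧
      ∀ a, c0 q β * bn σ₀ (σ₀ v) / 2 ≤ bN σ₀ (σ₀ v) a y
  · refine le_trans ?_ (le_add_of_nonneg_right (sum_nonneg fun i _ => hterm i))
    refine interp h x y _ fun v hv z hz => ?_
    obtain ⟨g1, g2⟩ := hgood v hv
    have b1 := bN_between σ₀ (σ₀ v) (z v) x y z hz
    have b2 := g2 (z v)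
    have hn1 := bn_pos σ₀ v
    have hpos : 0 < c0 q β * bn σ₀ (σ₀ v) := mul_pos hc (by linarith)
    have b3 : c0 q β * bn σ₀ (σ₀ v) / 4 ≤ bN σ₀ (σ₀ v) (z v) z := by linarith
    have b4 := (basket_grad hs z v (x v)).trans (hG z)
    have b5 := mul_le_mul_of_nonneg_right b3 (sq_nonneg (h (Function.update z v (x v)) - h z))
    refine Real.abs_le_sqrt ?_
    rw [div_div, le_div_iff₀ hpos]
    linarith
  · push Not at hgood
    obtain ⟨v, hv, hbad⟩ := hgood
    set i := σ₀ v with hi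
    have hle : |h x - h y| ≤ 1 := by
      rw [abs_le]
      have := h0 x; have := h1 x; have := h0 y; have := h1 y
      constructor <;> linarith
    have hn1 : 1 ≤ bn σ₀ i := bn_pos σ₀ v
    have hpos : 0 < c0 q β * bn σ₀ i := mul_pos hc (by linarith)
    have hD1 : 1 ≤ bD σ₀ i (x, y) := by
      have := single_le_sum (f := fun w => if σ₀ w = i then dis w (x, y) else 0)
        (fun w _ => by
          split_ifs
          · exact dis_nonneg w _
          · exact le_rfl) (mem_univ v)
      rw [if_pos hi.symm] at this
      have e : dis v (x, y) = 1 := by unfold dis; simp [hv]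
      rw [e] at this
      exact this
    have hone : 1 ≤ 4 / (c0 q β * bn σ₀ i) * bD σ₀ i (x, y) + bB β K0 σ₀ i (x, y) := by
      have a3 := bB_nonneg β K0 σ₀ i (x, y)
      have a2 : 0 ≤ 4 / (c0 q β * bn σ₀ i) * bD σ₀ i (x, y) :=
        mul_nonneg (by positivity) (bD_nonneg _ _ _)
      by_cases hD : bD σ₀ i (x, y) ≤ c0 q β * bn σ₀ i / 4
      · obtain ⟨a, ha⟩ := hbad hD
        have : 1 ≤ bB β K0 σ₀ i (x, y) := by
          unfold bB
          split_ifs with hK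
          · have s1 := single_le_sum (f := fun a => 4 / (c0 q β * bn σ₀ i) ^ 2 * bU β σ₀ i a y)
              (fun a _ => mul_nonneg (by positivity) (sq_nonneg _)) (mem_univ a)
            refine le_trans ?_ s1
            have s2 : c0 q β * bn σ₀ i / 2 ≤ max (c0 q β * bn σ₀ i - bN σ₀ i a y) 0 :=
              le_max_of_le_left (by linarith)
            have s3 : (c0 q β * bn σ₀ i / 2) ^ 2 ≤ bU β σ₀ i a y := by
              unfold bU; gcongr
            rw [div_mul_eq_mul_div, le_div_iff₀ (by positivity)]
            linarith
          · exact hD1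
        linarith
      · push Not at hD
        have : 1 ≤ 4 / (c0 q β * bn σ₀ i) * bD σ₀ i (x, y) := by
          rw [div_mul_eq_mul_div, le_div_iff₀ hpos]; linarith
        linarith
    have hsum := single_le_sum (f := fun i => 4 / (c0 q β * bn σ₀ i) * bD σ₀ i (x, y) +
      bB β K0 σ₀ i (x, y)) (fun i _ => hterm i) (mem_univ i)
    have h2 : 0 ≤ ∑ v, Real.sqrt (4 * C / c0 q β / bn σ₀ (σ₀ v)) * dis v (x, y) :=
      sum_nonneg fun v _ => mul_nonneg (Real.sqrt_nonneg _) (dis_nonneg v _)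
    linarith

lemma mul_sqrt_div_le {x c N : ℝ} (hx : 0 ≤ x) (hc : 0 ≤ c) (hN : x ≤ N) :
    x * Real.sqrt (c / x) ≤ Real.sqrt (c * N) := by
  refine Real.le_sqrt_of_sq_le ?_
  rw [mul_pow, Real.sq_sqrt (by positivity)]
  rcases eq_or_lt_of_le hx with h | h
  · rw [← h]; simp; exact mul_nonneg hc (hx.trans hN)
  · have : x ^ 2 * (c / x) = c * x := by field_simp
    rw [this]
    gcongr

lemma upper_core (hq : 0 < q) (hn : 0 < n) {β : ℝ} (hβ : 0 ≤ β) (K0 m : ℝ) (hK0 : 0 < K0)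
    (t : ℕ) (σ₀ : Fin n → Fin q) (hm0 : 0 ≤ m) (hm : ∀ v, Ec q n β σ₀ t (dis v) ≤ m)
    (A : Finset (Fin n → Fin q)) :
    |∑ x ∈ A, (glauberKernel q n β ^ (t + n)) σ₀ x - ∑ x ∈ A, pottsMeasure q n β x| ≤
      m * (q * Real.sqrt (4 * C4 q β / c0 q β * n)) + q * (4 / c0 q β * m +
        (4 * q / (c0 q β ^ 2 * K0) + K0 * m)) := by
  have hqr : (0 : ℝ) < q := by exact_mod_cast hq
  have hc := c0_pos hq β
  have hC4 := C4_pos hq (β := β)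
  set f := opt q n β (t + n) σ₀ with hf
  have hf0 : ∀ z, 0 ≤ f z := fun z => by rw [hf]; unfold opt; split_ifs <;> norm_num
  have hf1 : ∀ z, f z ≤ 1 := fun z => by rw [hf]; unfold opt; split_ifs <;> norm_num
  set h := (Pop β ^ n) f with hh'
  have hsym : SymF σ₀ h := (opt_sym hq β (t + n) σ₀).pow β n
  have hP := (isMk_Pop (n := n) hq hn β).pow n
  have h0 : ∀ z, 0 ≤ h z := hP.1 f hf0
  have h1 : ∀ z, h z ≤ 1 := fun z => (hP.mono (g := fun _ => 1) hf1 z).trans (hP.2 z).le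
  have hG : ∀ z, Gam h z ≤ C4 q β := grad_bound hq hn hβ f hf0 hf1
  refine (opt_tv hq hn β (t + n) σ₀ A).trans ?_
  rw [← hf, pow_add, Module.End.mul_apply, ← hh', ← Emu_pow hq hn β f n, ← hh',
    ← Ec_fst hq β σ₀ t h, ← Ec_snd hq hn β σ₀ t h, ← lin_sub]
  have hE := isExp_Ec hq hn β σ₀ t
  have hD : ∀ i, Ec q n β σ₀ t (bD σ₀ i) ≤ bn σ₀ i * m := by
    intro i
    have e : bD σ₀ i = fun z => ∑ v, (if σ₀ v = i then (1 : ℝ) else 0) * dis v z := by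
      ext z; unfold bD; refine sum_congr rfl fun v _ => ?_
      split_ifs <;> simp
    rw [e, lin_sum]; unfold bn
    rw [sum_mul]
    refine sum_le_sum fun v _ => ?_
    have : Ec q n β σ₀ t (fun z => (if σ₀ v = i then (1 : ℝ) else 0) * dis v z) =
      (if σ₀ v = i then (1 : ℝ) else 0) * Ec q n β σ₀ t (dis v) := lin_mul _ _ _
    rw [this]
    exact mul_le_mul_of_nonneg_left (hm v) (by split_ifs <;> norm_num)
  have hB : ∀ i, Ec q n β σ₀ t (bB β K0 σ₀ i) ≤ 4 * q / (c0 q β ^ 2 * K0) + K0 * m := by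
    intro i
    by_cases hK : K0 ≤ bn σ₀ i
    · have e : bB β K0 σ₀ i = fun z => ∑ a, 4 / (c0 q β * bn σ₀ i) ^ 2 * bU β σ₀ i a z.2 := by
        ext z; unfold bB; rw [if_pos hK]
      have hb : 0 < bn σ₀ i := hK0.trans_le hK
      rw [e, lin_sum]
      have h2 : ∀ a ∈ (univ : Finset (Fin q)), Ec q n β σ₀ t (fun z => 4 / (c0 q β * bn σ₀ i) ^ 2 * bU β σ₀ i a z.2) ≤
          4 / (c0 q β ^ 2 * K0) := by
        intro a _
        rw [lin_mul, Ec_snd hq hn β σ₀ t (bU β σ₀ i a)]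
        calc _ ≤ 4 / (c0 q β * bn σ₀ i) ^ 2 * bn σ₀ i :=
              mul_le_mul_of_nonneg_left (Emu_bU hq hn hβ σ₀ i a) (by positivity)
          _ = 4 / (c0 q β ^ 2 * bn σ₀ i) := by field_simp
          _ ≤ _ := by gcongr
      refine (sum_le_sum h2).trans ?_
      rw [sum_const, card_univ, Fintype.card_fin, nsmul_eq_mul]
      have : q * (4 / (c0 q β ^ 2 * K0)) = 4 * q / (c0 q β ^ 2 * K0) := by ring
      rw [this]
      have : 0 ≤ K0 * m := by positivity
      linarith
    · have e : bB β K0 σ₀ i = bD σ₀ i := by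
        ext z; unfold bB; rw [if_neg hK]
      rw [e]
      refine (hD i).trans ?_
      have := mul_le_mul_of_nonneg_right (not_le.1 hK).le hm0
      have : 0 ≤ 4 * q / (c0 q β ^ 2 * K0) := by positivity
      linarith
  have main := hE.mono (f := fun z => h z.1 - h z.2) (fun z => (le_abs_self _).trans
    (pointwise (β := β) hq K0 (C4 q β) hC4.le σ₀ h h0 h1 hsym hG z.1 z.2))
  refine main.trans ?_
  rw [lin_add, lin_sum, lin_sum]
  refine add_le_add ?_ ?_
  · have h2 : ∀ v ∈ (univ : Finset (Fin n)), Ec q n β σ₀ t (fun z => Real.sqrt (4 * C4 q β / c0 q β / bn σ₀ (σ₀ v)) *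
        dis v (z.1, z.2)) ≤ m * Real.sqrt (4 * C4 q β / c0 q β / bn σ₀ (σ₀ v)) := by
      intro v _
      rw [lin_mul, mul_comm m]
      exact mul_le_mul_of_nonneg_left (hm v) (Real.sqrt_nonneg _)
    refine (sum_le_sum h2).trans ?_
    rw [← mul_sum]
    refine mul_le_mul_of_nonneg_left ?_ hm0
    rw [sum_basket σ₀ (fun i => Real.sqrt (4 * C4 q β / c0 q β / bn σ₀ i))]
    refine (sum_le_sum fun i _ => mul_sqrt_div_le (bn_nonneg σ₀ i) (by positivity) (bn_le σ₀ i)).trans ?_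
    simp
  · have h2 : ∀ i ∈ (univ : Finset (Fin q)), Ec q n β σ₀ t (fun z => 4 / (c0 q β * bn σ₀ i) * bD σ₀ i (z.1, z.2) +
        bB β K0 σ₀ i (z.1, z.2)) ≤ 4 / c0 q β * m + (4 * q / (c0 q β ^ 2 * K0) + K0 * m) := by
      intro i _
      rw [lin_add, lin_mul]
      refine add_le_add ?_ (hB i)
      have hb := bn_nonneg σ₀ i
      refine (mul_le_mul_of_nonneg_left (hD i) (by positivity)).trans ?_
      rcases eq_or_lt_of_le hb with h | h
      · rw [← h]; simp; positivity
      · refine le_of_eq ?_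
        field_simp
    refine (sum_le_sum h2).trans (le_of_eq ?_)
    rw [sum_const, card_univ, Fintype.card_fin, nsmul_eq_mul]

end PottsAux

namespace PottsAux

variable {q n : ℕ}

/-! ### Upper bound on the mixing time -/

lemma glauberDist_le (hq : 0 < q) (β : ℝ) (t : ℕ) (e : ℝ)
    (h : ∀ (σ₀ : Fin n → Fin q) (A : Finset (Fin n → Fin q)),
      |∑ x ∈ A, (glauberKernel q n β ^ t) σ₀ x - ∑ x ∈ A, pottsMeasure q n β x| ≤ e) :
    glauberDist q n β t ≤ e := by
  have : Nonempty (Fin q) := ⟨⟨0, hq⟩⟩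
  unfold glauberDist tvDist
  exact ciSup_le fun σ₀ => ciSup_le fun A => h σ₀ A

lemma le_glauberDist (β : ℝ) (t : ℕ) (σ₀ : Fin n → Fin q) (A : Finset (Fin n → Fin q)) :
    |∑ x ∈ A, (glauberKernel q n β ^ t) σ₀ x - ∑ x ∈ A, pottsMeasure q n β x|
      ≤ glauberDist q n β t := by
  have h1 : |∑ x ∈ A, (glauberKernel q n β ^ t) σ₀ x - ∑ x ∈ A, pottsMeasure q n β x| ≤
      tvDist (fun τ => (glauberKernel q n β ^ t) σ₀ τ) (pottsMeasure q n β) :=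
    le_ciSup (f := fun A : Finset (Fin n → Fin q) =>
      |∑ x ∈ A, (glauberKernel q n β ^ t) σ₀ x - ∑ x ∈ A, pottsMeasure q n β x|)
      (Set.finite_range _).bddAbove A
  exact h1.trans (le_ciSup (f := fun σ₀ : Fin n → Fin q =>
    tvDist (fun τ => (glauberKernel q n β ^ t) σ₀ τ) (pottsMeasure q n β))
      (Set.finite_range _).bddAbove σ₀)

lemma sqrt_eq_exp {x : ℝ} (hx : 0 < x) : Real.sqrt x = Real.exp (Real.log x / 2) := by
  rw [Real.exp_half, Real.exp_log hx]

lemma rate_upper {κ γ : ℝ} (hk : 0 < κ) (hk1 : κ ≤ 1) (hn : 2 ≤ n) (t : ℕ)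
    (ht : 1 / (2 * κ) * n * Real.log n + γ * n ≤ t) :
    (1 - κ / n) ^ t * Real.sqrt n ≤ Real.exp (-(κ * γ)) := by
  have hn0 : (0 : ℝ) < n := by exact_mod_cast (by omega : 0 < n)
  obtain ⟨-, -, r0, -⟩ := rate_bounds (n := n) hk hk1 hn
  have h1 : 1 - κ / n ≤ Real.exp (-(κ / n)) := by
    have := Real.add_one_le_exp (-(κ / n)); linarith
  calc (1 - κ / n) ^ t * Real.sqrt n ≤ Real.exp (-(κ / n)) ^ t * Real.sqrt n := by gcongr
    _ = Real.exp (t * (-(κ / n)) + Real.log n / 2) := by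
      rw [← Real.exp_nat_mul, sqrt_eq_exp hn0, Real.exp_add]
    _ ≤ _ := by
      refine Real.exp_le_exp.2 ?_
      have h2 := mul_le_mul_of_nonneg_left ht (by positivity : 0 ≤ κ / n)
      have e : κ / n * (1 / (2 * κ) * n * Real.log n + γ * n) = Real.log n / 2 + κ * γ := by
        field_simp
      rw [e] at h2
      linarith

lemma upper_bound (hq : 3 ≤ q) {β K : ℝ} (hβ : 0 ≤ β) (hk : 0 < kap q β) (hK : GoodK q β K)
    {ε : ℝ} (hε : 0 < ε) : ∃ γ : ℝ, 0 < γ ∧ ∀ᶠ n : ℕ in atTop, ∃ t : ℕ,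
      glauberDist q n β t ≤ ε ∧ (t : ℝ) ≤ alpha1 β q * n * Real.log n + γ * n := by
  have hq0 : 0 < q := by omega
  have hqr : (0 : ℝ) < q := by exact_mod_cast hq0
  have hc := c0_pos hq0 β
  have hC4 := C4_pos hq0 (β := β)
  have hk1 := kap_le_one hq0 hβ
  obtain ⟨C, hC, hcb⟩ := coupling_bound hq hβ hk hK
  set K0 : ℝ := 8 * q ^ 2 / (c0 q β ^ 2 * ε) with hK0d
  have hK0 : 0 < K0 := by positivity
  set B : ℝ := q * Real.sqrt (4 * C4 q β / c0 q β) + 4 * q / c0 q β + q * K0 with hB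
  have hB0 : 0 < B := by positivity
  set η : ℝ := ε / (4 * C * B) with hη
  have hη0 : 0 < η := by positivity
  set γ : ℝ := |Real.log η| / kap q β + 1 with hγ
  have hγ0 : 0 < γ := by positivity
  have hγη : Real.exp (-(kap q β * γ)) ≤ η := by
    rw [← Real.le_log_iff_exp_le hη0] 
    have e : kap q β * γ = |Real.log η| + kap q β := by rw [hγ]; field_simp
    rw [e]
    have := neg_abs_le (Real.log η)
    linarith
  refine ⟨γ + 2, by positivity, ?_⟩
  have hev : ∀ᶠ n : ℕ in atTop, (1 / η) ^ 2 ≤ (n : ℝ) :=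
    tendsto_natCast_atTop_atTop.eventually_ge_atTop _
  filter_upwards [hev, eventually_ge_atTop 2] with n hnη hn
  have hn0 : 0 < n := by omega
  have hnr : (0 : ℝ) < n := by exact_mod_cast hn0
  have hn1 : (1 : ℝ) ≤ n := by exact_mod_cast hn0
  have hal : alpha1 β q = 1 / (2 * kap q β) := rfl
  set s : ℝ := alpha1 β q * n * Real.log n + γ * n with hs
  have hs0 : 0 ≤ s := by
    have : 0 ≤ Real.log n := Real.log_nonneg hn1
    rw [hs, hal]; positivity
  set t : ℕ := ⌈s⌉₊ with ht
  refine ⟨t + n, ?_, ?_⟩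
  swap
  · have := (Nat.ceil_lt_add_one hs0).le
    push_cast
    rw [← ht] at this
    have e : alpha1 β q * n * Real.log n + (γ + 2) * n = s + 2 * n := by rw [hs]; ring
    rw [e]; linarith
  have hst : s ≤ t := Nat.le_ceil s
  obtain ⟨-, -, r0, -⟩ := rate_bounds (n := n) hk hk1 hn
  set m : ℝ := C * ((1 - kap q β / n) ^ t + 1 / n) with hm
  have hm0 : 0 ≤ m := by positivity
  have hsq1 : 1 ≤ Real.sqrt n := by rw [Real.one_le_sqrt]; exact hn1
  have hsq0 : 0 < Real.sqrt n := by linarith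
  have hms : m * Real.sqrt n ≤ C * (2 * η) := by
    have h1 := rate_upper (γ := γ) hk hk1 hn t (by rw [← hal]; exact hst)
    have h2 : 1 / (n : ℝ) * Real.sqrt n ≤ η := by
      have e : 1 / (n : ℝ) * Real.sqrt n = 1 / Real.sqrt n := by
        have := Real.mul_self_sqrt hnr.le
        field_simp
        nlinarith
      rw [e, div_le_iff₀ hsq0]
      have := Real.le_sqrt_of_sq_le hnη
      rw [div_le_iff₀ hη0] at this
      linarith
    have e : m * Real.sqrt n = C * ((1 - kap q β / n) ^ t * Real.sqrt n + 1 / n * Real.sqrt n) := by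
      rw [hm]; ring
    rw [e]
    refine mul_le_mul_of_nonneg_left ?_ hC.le
    linarith
  refine glauberDist_le hq0 β _ ε fun σ₀ A => ?_
  refine (upper_core hq0 hn0 hβ K0 m hK0 t σ₀ hm0 (fun v => hcb n hn σ₀ t v) A).trans ?_
  have hmm : m ≤ m * Real.sqrt n := le_mul_of_one_le_right hm0 hsq1
  have e1 : 4 * q / (c0 q β ^ 2 * K0) * q = ε / 2 := by rw [hK0d]; field_simp; norm_num
  have e2 : Real.sqrt (4 * C4 q β / c0 q β * n) = Real.sqrt (4 * C4 q β / c0 q β) * Real.sqrt n :=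
    Real.sqrt_mul (by positivity) _
  have e3 : C * (2 * η) * B = ε / 2 := by rw [hη]; field_simp; norm_num
  have h3 := mul_le_mul_of_nonneg_right hms hB0.le
  rw [e3] at h3
  rw [e2]
  have h4 : m * (4 * q / c0 q β + q * K0) ≤ m * Real.sqrt n * (4 * q / c0 q β + q * K0) :=
    mul_le_mul_of_nonneg_right hmm (by positivity)
  have e5 : m * (q * (Real.sqrt (4 * C4 q β / c0 q β) * Real.sqrt n)) + q * (4 / c0 q β * m +
      (4 * q / (c0 q β ^ 2 * K0) + K0 * m)) =
      m * Real.sqrt n * (q * Real.sqrt (4 * C4 q β / c0 q β)) +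
      m * (4 * q / c0 q β + q * K0) + 4 * q / (c0 q β ^ 2 * K0) * q := by ring
  rw [e5, e1]
  have e6 : m * Real.sqrt n * B = m * Real.sqrt n * (q * Real.sqrt (4 * C4 q β / c0 q β)) +
     m * Real.sqrt n * (4 * q / c0 q β + q * K0) := by rw [hB]; ring
  linarith

end PottsAux

namespace PottsAux

variable {q n : ℕ}

/-! ### Lower bound on the mixing time -/

noncomputable def Psi (A K : ℝ) (k : Fin q) (σ : Fin n → Fin q) : ℝ := yy σ k - A * Phi K σ

lemma phi_lip {K : ℝ} (hK : 0 ≤ K) : ∃ L : ℝ, 0 < L ∧ ∀ a b : ℝ, |a| ≤ 1 → |b| ≤ 1 → |a - b| ≤ 1 →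
    phi K a - phi K b ≤ L * |a - b| := by
  obtain ⟨C, hC, hT⟩ := phi_taylor hK
  refine ⟨(2 + K) * Real.exp K + C, by positivity, fun a b ha hb hab => ?_⟩
  have h1 := hT b (a - b) hb hab (by have := (abs_le.1 ha).2; linarith)
  have e : b + (a - b) = a := by ring
  rw [e] at h1
  have h2 := dphi_le hK (abs_le.1 hb).2
  have h3 : dphi K b * (a - b) ≤ (2 + K) * Real.exp K * |a - b| :=
    (mul_le_mul_of_nonneg_left (le_abs_self _) (dphi_nonneg hK b)).trans
      (mul_le_mul_of_nonneg_right h2 (abs_nonneg _))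
  have h4 : (a - b) ^ 2 ≤ |a - b| := by
    rw [← sq_abs, sq]
    exact mul_le_of_le_one_left (abs_nonneg _) hab
  have h5 := mul_le_mul_of_nonneg_left h4 hC.le
  linarith

lemma yy_drift (hq : 0 < q) (hn : 0 < n) {β : ℝ} (hβ : 0 ≤ β) (σ : Fin n → Fin q) (k : Fin q) :
    (1 - kap q β / n) * yy σ k - C5 β * (VV σ + 1 / n) / n ≤ Pop β (fun z => yy z k) σ := by
  have hnr : (0 : ℝ) < n := by exact_mod_cast hn
  have hE := isExp_Av hq hn β σ
  have e : Pop β (fun z => yy z k) σ = 1 / n * Av β σ (hh σ k) + yy σ k := by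
    rw [Pop_apply, ← hE.affine]
    congr 1
    ext p
    change yy (Function.update σ p.1 p.2) k = _
    rw [yy_update]; ring
  rw [e, Av_hh hq hn]
  have h1 : 1 / (q:ℝ) + 2 * β / q * yy σ k - C5 β * (VV σ + 1 / n) ≤
      1 / n * ∑ u, rp β σ u k := by
    have h2 : ∑ u : Fin n, (1 / (q:ℝ) + 2 * β / q * yy σ k - C5 β * (VV σ + 1 / n)) ≤
        ∑ u, rp β σ u k := by
      refine sum_le_sum fun u _ => ?_
      have := (abs_le.1 (rp_lin hq hn hβ σ u k)).1
      linarith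
    rw [sum_const, card_univ, Fintype.card_fin, nsmul_eq_mul] at h2
    rw [one_div_mul_eq_div, le_div_iff₀ hnr]
    linarith
  have h3 : pr σ k = yy σ k + 1 / q := by unfold yy; ring
  rw [h3]
  have h4 := mul_le_mul_of_nonneg_left h1 (by positivity : (0:ℝ) ≤ 1 / n)
  have e2 : (1 - kap q β / n) * yy σ k - C5 β * (VV σ + 1 / n) / n = 
     1 / n * (1 / (q:ℝ) + 2 * β / q * yy σ k - C5 β * (VV σ + 1 / n)) -
      1 / n * (yy σ k + 1 / q) + yy σ k := by
    unfold kap; ring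
  rw [e2, mul_sub]
  linarith

lemma Psi_props (hq : 3 ≤ q) {β K : ℝ} (hβ : 0 ≤ β) (hk : 0 < kap q β) (hK : GoodK q β K) :
    ∃ A D1 D2 : ℝ, 0 ≤ A ∧ 0 ≤ D1 ∧ 0 ≤ D2 ∧ ∀ n : ℕ, 0 < n → ∀ (k : Fin q) (σ : Fin n → Fin q),
      ((1 - kap q β / n) * Psi A K k σ - D1 / n ^ 2 ≤ Pop β (Psi A K k) σ) ∧
      ∀ p : Fin n × Fin q, |Psi A K k (Function.update σ p.1 p.2) - Psi A K k σ| ≤ D2 / n := by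
  have hq0 : 0 < q := by omega
  have hqr : (0 : ℝ) < q := by exact_mod_cast hq0
  have hC5 := C5_nonneg hβ
  obtain ⟨C, hC, hd⟩ := drift_Phi hq hβ hK
  obtain ⟨L, hL, hlip⟩ := phi_lip hK.1.le
  set A : ℝ := 2 * C5 β * q ^ 2 / kap q β with hA
  have hA0 : 0 ≤ A := by positivity
  refine ⟨A, C5 β + A * C, 1 + A * (q * L), hA0, by positivity, by positivity,
    fun n hn k σ => ⟨?_, fun p => ?_⟩⟩
  · have hnr : (0 : ℝ) < n := by exact_mod_cast hn
    have h1 := yy_drift hq0 hn hβ σ k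
    have h2 := hd n hn σ
    have h3 := V_le_Phi hq0 hn hK.1.le σ
    have e : Pop β (Psi A K k) σ = Pop β (fun z => yy z k) σ - A * Pop β (Phi K) σ := by
      have : Psi A K k = (fun z : Fin n → Fin q => yy z k) - A • Phi K := by
        ext z; simp [Psi]
      rw [this, map_sub, map_smul]; simp
    rw [e]; unfold Psi
    have h4 := mul_le_mul_of_nonneg_left h2 hA0
    have h5 : C5 β * VV σ / n ≤ C5 β * (q ^ 2 * Phi K σ) / n := by gcongr
    have e5 : C5 β * (q ^ 2 * Phi K σ) / n = A * (kap q β / 2 / n) * Phi K σ := by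
      rw [hA]; field_simp
    rw [e5] at h5
    have e6 : C5 β * (VV σ + 1 / n) / n = C5 β * VV σ / n + C5 β / n ^ 2 := by field_simp
    rw [e6] at h1
    have e7 : A * ((1 - 3 / 2 * kap q β / n) * Phi K σ + C / n ^ 2) =
      (1 - kap q β / n) * (A * Phi K σ) - A * (kap q β / 2 / n) * Phi K σ + A * C / n ^ 2 := by ring
    rw [e7] at h4
    rw [mul_sub, add_div]
    linarith
  · have hnr : (0 : ℝ) < n := by exact_mod_cast hn
    have hn1 : (1 : ℝ) ≤ n := by exact_mod_cast hn
    have hstep : ∀ j, |yy (Function.update σ p.1 p.2) j - yy σ j| ≤ 1 / n := by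
      intro j
      rw [yy_update, add_sub_cancel_left, abs_div, abs_of_pos hnr]
      gcongr
      exact hh_abs σ j p
    have h1n : 1 / (n : ℝ) ≤ 1 := by rw [div_le_one hnr]; exact hn1
    have hphi : ∀ j, |phi K (yy (Function.update σ p.1 p.2) j) - phi K (yy σ j)| ≤ L * (1 / n) := by
      intro j
      have a1 := yy_abs hq0 hn σ j
      have a2 := yy_abs hq0 hn (Function.update σ p.1 p.2) j
      have a3 := hstep j
      have a4 : |yy σ j - yy (Function.update σ p.1 p.2) j| ≤ 1 / n := by rwa [abs_sub_comm]
      have b1 := hlip _ _ a2 a1 (a3.trans h1n)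
      have b2 := hlip _ _ a1 a2 (a4.trans h1n)
      have b3 := mul_le_mul_of_nonneg_left a3 hL.le
      have b4 := mul_le_mul_of_nonneg_left a4 hL.le
      rw [abs_le]; constructor <;> linarith
    have hPhi : |Phi K (Function.update σ p.1 p.2) - Phi K σ| ≤ q * (L * (1 / n)) := by
      unfold Phi
      rw [← sum_sub_distrib]
      refine (abs_sum_le_sum_abs _ _).trans ((sum_le_sum fun j _ => hphi j).trans (le_of_eq ?_))
      rw [sum_const, card_univ, Fintype.card_fin, nsmul_eq_mul]
    have e : Psi A K k (Function.update σ p.1 p.2) - Psi A K k σ =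
      (yy (Function.update σ p.1 p.2) k - yy σ k) -
        A * (Phi K (Function.update σ p.1 p.2) - Phi K σ) := by unfold Psi; ring
    rw [e]
    refine (abs_sub _ _).trans ?_
    rw [abs_mul, abs_of_nonneg hA0]
    have h5 := mul_le_mul_of_nonneg_left hPhi hA0
    have e8 : (1 + A * (q * L)) / n = 1 / n + A * (q * (L * (1 / n))) := by ring
    rw [e8]
    exact add_le_add (hstep k) h5

lemma lower_moment (hq : 3 ≤ q) {β K : ℝ} (hβ : 0 ≤ β) (hk : 0 < kap q β) (hK : GoodK q β K) :
    ∃ A D : ℝ, 0 ≤ A ∧ 0 < D ∧ ∀ n : ℕ, 2 ≤ n → ∀ (k : Fin q) (σ : Fin n → Fin q) (b : ℝ),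
      0 ≤ b → b ≤ 1 → b ≤ Psi A K k σ → ∀ t : ℕ,
      (Pop β ^ t) (fun z => max ((1 - kap q β / n) ^ t * b - Psi A K k z) 0 ^ 2) σ ≤ D / n := by
  have hq0 : 0 < q := by omega
  have hqr : (0 : ℝ) < q := by exact_mod_cast hq0
  have hk1 := kap_le_one hq0 hβ
  obtain ⟨A, D1, D2, hA, hD1, hD2, hP⟩ := Psi_props hq hβ hk hK
  set R : ℝ := 2 + A * (q * Real.exp K) with hR
  have hR0 : 0 ≤ R := by positivity
  set D4 : ℝ := 2 * R * D1 + (1 + D2) ^ 2 with hD4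
  have hD40 : 0 < D4 := by positivity
  refine ⟨A, D4 / (2 * kap q β), hA, by positivity, fun n hn k σ b hb0 hb1 hbP t => ?_⟩
  have hn0 : 0 < n := by omega
  have hnr : (0 : ℝ) < n := by exact_mod_cast hn0
  have hn2 : (2 : ℝ) ≤ n := by exact_mod_cast hn
  obtain ⟨-, -, r0, r1⟩ := rate_bounds (n := n) hk hk1 hn
  have hr2 : 0 ≤ 1 - 2 * kap q β / n := by
    have : 2 * kap q β / n ≤ 1 := by rw [div_le_one hnr]; linarith
    linarith
  have hone : ∀ c : ℝ, 0 ≤ c → c ≤ 1 → ∀ z : Fin n → Fin q,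
      Pop β (fun z => max ((1 - kap q β / n) * c - Psi A K k z) 0 ^ 2) z ≤
        (1 - 2 * kap q β / n) * max (c - Psi A K k z) 0 ^ 2 + D4 / n ^ 2 := by
    intro c hc0 hc1 z
    have hE := isExp_Av hq0 hn0 β z
    obtain ⟨p1, p2⟩ := hP n hn0 k z
    set x := c - Psi A K k z with hx
    set dP : Fin n × Fin q → ℝ := fun p => Psi A K k (Function.update z p.1 p.2) with hdP
    have hPop : Pop β (Psi A K k) z = Av β z dP := by rw [Pop_apply]
    have h1 : Pop β (fun z => max ((1 - kap q β / n) * c - Psi A K k z) 0 ^ 2) z ≤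
        Av β z (fun p => -(2 * max x 0) * dP p + (max x 0 ^ 2 + 2 * max x 0 * 
          (Psi A K k z - kap q β / n * c) + ((1 + D2) / n) ^ 2)) := by
      rw [Pop_apply]
      refine hE.mono fun p => ?_
      change max ((1 - kap q β / n) * c - dP p) 0 ^ 2 ≤ _
      have e : (1 - kap q β / n) * c - dP p = x + (Psi A K k z - kap q β / n * c - dP p) := by
        rw [hx]; ring
      rw [e]
      refine (max_sq_le _ _).trans ?_
      have h2 : (Psi A K k z - kap q β / n * c - dP p) ^ 2 ≤ ((1 + D2) / n) ^ 2 := by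
        rw [← sq_abs]
        refine pow_le_pow_left₀ (abs_nonneg _) ?_ 2
        have h3 := p2 p
        have h4 : kap q β / n * c ≤ 1 / n := by
          have : kap q β * c ≤ 1 := mul_le_one₀ hk1 hc0 hc1
          rw [div_mul_eq_mul_div]; gcongr
        have h5 : 0 ≤ kap q β / n * c := by positivity
        change |dP p - _| ≤ _ at h3
        rw [abs_le] at h3 ⊢
        rw [add_div]
        constructor <;> linarith [h3.1, h3.2]
      linarith
    rw [hE.affine, ← hPop] at h1
    have hmx : 0 ≤ max x 0 := le_max_right _ _
    have hxR : max x 0 ≤ R := by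
      refine max_le ?_ hR0
      have h6 := Phi_le hq0 hn0 hK.1.le z
      have h7 := (abs_le.1 (yy_abs hq0 hn0 z k)).1
      have h8 := mul_le_mul_of_nonneg_left h6 hA
      rw [hx, hR]; unfold Psi; linarith
    have h6 : max x 0 * x = max x 0 ^ 2 := by
      rcases le_total 0 x with h | h
      · rw [max_eq_left h]; ring
      · rw [max_eq_right h]; simp
    have h9 := mul_le_mul_of_nonneg_left p1 (by positivity : 0 ≤ 2 * max x 0)
    have h10 : 2 * max x 0 * (D1 / n ^ 2) ≤ 2 * R * (D1 / n ^ 2) := by gcongr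
    have e11 : (1 - 2 * kap q β / n) * max x 0 ^ 2 + D4 / n ^ 2 =
      max x 0 ^ 2 - 2 * (kap q β / n) * (max x 0 * x) + 2 * R * (D1 / n ^ 2) + ((1 + D2) / n) ^ 2 := by
      rw [h6, hD4]; ring
    rw [e11]
    have e12 : 2 * (kap q β / n) * (max x 0 * x) = 2 * max x 0 * (kap q β / n * c) - 2 * max x 0 * (kap q β / n * Psi A K k z) := by
      rw [hx]; ring
    rw [e12]
    linarith
  induction t with
  | zero =>
    simp only [pow_zero, one_mul, Module.End.one_apply]
    rw [max_eq_right (by linarith)]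
    rw [zero_pow two_ne_zero]; positivity
  | succ t ih =>
    have hMk := (isMk_Pop (n := n) hq0 hn0 β).pow t
    have hc0 : 0 ≤ (1 - kap q β / n) ^ t * b := by positivity
    have hc1 : (1 - kap q β / n) ^ t * b ≤ 1 :=
      mul_le_one₀ (pow_le_one₀ r0 r1.le) hb0 hb1
    have h1 := hMk.mono (hone _ hc0 hc1) σ
    have h2 := (hMk.at σ).affine (1 - 2 * kap q β / n) (D4 / n ^ 2)
      (fun z => max ((1 - kap q β / n) ^ t * b - Psi A K k z) 0 ^ 2)
    rw [evalAt_apply, evalAt_apply] at h2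
    have h3 := h1.trans (le_of_eq h2)
    rw [pow_succ (Pop β), Module.End.mul_apply]
    have e : (1 - kap q β / n) ^ (t + 1) * b = (1 - kap q β / n) * ((1 - kap q β / n) ^ t * b) := by ring
    rw [e]
    refine h3.trans ?_
    have h4 := mul_le_mul_of_nonneg_left ih hr2
    have e5 : (1 - 2 * kap q β / n) * (D4 / (2 * kap q β) / n) + D4 / n ^ 2 = D4 / (2 * kap q β) / n := by
      field_simp; ring
    linarith

end PottsAux

namespace PottsAux

variable {q n : ℕ}

/-- a configuration with `c` vertices of each color but the last one, which takes the rest -/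
def startCfg (hq : 0 < q) (n c : ℕ) : Fin n → Fin q :=
  fun v => ⟨min (v.val / c) (q - 1), by omega⟩

lemma startCfg_pr (hq : 0 < q) {c : ℕ} (hc : 0 < c) (hcn : c * q ≤ n) (k : Fin q)
    (hk : k.val < q - 1) : pr (startCfg hq n c) k = c / n := by
  have h1 : ∀ v : Fin n, (if startCfg hq n c v = k then (1 : ℝ) else 0) =
      (fun w : ℕ => if w / c = k.val then (1 : ℝ) else 0) v.val := by
    intro v
    have : startCfg hq n c v = k ↔ v.val / c = k.val := by
      unfold startCfg
      rw [Fin.ext_iff]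
      change min (v.val / c) (q - 1) = k.val ↔ _
      omega
    simp only [this]
  have h2 : ∑ v : Fin n, (if startCfg hq n c v = k then (1 : ℝ) else 0) = c := by
    rw [sum_congr rfl fun v _ => h1 v,
      Fin.sum_univ_eq_sum_range (fun w : ℕ => if w / c = k.val then (1 : ℝ) else 0) n,
      sum_boole]
    have h3 : (range n).filter (fun w => w / c = k.val) = Ico (k.val * c) (k.val * c + c) := by
      ext w
      rw [mem_filter, mem_range, mem_Ico, Nat.div_eq_iff hc]
      have h4 : k.val * c + c ≤ n := by
        have : (k.val + 1) * c ≤ q * c := Nat.mul_le_mul_right c (by omega)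
        rw [add_mul, one_mul, mul_comm q] at this
        omega
      omega
    rw [h3]
    simp
  unfold pr
  rw [h2]; ring

lemma start_exists (hq : 3 ≤ q) {A K : ℝ} (hA : 0 ≤ A) (hK : 0 ≤ K) : ∃ b : ℝ, 0 < b ∧ b ≤ 1 ∧
    ∀ᶠ n : ℕ in atTop, ∃ (k : Fin q) (σ : Fin n → Fin q), b ≤ Psi A K k σ := by
  have hq0 : 0 < q := by omega
  have hq3 : (3 : ℝ) ≤ q := by exact_mod_cast hq
  have hqr : (0 : ℝ) < q := by linarith
  set ρ : ℝ := 1 / (8 * q ^ 2 * (A * Real.exp K) + 2 * q) with hρ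
  have hden : 0 < 8 * q ^ 2 * (A * Real.exp K) + 2 * q := by positivity
  have hρ0 : 0 < ρ := by positivity
  have hρq : ρ ≤ 1 / (2 * q) := by
    rw [hρ]; gcongr
    have : 0 ≤ 8 * q ^ 2 * (A * Real.exp K) := by positivity
    linarith
  have hρ1 : ρ * (8 * q ^ 2 * (A * Real.exp K)) ≤ 1 := by
    have : ρ * (8 * q ^ 2 * (A * Real.exp K) + 2 * q) = 1 := by rw [hρ]; field_simp
    have : 0 ≤ ρ * (2 * q) := by positivity
    linarith
  have hq2 : 1 / (2 * (q : ℝ)) ≤ 1 / 2 := by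
    apply one_div_le_one_div_of_le <;> linarith
  refine ⟨ρ / 2, by positivity, by linarith, ?_⟩
  have hev : ∀ᶠ n : ℕ in atTop, 1 / ρ ≤ (n : ℝ) :=
    tendsto_natCast_atTop_atTop.eventually_ge_atTop _
  have hev2 : ∀ᶠ n : ℕ in atTop, 2 * (q : ℝ) ≤ (n : ℝ) :=
    tendsto_natCast_atTop_atTop.eventually_ge_atTop _
  filter_upwards [hev, hev2] with n hn1 hn2
  have hnr : (0 : ℝ) < n := by linarith
  have hn : 0 < n := by exact_mod_cast hnr
  have hnρ : 1 / (n : ℝ) ≤ ρ := by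
    rw [div_le_iff₀ hρ0] at hn1
    rw [div_le_iff₀ hnr]; linarith
  set s : ℝ := n * (1 / q - ρ) with hs
  have hs1 : 1 ≤ s := by
    have e : 1 / (q:ℝ) = 1 / (2 * q) + 1 / (2 * q) := by field_simp; norm_num
    have : n * (1 / (2 * (q : ℝ))) ≤ s := by rw [hs]; gcongr; linarith
    refine le_trans ?_ this
    rw [mul_one_div, le_div_iff₀ (by positivity)]; linarith
  set c : ℕ := ⌊s⌋₊ with hc
  have hcs : (c : ℝ) ≤ s := Nat.floor_le (by linarith)
  have hsc : s < c + 1 := Nat.lt_floor_add_one s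
  have hc0 : 0 < c := Nat.floor_pos.2 hs1
  have hcn : c * q ≤ n := by
    have : (c : ℝ) * q ≤ n := by
      calc (c : ℝ) * q ≤ s * q := by gcongr
        _ = n - n * ρ * q := by rw [hs]; field_simp
        _ ≤ n := by have : 0 ≤ n * ρ * q := by positivity
                    linarith
    exact_mod_cast this
  set σ := startCfg hq0 n c with hσ
  set k : Fin q := ⟨q - 1, by omega⟩ with hk
  refine ⟨k, σ, ?_⟩
  have hy : ∀ j ≠ k, yy σ j = c / n - 1 / q := by
    intro j hj
    unfold yy
    rw [hσ, startCfg_pr hq0 hc0 hcn j]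
    have : j.val ≠ q - 1 := fun h => hj (Fin.ext h)
    omega
  have hcard : ((univ.erase k).card : ℝ) = q - 1 := by
    rw [card_erase_of_mem (mem_univ k), card_univ, Fintype.card_fin, Nat.cast_pred hq0]
  have hsumk : yy σ k = (q - 1) * (1 / q - c / n) := by
    have h1 := yy_sum hq0 hn σ
    rw [← add_sum_erase univ _ (mem_univ k),
      sum_congr rfl (fun j hj => hy j (ne_of_mem_erase hj)), sum_const, nsmul_eq_mul, hcard] at h1
    linarith
  have hV : VV σ = (q - 1) * q * (1 / q - c / n) ^ 2 := by
    unfold VV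
    rw [← add_sum_erase univ _ (mem_univ k),
      sum_congr rfl (fun j hj => by rw [hy j (ne_of_mem_erase hj)]), sum_const, nsmul_eq_mul, hcard,
      hsumk]
    ring
  set d : ℝ := 1 / q - c / n with hd
  have hd1 : ρ ≤ d := by
    have : (c : ℝ) / n ≤ 1 / q - ρ := by rw [div_le_iff₀ hnr, mul_comm]; exact hcs
    rw [hd]; linarith
  have hd2 : d ≤ 2 * ρ := by
    have : 1 / q - ρ ≤ (c + 1 : ℝ) / n := by rw [le_div_iff₀ hnr, mul_comm]; exact hsc.le
    rw [add_div] at this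
    rw [hd]; linarith
  have hΦ := Phi_le_V hq0 hn hK σ
  have h1 := mul_le_mul_of_nonneg_left hΦ hA
  rw [hV] at h1
  unfold Psi
  rw [hsumk]
  have hd0 : 0 < d := by linarith
  have h2 : A * (Real.exp K * ((q - 1) * q * d ^ 2)) ≤ (q - 1) * d * (1 / 4) * 1 := by
    have : A * (Real.exp K * ((q - 1) * q * d ^ 2)) ≤ (q - 1) * d * (1 / 4) *
        (ρ * (8 * q ^ 2 * (A * Real.exp K))) := by
      have h3 : 0 ≤ ((q : ℝ) - 1) * d * (A * Real.exp K) * q := by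
        have : 0 ≤ (q : ℝ) - 1 := by linarith
        positivity
      have h4 : d ≤ 2 * ρ * q := by nlinarith
      have h5 := mul_le_mul_of_nonneg_left h4 h3
      linarith
    refine this.trans (mul_le_mul_of_nonneg_left hρ1 ?_)
    have : 0 ≤ (q : ℝ) - 1 := by linarith
    positivity
  have h6 : 2 * ρ ≤ (q - 1) * d := by nlinarith
  linarith

lemma rate_lower {κ γ : ℝ} (hk : 0 < κ) (hk1 : κ ≤ 1) (hn : 2 ≤ n) (t : ℕ)
    (ht : (t : ℝ) ≤ 1 / (2 * κ) * n * Real.log n - γ * n) (hγ : 0 ≤ γ) :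
    Real.exp (2 * κ * γ - 2) ≤ n * ((1 - κ / n) ^ t) ^ 2 := by
  have hn2 : (2 : ℝ) ≤ n := by exact_mod_cast hn
  have hn0 : (0 : ℝ) < n := by linarith
  set x := κ / n with hx
  have hx0 : 0 < x := by positivity
  have hx2 : x ≤ 1 / 2 := by rw [hx, div_le_iff₀ hn0]; linarith
  have h1x : 0 < 1 - x := by linarith
  have h1 : Real.exp (-x - 2 * x ^ 2) ≤ 1 - x := by
    rw [← Real.le_log_iff_exp_le h1x]
    refine le_trans ?_ (Real.one_sub_inv_le_log_of_pos h1x)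
    rw [inv_eq_one_div, le_sub_iff_add_le, ← le_sub_iff_add_le', div_le_iff₀ h1x]
    nlinarith [mul_nonneg (sq_nonneg x) (by linarith : 0 ≤ 1 / 2 - x)]
  have hl0 : 0 ≤ Real.log n := Real.log_nonneg (by linarith)
  have hl1 : Real.log n ≤ n := (Real.log_le_sub_one_of_pos hn0).trans (by linarith)
  calc Real.exp (2 * κ * γ - 2)
      ≤ Real.exp (Real.log n + (2 * t : ℕ) * (-x - 2 * x ^ 2)) := by
        refine Real.exp_le_exp.2 ?_
        push_cast
        have h2 := mul_le_mul_of_nonneg_left ht (by positivity : 0 ≤ 2 * x)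
        have e2 : 2 * x * (1 / (2 * κ) * n * Real.log n - γ * n) = Real.log n - 2 * κ * γ := by
          rw [hx]; field_simp
        rw [e2] at h2
        have h3 : 2 * x * t * (2 * x) ≤ 2 := by
          have h4 : 2 * x * t ≤ n := by
            have : 0 ≤ 2 * κ * γ := by positivity
            linarith
          calc 2 * x * t * (2 * x) ≤ n * (2 * x) := by gcongr
            _ = 2 * κ := by rw [hx]; field_simp
            _ ≤ 2 := by linarith
        nlinarith
    _ = n * (Real.exp (-x - 2 * x ^ 2) ^ t) ^ 2 := by
        rw [Real.exp_add, Real.exp_log hn0, Real.exp_nat_mul, mul_comm 2 t, pow_mul]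
    _ ≤ _ := by gcongr

lemma lower_bound (hq : 3 ≤ q) {β K : ℝ} (hβ : 0 ≤ β) (hk : 0 < kap q β) (hK : GoodK q β K)
    {ε : ℝ} (hε : 0 < ε) : ∃ γ : ℝ, 0 < γ ∧ ∀ᶠ n : ℕ in atTop, ∀ t : ℕ,
      (t : ℝ) ≤ alpha1 β q * n * Real.log n - γ * n → 1 - ε < glauberDist q n β t := by
  have hq0 : 0 < q := by omega
  have hqr : (0 : ℝ) < q := by exact_mod_cast hq0
  have hk1 := kap_le_one hq0 hβ
  obtain ⟨C, hC, hmom⟩ := Phi_moments hq hβ hk hK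
  obtain ⟨A, D, hA, hD, hlow⟩ := lower_moment hq hβ hk hK
  obtain ⟨b, hb0, hb1, hst⟩ := start_exists hq hA hK.1.le
  set G : ℝ := 4 * (D + q ^ 2 * C) / (ε * b ^ 2) with hG
  have hG0 : 0 < G := by positivity
  set γ : ℝ := (|Real.log G| + 3) / (2 * kap q β) with hγ
  have hγ0 : 0 < γ := by positivity
  have hGγ : G < Real.exp (2 * kap q β * γ - 2) := by
    rw [← Real.log_lt_iff_lt_exp hG0]
    have e : 2 * kap q β * γ = |Real.log G| + 3 := by rw [hγ]; field_simp
    rw [e]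
    have := le_abs_self (Real.log G)
    linarith
  refine ⟨γ, hγ0, ?_⟩
  filter_upwards [hst, eventually_ge_atTop 2] with n hs hn t ht
  have hn0 : 0 < n := by omega
  have hnr : (0 : ℝ) < n := by exact_mod_cast hn0
  obtain ⟨k, σ, hbσ⟩ := hs
  have hal : alpha1 β q = 1 / (2 * kap q β) := rfl
  obtain ⟨-, -, r0, -⟩ := rate_bounds (n := n) hk hk1 hn
  have hR := rate_lower (γ := γ) hk hk1 hn t (by rw [← hal]; exact ht) hγ0.le
  set r : ℝ := (1 - kap q β / n) ^ t with hr
  have hr0 : 0 ≤ r := by positivity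
  have hrpos : 0 < n * r ^ 2 := (Real.exp_pos _).trans_le hR
  set S : Finset (Fin n → Fin q) := univ.filter (fun z => r * b / 2 < yy z k) with hS
  refine lt_of_lt_of_le ?_ (le_glauberDist β t σ S)
  refine lt_of_lt_of_le ?_ (le_abs_self _)
  -- the two measures as expectations
  set ind : (Fin n → Fin q) → ℝ := fun z => if z ∈ S then 1 else 0 with hind
  have e1 : ∑ x ∈ S, (glauberKernel q n β ^ t) σ x = (Pop β ^ t) ind σ := by
    rw [← mulVec_kernel_pow hq0]
    simp [Matrix.mulVec, dotProduct, hind]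
  have e2 : ∑ x ∈ S, pottsMeasure q n β x = Emu q n β ind := by
    rw [Emu_apply]
    simp [hind]
  rw [e1, e2]
  have hMk := (isMk_Pop (n := n) hq0 hn0 β).pow t
  have hE := hMk.at σ
  have h1 := hlow n hn k σ b hb0.le hb1 hbσ t
  rw [← hr] at h1
  have h2 : (Pop β ^ t) (fun z => -(r * b / 2) ^ 2 * ind z + (r * b / 2) ^ 2) σ ≤ D / n := by
    refine (hMk.mono (fun z => ?_) σ).trans h1
    by_cases hz : z ∈ S
    · simp only [hind, if_pos hz]
      have : 0 ≤ max (r * b - Psi A K k z) 0 ^ 2 := sq_nonneg _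
      linarith
    · simp only [hind, if_neg hz]
      have h3 : yy z k ≤ r * b / 2 := by
        by_contra h; exact hz (by rw [hS, mem_filter]; exact ⟨mem_univ _, not_le.1 h⟩)
      have h4 : Psi A K k z ≤ yy z k := by
        unfold Psi
        have := mul_nonneg hA (Phi_nonneg K z)
        linarith
      have h5 : r * b / 2 ≤ max (r * b - Psi A K k z) 0 := le_max_of_le_left (by linarith)
      have h6 := pow_le_pow_left₀ (by positivity) h5 2
      linarith
  have h3 := hE.affine (-(r * b / 2) ^ 2) ((r * b / 2) ^ 2) ind
  rw [evalAt_apply, evalAt_apply] at h3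
  rw [h3] at h2
  have h4 : (r * b / 2) ^ 2 * Emu q n β ind ≤ q ^ 2 * C / n := by
    rw [← lin_mul]
    have h5 : Emu q n β (fun z => (r * b / 2) ^ 2 * ind z) ≤
        Emu q n β (fun z => q ^ 2 * Phi K z) := by
      refine (isExp_Emu (n := n) hq0 β).mono fun z => ?_
      refine le_trans ?_ (V_le_Phi hq0 hn0 hK.1.le z)
      by_cases hz : z ∈ S
      · simp only [hind, if_pos hz]
        rw [hS, mem_filter] at hz
        have h6 := pow_le_pow_left₀ (by positivity) hz.2.le 2
        have h7 : yy z k ^ 2 ≤ VV z :=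
          single_le_sum (f := fun j => yy z j ^ 2) (fun j _ => sq_nonneg _) (mem_univ k)
        linarith
      · simp only [hind, if_neg hz, mul_zero]
        exact VV_nonneg z
    refine h5.trans ?_
    rw [lin_mul, mul_div_assoc]
    exact mul_le_mul_of_nonneg_left (hmom n hn).2 (by positivity)
  have h8 : (r * b / 2) ^ 2 * (1 - ((Pop β ^ t) ind σ - Emu q n β ind)) ≤ (D + q ^ 2 * C) / n := by
    rw [add_div]; linarith
  have h9 : (D + q ^ 2 * C) / n < (r * b / 2) ^ 2 * ε := by
    have h10 := hGγ.trans_le hR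
    rw [hG, div_lt_iff₀ (by positivity)] at h10
    rw [div_lt_iff₀ hnr]
    nlinarith
  have h11 := lt_of_mul_lt_mul_left (h8.trans_lt h9) (sq_nonneg _)
  linarith

end PottsAux

/-- **Theorem A (subcritical cutoff).** For `q ≥ 3` and `0 ≤ β < β_s(q)`,
the Glauber dynamics for the `q`-state Curie–Weiss Potts model exhibits cutoff at
time `α₁(β,q) n log n` with window of order `n`. -/
theorem subcritical_cutoff (q : ℕ) (hq : 3 ≤ q) (β : ℝ)
    (hβ0 : 0 ≤ β) (hβ : β < betaS q) :
    ∀ ε ∈ Set.Ioo (0 : ℝ) (1 / 2), ∃ γ : ℝ, 0 < γ ∧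
      ∀ᶠ n : ℕ in atTop,
        (mixingTime q n β ε : ℝ) ≤ alpha1 β q * n * Real.log n + γ * n ∧
        alpha1 β q * n * Real.log n - γ * n ≤ (mixingTime q n β (1 - ε) : ℝ) := by
  have hq0 : 0 < q := by omega
  obtain ⟨hk, -⟩ := PottsAux.subcrit q hq β hβ0 hβ
  obtain ⟨K, hK⟩ := PottsAux.exists_K q hq β hβ0 hβ
  have hG : PottsAux.GoodK q β K := hK
  intro ε hε
  obtain ⟨hε0, hε1⟩ := hε
  obtain ⟨γ₁, hγ₁, hU⟩ := PottsAux.upper_bound hq hβ0 hk hG hε0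
  obtain ⟨γ₂, hγ₂, hL⟩ := PottsAux.lower_bound hq hβ0 hk hG hε0
  refine ⟨γ₁ + γ₂, by positivity, ?_⟩
  filter_upwards [hU, hL] with n hu hl
  obtain ⟨t, ht1, ht2⟩ := hu
  have h1 : 0 ≤ γ₁ * (n : ℝ) := by positivity
  have h2 : 0 ≤ γ₂ * (n : ℝ) := by positivity
  constructor
  · have h3 : mixingTime q n β ε ≤ t := Nat.sInf_le ht1
    have h4 : (mixingTime q n β ε : ℝ) ≤ t := by exact_mod_cast h3
    rw [add_mul]; linarith
  · by_contra hcon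
    have hmem : glauberDist q n β (mixingTime q n β (1 - ε)) ≤ 1 - ε :=
      Nat.sInf_mem (s := {t : ℕ | glauberDist q n β t ≤ 1 - ε})
        ⟨t, ht1.trans (by linarith)⟩
    have h5 := hl (mixingTime q n β (1 - ε)) (by
      have h6 := not_le.1 hcon
      rw [add_mul] at h6
      linarith)
    linarith
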